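/- Let u and ũ be smooth global solutions for t ≥ 0 of the semilinear system □u^I = Q^I(u,∂u) (I = 1,…,N) with smooth compactly supported initial data (u,∂_t u)|_{t=0} and (ũ,∂_t ũ)|_{t=0}, where Q satisfies the null condition, and assume u and ũ admit radiation fields F₀ and F̃₀ in the stated sense. Let R₁ > 0 and R₂ ∈ ℝ with |R₂| < R₁. If (u,∂_t u)|_{t=0}(x) = (ũ,∂_t ũ)|_{t=0}(x) for all |x| ≥ R₁, and F₀(q,ω) = F̃₀(q,ω) for all q > R₂ and all ω ∈ S², then u(t,x) = ũ(t,x) at every point with t > 0 and |x|² − (t+R₂)² ≥ R₁² − R₂². -/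

import Mathlib

noncomputable section
open MeasureTheory Real Set Filter Topology

namespace UCP

/-- Spacetime `ℝ^{1+3}`: a point is `(t, x)` with `x ∈ ℝ³`. -/
abbrev Spc : Type := ℝ × EuclideanSpace ℝ (Fin 3)

/-- Coordinate directions `e_α`, `α = 0,1,2,3` (`e_0` is the time direction). -/
def eVec (α : Fin 4) : Spc :=
  Fin.cases ((1 : ℝ), (0 : EuclideanSpace ℝ (Fin 3)))
    (fun i => ((0 : ℝ), EuclideanSpace.single i (1 : ℝ))) α

/-- The partial derivative `∂_α u`. -/
def pd (α : Fin 4) (u : Spc → ℝ) (p : Spc) : ℝ := fderiv ℝ u p (eVec α)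

/-- `∂_t u`. -/
def dt (u : Spc → ℝ) : Spc → ℝ := pd 0 u

/-- `∂_i u`, `i = 1,2,3`. -/
def dxi (i : Fin 3) (u : Spc → ℝ) : Spc → ℝ := pd i.succ u

/-- The d'Alembertian `□u = -∂_t² u + Δ_x u`. -/
def box (u : Spc → ℝ) (p : Spc) : ℝ :=
  - dt (dt u) p + ∑ i : Fin 3, dxi i (dxi i u) p

/-- Signs of the Minkowski metric `diag(-1,1,1,1)`, so that `∂^α = eta α • ∂_α`. -/
def eta (α : Fin 4) : ℝ := if α = 0 then -1 else 1

/-- `r = |x|`. -/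
def rr (p : Spc) : ℝ := ‖p.2‖

/-- The radial derivative `∂_r u = Σ_i (x_i/r) ∂_i u`. -/
def dr (u : Spc → ℝ) (p : Spc) : ℝ := ∑ i : Fin 3, (p.2 i / rr p) * dxi i u p

/-- `ω̂ = (-1, x/r)` as a `Fin 4`-indexed family. -/
def hatom (p : Spc) (α : Fin 4) : ℝ := Fin.cases (-1 : ℝ) (fun i => p.2 i / rr p) α

/-- The scaling field `S = t∂_t + r∂_r`. -/
def Sc (u : Spc → ℝ) (p : Spc) : ℝ := p.1 * dt u p + ∑ i : Fin 3, p.2 i * dxi i u p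

/-- The rotations `Ω_{ij} = x_i∂_j - x_j∂_i`. -/
def Rot (i j : Fin 3) (u : Spc → ℝ) (p : Spc) : ℝ := p.2 i * dxi j u p - p.2 j * dxi i u p

/-- The Lorentz boosts `Ω_{0i} = x_i∂_t + t∂_i`. -/
def Lor (i : Fin 3) (u : Spc → ℝ) (p : Spc) : ℝ := p.2 i * dt u p + p.1 * dxi i u p

/-- The eleven commuting vector fields `Z`: the four translations, the scaling, the
three rotations and the three Lorentz boosts. -/
def ZList : List ((Spc → ℝ) → Spc → ℝ) :=
  [pd 0, pd 1, pd 2, pd 3, Sc, Rot 0 1, Rot 0 2, Rot 1 2, Lor 0, Lor 1, Lor 2]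

/-- `Σ_{|I| ≤ 1} |Z^I g| = |g| + Σ_Z |Zg|` at a point. -/
def Z1sum (g : Spc → ℝ) (p : Spc) : ℝ := |g p| + (ZList.map fun Z => |Z g p|).sum

/-- `u - r⁻¹ F₀(r - t, x/r)`, componentwise. -/
def radProfile {N : ℕ} (u : Fin N → Spc → ℝ)
    (F : ℝ → EuclideanSpace ℝ (Fin 3) → Fin N → ℝ) (I : Fin N) (p : Spc) : ℝ :=
  u I p - (rr p)⁻¹ * F (rr p - p.1) ((rr p)⁻¹ • p.2) I

/-- `F` is the radiation field of `u`: it is `C¹`, it is the limit of `r u(r-q, rω)`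
as `r → ∞`, and `Σ_{|I|≤1} |Z^I (u - r⁻¹F(r-t,ω))| ≤ C t⁻² ⟨r-t⟩` for `r > t/2 ≥ c`. -/
def IsRadiationField {N : ℕ} (u : Fin N → Spc → ℝ)
    (F : ℝ → EuclideanSpace ℝ (Fin 3) → Fin N → ℝ) : Prop :=
  (ContDiff ℝ 1 fun z : ℝ × EuclideanSpace ℝ (Fin 3) => F z.1 z.2) ∧
  (∀ (q : ℝ) (ω : EuclideanSpace ℝ (Fin 3)), ‖ω‖ = 1 → ∀ I,
    Filter.Tendsto (fun ρ : ℝ => ρ * u I (ρ - q, ρ • ω)) Filter.atTop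
      (nhds (F q ω I))) ∧
  (∃ C c : ℝ, 0 < C ∧ 0 < c ∧ ∀ p : Spc, c ≤ p.1 / 2 → p.1 / 2 < rr p →
    (∑ I, Z1sum (radProfile u F I) p)
      ≤ C * (p.1 ^ 2)⁻¹ * Real.sqrt (1 + (rr p - p.1) ^ 2))

/-- `ω̂ = (-1, ω)` for a unit vector `ω ∈ 𝕊²`. -/
def hatSph (ω : EuclideanSpace ℝ (Fin 3)) (α : Fin 4) : ℝ :=
  Fin.cases (-1 : ℝ) (fun i => ω i) α

/-- `Q` is smooth, has the quadratic Taylor expansion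
`Q^I(u,v) = Σ_{J,K,α,β} A_{I,JK}^{αβ} v_α^J v_β^K + O((|u|+|v|)³)` near `0`, and the
coefficients `A` satisfy the null condition `A_{I,JK}^{αβ} ω̂_α ω̂_β = 0`. -/
def HasNullForm {N : ℕ} (Q : ((Fin N → ℝ) × (Fin N → Fin 4 → ℝ)) → Fin N → ℝ)
    (A : Fin N → Fin N → Fin N → Fin 4 → Fin 4 → ℝ) : Prop :=
  ContDiff ℝ (⊤ : ℕ∞) Q ∧
  (∃ C ε : ℝ, 0 < C ∧ 0 < ε ∧ ∀ z : (Fin N → ℝ) × (Fin N → Fin 4 → ℝ),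
    ‖z.1‖ + ‖z.2‖ ≤ ε → ∀ I,
    |Q z I - ∑ J : Fin N, ∑ K : Fin N, ∑ α : Fin 4, ∑ β : Fin 4,
        A I J K α β * z.2 J α * z.2 K β|
      ≤ C * (‖z.1‖ + ‖z.2‖) ^ 3) ∧
  (∀ I J K, ∀ ω : EuclideanSpace ℝ (Fin 3), ‖ω‖ = 1 →
    (∑ α : Fin 4, ∑ β : Fin 4, A I J K α β * hatSph ω α * hatSph ω β) = 0)

/-- `u` is a smooth solution of `□u^I = Q^I(u, ∂u)` for `t ≥ 0` with smooth compactly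
supported initial data at `t = 0`. -/
def IsGlobalSolution {N : ℕ} (Q : ((Fin N → ℝ) × (Fin N → Fin 4 → ℝ)) → Fin N → ℝ)
    (u : Fin N → Spc → ℝ) : Prop :=
  (∀ I, ContDiff ℝ (⊤ : ℕ∞) (u I)) ∧
  (∀ I, HasCompactSupport fun x : EuclideanSpace ℝ (Fin 3) => u I (0, x)) ∧
  (∀ I, HasCompactSupport fun x : EuclideanSpace ℝ (Fin 3) => dt (u I) (0, x)) ∧
  (∀ p : Spc, 0 ≤ p.1 → ∀ I,
    box (u I) p = Q (fun J => u J p, fun J α => pd α (u J) p) I)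

/-!
Finite speed of propagation gives `u = v` for `|x| ≥ R₁ + t`. To reach the remaining points outside
the hyperboloid, translate time by `R₁ + 1` and apply the Kelvin transform of the inversion
`y ↦ y / (t² - |x|²)`, which carries null infinity to the light cone of the origin and the exterior
of the hyperboloid to a region of a causal diamond adjacent to that cone. Equality of the radiation
fields makes the transform `φ` of `u - v` vanish to first order in `t² - |x|²`, and the null
condition removes the terms of the equation that would be singular at the cone, so that
`|□φ| ≤ C (|φ| + |∂φ|)` with bounded `∂φ`. A Carleman estimate with a quadratic weight `W` now
gives `φ = 0` on `{W > 0}`: the fluxes through the cone and, by finite speed, through the outer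
boundary of the diamond vanish, while the remaining flux sits where `W` is small and loses as the
Carleman parameter tends to infinity.
-/

/-! ### Calculus in Minkowski space -/

/-- The spacetime coordinates `y_α`, as continuous linear functionals dual to `eVec`. -/
def coord (α : Fin 4) : Spc →L[ℝ] ℝ :=
  Fin.cases (ContinuousLinearMap.fst ℝ ℝ (EuclideanSpace ℝ (Fin 3)))
    (fun i => (EuclideanSpace.proj i).comp
      (ContinuousLinearMap.snd ℝ ℝ (EuclideanSpace ℝ (Fin 3)))) α

@[simp] theorem coord_zero (y : Spc) : coord 0 y = y.1 := rfl
@[simp] theorem coord_one (y : Spc) : coord 1 y = y.2 0 := rfl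
@[simp] theorem coord_two (y : Spc) : coord 2 y = y.2 1 := rfl
@[simp] theorem coord_three (y : Spc) : coord 3 y = y.2 2 := rfl
@[simp] theorem coord_succ (i : Fin 3) (y : Spc) : coord i.succ y = y.2 i := rfl

@[simp] theorem eta_zero : eta 0 = -1 := by simp [eta]
@[simp] theorem eta_one : eta 1 = 1 := by simp [eta]
@[simp] theorem eta_two : eta 2 = 1 := by simp [eta]
@[simp] theorem eta_three : eta 3 = 1 := by simp [eta]

theorem abs_eta (α : Fin 4) : |eta α| = 1 := by unfold eta; split_ifs <;> simp

theorem eta_mul_self (α : Fin 4) : eta α * eta α = 1 := by unfold eta; split_ifs <;> norm_num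

theorem coord_eVec (α β : Fin 4) : coord β (eVec α) = if α = β then 1 else 0 := by
  fin_cases α <;> fin_cases β <;> simp [eVec, Fin.cases, Fin.induction, Fin.induction.go]

theorem eq_sum_coord_smul_eVec (v : Spc) : v = ∑ α, coord α v • eVec α := by
  rw [Fin.sum_univ_four]
  refine Prod.ext ?_ ?_
  · simp [eVec, Fin.cases, Fin.induction, Fin.induction.go]
  · ext i
    fin_cases i <;> simp [eVec, Fin.cases, Fin.induction, Fin.induction.go]

theorem clm_apply_eq_sum (L : Spc →L[ℝ] ℝ) (v : Spc) : L v = ∑ α, coord α v * L (eVec α) := by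
  conv_lhs => rw [eq_sum_coord_smul_eVec v]
  simp only [map_sum, map_smul, smul_eq_mul]

theorem fderiv_eq_zero_of_pd {f : Spc → ℝ} {y : Spc} (h : ∀ α, pd α f y = 0) :
    fderiv ℝ f y = 0 :=
  ContinuousLinearMap.ext fun v => (clm_apply_eq_sum _ v).trans <|
    Finset.sum_eq_zero fun α _ => mul_eq_zero_of_right _ (h α)

/-- `f` is differentiable at `y` with `∂_α f (y) = d`; the counterpart of `HasDerivAt` for `pd`,
so that derivatives of compound expressions are built by term-mode composition. -/
structure HasPdAt (α : Fin 4) (f : Spc → ℝ) (d : ℝ) (y : Spc) : Prop where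
  differentiableAt : DifferentiableAt ℝ f y
  pd_eq : pd α f y = d

theorem hasPdAt_const (α : Fin 4) (a : ℝ) (y : Spc) : HasPdAt α (fun _ => a) 0 y :=
  ⟨differentiableAt_const a, by simp [pd]⟩

theorem hasPdAt_coord (α β : Fin 4) (y : Spc) :
    HasPdAt α (coord β) (if α = β then 1 else 0) y :=
  ⟨(coord β).differentiableAt, by rw [pd, ContinuousLinearMap.fderiv, coord_eVec]⟩

namespace HasPdAt

variable {α : Fin 4} {f g : Spc → ℝ} {a b : ℝ} {y : Spc}

theorem of_differentiableAt (h : DifferentiableAt ℝ f y) : HasPdAt α f (pd α f y) y := ⟨h, rfl⟩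

theorem add (hf : HasPdAt α f a y) (hg : HasPdAt α g b y) :
    HasPdAt α (fun z => f z + g z) (a + b) y where
  differentiableAt := hf.differentiableAt.add hg.differentiableAt
  pd_eq := by
    rw [pd, fderiv_fun_add hf.differentiableAt hg.differentiableAt, ← hf.pd_eq, ← hg.pd_eq]; rfl

theorem sub (hf : HasPdAt α f a y) (hg : HasPdAt α g b y) :
    HasPdAt α (fun z => f z - g z) (a - b) y where
  differentiableAt := hf.differentiableAt.sub hg.differentiableAt
  pd_eq := by
    rw [pd, fderiv_fun_sub hf.differentiableAt hg.differentiableAt, ← hf.pd_eq, ← hg.pd_eq]; rfl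

theorem mul (hf : HasPdAt α f a y) (hg : HasPdAt α g b y) :
    HasPdAt α (fun z => f z * g z) (a * g y + f y * b) y where
  differentiableAt := hf.differentiableAt.mul hg.differentiableAt
  pd_eq := by
    rw [pd, fderiv_fun_mul hf.differentiableAt hg.differentiableAt, ← hf.pd_eq, ← hg.pd_eq]
    simp only [pd, _root_.add_apply, _root_.smul_apply, smul_eq_mul]
    ring

theorem const_mul (k : ℝ) (hf : HasPdAt α f a y) : HasPdAt α (fun z => k * f z) (k * a) y := by
  simpa using (hasPdAt_const α k y).mul hf

theorem sum {ι : Type*} (s : Finset ι) {f : ι → Spc → ℝ} {d : ι → ℝ}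
    (h : ∀ i ∈ s, HasPdAt α (f i) (d i) y) :
    HasPdAt α (fun z => ∑ i ∈ s, f i z) (∑ i ∈ s, d i) y := by
  classical
  induction s using Finset.induction_on with
  | empty => simpa using hasPdAt_const α 0 y
  | insert i s hi ih =>
    simp only [Finset.sum_insert hi]
    exact (h i (Finset.mem_insert_self i s)).add (ih fun j hj => h j (Finset.mem_insert_of_mem hj))

theorem scomp {k : ℝ → ℝ} {k' : ℝ} (hf : HasPdAt α f a y) (hk : HasDerivAt k k' (f y)) :
    HasPdAt α (fun z => k (f z)) (k' * a) y := by
  have h := hk.comp_hasFDerivAt y hf.differentiableAt.hasFDerivAt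
  refine ⟨h.differentiableAt, ?_⟩
  rw [← hf.pd_eq]
  exact congrArg (· (eVec α)) h.fderiv

theorem comp {ν : Spc → Spc} {d : Fin 4 → ℝ} (hf : DifferentiableAt ℝ f (ν y))
    (hν : DifferentiableAt ℝ ν y) (hd : ∀ μ, HasPdAt α (fun z => coord μ (ν z)) (d μ) y) :
    HasPdAt α (fun z => f (ν z)) (∑ μ, d μ * pd μ f (ν y)) y := by
  refine ⟨hf.comp y hν, ?_⟩
  have hcoord (μ : Fin 4) : coord μ (fderiv ℝ ν y (eVec α)) = d μ := by
    rw [← (hd μ).pd_eq, pd, show (fun z => coord μ (ν z)) = coord μ ∘ ν from rfl,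
      fderiv_comp y (coord μ).differentiableAt hν, ContinuousLinearMap.fderiv]
    rfl
  calc pd α (fun z => f (ν z)) y = fderiv ℝ f (ν y) (fderiv ℝ ν y (eVec α)) := by
        rw [pd, show (fun z => f (ν z)) = f ∘ ν from rfl, fderiv_comp y hf hν]; rfl
    _ = ∑ μ, d μ * pd μ f (ν y) := by
        rw [clm_apply_eq_sum]
        simp only [hcoord, pd]

end HasPdAt

theorem pd_congr {f g : Spc → ℝ} {y : Spc} (h : f =ᶠ[𝓝 y] g) (α : Fin 4) :
    pd α f y = pd α g y := by
  rw [pd, pd, h.fderiv_eq]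

theorem contDiffAt_pd {f : Spc → ℝ} {y : Spc} {n m : WithTop ℕ∞} (h : ContDiffAt ℝ n f y)
    (hmn : m + 1 ≤ n) (α : Fin 4) : ContDiffAt ℝ m (pd α f) y :=
  (h.fderiv_right hmn).clm_apply contDiffAt_const

theorem contDiff_pd {f : Spc → ℝ} {n m : WithTop ℕ∞} (h : ContDiff ℝ n f) (hmn : m + 1 ≤ n)
    (α : Fin 4) : ContDiff ℝ m (pd α f) :=
  (h.fderiv_right hmn).clm_apply contDiff_const

theorem pd_comm {f : Spc → ℝ} {y : Spc} (h : ContDiffAt ℝ 2 f y) (α β : Fin 4) :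
    pd α (pd β f) y = pd β (pd α f) y := by
  have hd : DifferentiableAt ℝ (fderiv ℝ f) y :=
    (h.fderiv_right (m := 1) (by norm_num)).differentiableAt one_ne_zero
  have hpd (α β : Fin 4) : pd α (pd β f) y = fderiv ℝ (fderiv ℝ f) y (eVec α) (eVec β) := by
    rw [pd, show pd β f = fun z => fderiv ℝ f z (eVec β) from rfl,
      fderiv_clm_apply hd (differentiableAt_const _)]
    simp
  rw [hpd, hpd, h.isSymmSndFDerivAt (by simp)]

theorem box_eq_sum (f : Spc → ℝ) (y : Spc) : box f y = ∑ α, eta α * pd α (pd α f) y := by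
  simp only [box, dt, dxi, Fin.sum_univ_succ (n := 3), eta, Fin.succ_ne_zero, if_true, if_false,
    neg_one_mul, one_mul]

/-- The Minkowski product `∑_β η_β x_β z_β` of two (co)vectors. -/
def minkowski (x z : Fin 4 → ℝ) : ℝ := ∑ β, eta β * (x β * z β)

theorem abs_minkowski_le {x z : Fin 4 → ℝ} {a b : ℝ} (hx : ∀ β, |x β| ≤ a)
    (hz : ∀ β, |z β| ≤ b) : |minkowski x z| ≤ 4 * (a * b) := by
  refine (Finset.abs_sum_le_sum_abs _ _).trans ?_
  calc ∑ β, |eta β * (x β * z β)| ≤ ∑ _β : Fin 4, a * b := by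
        gcongr with β
        rw [abs_mul, abs_eta, one_mul, abs_mul]
        exact mul_le_mul (hx β) (hz β) (abs_nonneg _) ((abs_nonneg _).trans (hx β))
    _ = 4 * (a * b) := by simp

/-- The covector `(∂_α f (y))_α`. -/
def grad (f : Spc → ℝ) (y : Spc) (α : Fin 4) : ℝ := pd α f y

theorem HasPdAt.minkowski {α : Fin 4} {x z : Spc → Fin 4 → ℝ} {x' z' : Fin 4 → ℝ} {y : Spc}
    (hx : ∀ β, HasPdAt α (x · β) (x' β) y) (hz : ∀ β, HasPdAt α (z · β) (z' β) y) :
    HasPdAt α (fun w => UCP.minkowski (x w) (z w))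
      (UCP.minkowski x' (z y) + UCP.minkowski (x y) z') y := by
  have h := HasPdAt.sum Finset.univ fun β _ => ((hx β).mul (hz β)).const_mul (eta β)
  refine ⟨h.differentiableAt, h.pd_eq.trans ?_⟩
  simp only [UCP.minkowski, mul_add, Finset.sum_add_distrib]

theorem continuous_pd {f : Spc → ℝ} (h : ContDiff ℝ 1 f) (α : Fin 4) : Continuous (pd α f) :=
  (contDiff_pd (m := 0) h (by norm_num) α).continuous

/-! ### The pointwise Carleman estimate -/

/-- The zeroth and first order size `φ² + |∂φ|²` of a function at a point. -/
def jetSq (φ : Spc → ℝ) (y : Spc) : ℝ := φ y ^ 2 + ∑ α, pd α φ y ^ 2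

theorem exists_forall_ge_absorb {e₀ e₁ : ℝ} (he₀ : 0 < e₀) (he₁ : 0 < e₁) {C : ℝ}
    (hC : 0 ≤ C) (M θ : ℝ) : ∃ l₀ : ℝ, 1 ≤ l₀ ∧ ∀ l ≥ l₀, C ≤ l * e₁ ∧
      C * (1 + 8 * l ^ 2 * M ^ 2) + l ^ 2 * θ ^ 2 ≤ l ^ 3 * e₀ := by
  refine ⟨max 1 (max (C / e₁) ((C * (1 + 8 * M ^ 2) + θ ^ 2) / e₀)), le_max_left _ _, ?_⟩
  intro l hl
  simp only [ge_iff_le, max_le_iff, div_le_iff₀ he₁, div_le_iff₀ he₀] at hl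
  obtain ⟨hl1, hle₁, hle₀⟩ := hl
  refine ⟨hle₁, ?_⟩
  have hsq : 1 ≤ l ^ 2 := one_le_pow₀ hl1
  have := mul_le_mul_of_nonneg_left hle₀ (by positivity : 0 ≤ l ^ 2)
  nlinarith [mul_nonneg hC (by linarith : 0 ≤ l ^ 2 - 1)]

/-- A diagonal quadratic Carleman weight `W(y) = ∑_β κ_β (y_β - c_β)² - K`; `coeff`, `center` and
`level` are `κ`, `c` and `K`. -/
structure QuadWeight where
  coeff : Fin 4 → ℝ
  center : Fin 4 → ℝ
  level : ℝ

namespace QuadWeight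

variable (W : QuadWeight)

/-- The value `W(y)` of the weight. -/
def eval (y : Spc) : ℝ := ∑ β, W.coeff β * (coord β y - W.center β) ^ 2 - W.level

/-- The partial derivatives `∂_α W`. -/
def gradient (y : Spc) (α : Fin 4) : ℝ := 2 * W.coeff α * (coord α y - W.center α)

/-- The constant second derivatives `∂_α ∂_β W`. -/
def hessian (α β : Fin 4) : ℝ := 2 * W.coeff β * if α = β then 1 else 0

/-- The constant `□W`. -/
def boxConst : ℝ := ∑ α, eta α * (2 * W.coeff α)

/-- The function `ψ = e^{lW} φ` to which the multiplier identity is applied. -/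
def conj (l : ℝ) (φ : Spc → ℝ) (y : Spc) : ℝ := rexp (l * W.eval y) * φ y

/-- The current of the multiplier `-4l ⟨∇W,∇ψ⟩ - 2l (θ + □W) ψ`: an energy-momentum part, a
Lagrangian correction and the zeroth order term of the conjugated operator. -/
def current (l θ : ℝ) (ψ : Spc → ℝ) (α : Fin 4) (y : Spc) : ℝ :=
  eta α * (-4 * l * (pd α ψ y * minkowski (W.gradient y) (grad ψ y)
      - 1 / 2 * (W.gradient y α * minkowski (grad ψ y) (grad ψ y)))
    - 2 * l * (θ + W.boxConst) * (ψ y * pd α ψ y)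
    - 2 * l ^ 3 * (W.gradient y α * (minkowski (W.gradient y) (W.gradient y) * (ψ y * ψ y))))

/-- `W` is pseudoconvex on `V` for `□`, with correction `θ` of its Hessian and with the lower
bounds `e₁` (on the corrected Hessian) and `e₀` (in the direction of `∇W`). -/
structure IsPseudoconvexOn (θ e₀ e₁ : ℝ) (V : Set Spc) : Prop where
  gradient_pos : 0 < e₀
  hessian_pos : 0 < e₁
  le_hessian : ∀ α, e₁ ≤ 4 * W.coeff α + θ * eta α
  le_gradient : ∀ y ∈ V, e₀ ≤ (∑ α, 4 * W.coeff α * W.gradient y α ^ 2)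
    - θ * minkowski (W.gradient y) (W.gradient y)

theorem hasPdAt_gradient (α β : Fin 4) (y : Spc) :
    HasPdAt α (fun z => W.gradient z β) (W.hessian α β) y := by
  simpa only [sub_zero, gradient, hessian] using
    ((hasPdAt_coord α β y).sub (hasPdAt_const α (W.center β) y)).const_mul (2 * W.coeff β)

theorem hasPdAt_eval (α : Fin 4) (y : Spc) : HasPdAt α W.eval (W.gradient y α) y := by
  have hsub (β : Fin 4) := (hasPdAt_coord α β y).sub (hasPdAt_const α (W.center β) y)
  have h := (HasPdAt.sum Finset.univ fun β _ =>
    ((hsub β).mul (hsub β)).const_mul (W.coeff β)).sub (hasPdAt_const α W.level y)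
  simp only [← pow_two] at h
  refine ⟨h.differentiableAt, h.pd_eq.trans ?_⟩
  rw [Finset.sum_eq_single α (fun β _ hβ => by simp [hβ.symm]) (by simp)]
  simp only [gradient, if_true]
  ring

theorem contDiff_eval {n : WithTop ℕ∞} : ContDiff ℝ n W.eval := by
  unfold eval
  fun_prop

theorem contDiff_gradient (β : Fin 4) {n : WithTop ℕ∞} :
    ContDiff ℝ n fun y => W.gradient y β := by
  unfold gradient
  fun_prop

theorem hasPdAt_current (l θ : ℝ) {ψ : Spc → ℝ} {y : Spc} (h : ContDiffAt ℝ 2 ψ y)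
    (γ α : Fin 4) :
    HasPdAt γ (W.current l θ ψ α)
      (eta α * (-4 * l * ((pd γ (pd α ψ) y * minkowski (W.gradient y) (grad ψ y)
          + pd α ψ y * (minkowski (W.hessian γ) (grad ψ y)
            + minkowski (W.gradient y) fun β => pd γ (pd β ψ) y))
        - 1 / 2 * (W.hessian γ α * minkowski (grad ψ y) (grad ψ y) + W.gradient y α
          * (minkowski (fun β => pd γ (pd β ψ) y) (grad ψ y)
            + minkowski (grad ψ y) fun β => pd γ (pd β ψ) y)))
        - 2 * l * (θ + W.boxConst) * (pd γ ψ y * pd α ψ y + ψ y * pd γ (pd α ψ) y)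
        - 2 * l ^ 3 * (W.hessian γ α * (minkowski (W.gradient y) (W.gradient y) * (ψ y * ψ y))
          + W.gradient y α * ((minkowski (W.hessian γ) (W.gradient y)
              + minkowski (W.gradient y) (W.hessian γ)) * (ψ y * ψ y)
            + minkowski (W.gradient y) (W.gradient y)
              * (pd γ ψ y * ψ y + ψ y * pd γ ψ y))))) y := by
  have hψ : HasPdAt γ ψ (pd γ ψ y) y := .of_differentiableAt (h.differentiableAt two_ne_zero)
  have hpd (β : Fin 4) : HasPdAt γ (pd β ψ) (pd γ (pd β ψ) y) y :=
    .of_differentiableAt ((contDiffAt_pd (m := 1) h (by norm_num) β).differentiableAt one_ne_zero)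
  have hW := (W.hasPdAt_gradient γ · y)
  exact (((((hpd α).mul (.minkowski hW hpd)).sub
    (((hW α).mul (.minkowski hpd hpd)).const_mul (1 / 2))).const_mul (-4 * l)).sub
    ((hψ.mul (hpd α)).const_mul (2 * l * (θ + W.boxConst)))).sub
    (((hW α).mul ((HasPdAt.minkowski hW hW).mul (hψ.mul hψ))).const_mul (2 * l ^ 3))
    |>.const_mul (eta α)

theorem sum_pd_current (l θ : ℝ) {ψ : Spc → ℝ} {y : Spc} (h : ContDiffAt ℝ 2 ψ y) :
    ∑ α, pd α (W.current l θ ψ α) y =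
      2 * (box ψ y + l ^ 2 * minkowski (W.gradient y) (W.gradient y) * ψ y)
        * (-2 * l * minkowski (W.gradient y) (grad ψ y) - l * (θ + W.boxConst) * ψ y)
      - 2 * l * ((∑ α, (4 * W.coeff α + θ * eta α) * pd α ψ y ^ 2)
        + l ^ 2 * ψ y ^ 2 * ((∑ α, 4 * W.coeff α * W.gradient y α ^ 2)
          - θ * minkowski (W.gradient y) (W.gradient y))) := by
  rw [Finset.sum_congr rfl fun α _ => (W.hasPdAt_current l θ h α α).pd_eq, box_eq_sum]
  simp only [boxConst, minkowski, grad, hessian, Fin.sum_univ_four, eta_zero, eta_one, eta_two,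
    eta_three, pd_comm h 1 0, pd_comm h 2 0, pd_comm h 3 0, pd_comm h 2 1, pd_comm h 3 1,
    pd_comm h 3 2]
  simp (decide := true) only [if_true, if_false]
  ring

theorem hasPdAt_exp (l : ℝ) (α : Fin 4) (y : Spc) :
    HasPdAt α (fun z => rexp (l * W.eval z)) (rexp (l * W.eval y) * (l * W.gradient y α)) y :=
  ((W.hasPdAt_eval α y).const_mul l).scomp (Real.hasDerivAt_exp _)

theorem hasPdAt_conj (l : ℝ) {φ : Spc → ℝ} {y : Spc} (h : DifferentiableAt ℝ φ y) (α : Fin 4) :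
    HasPdAt α (W.conj l φ)
      (rexp (l * W.eval y) * (pd α φ y + l * (W.gradient y α * φ y))) y := by
  have hmul := (W.hasPdAt_exp l α y).mul (.of_differentiableAt h)
  exact ⟨hmul.differentiableAt, hmul.pd_eq.trans (by ring)⟩

theorem contDiffAt_conj (l : ℝ) {φ : Spc → ℝ} {y : Spc} {n : WithTop ℕ∞}
    (h : ContDiffAt ℝ n φ y) : ContDiffAt ℝ n (W.conj l φ) y :=
  (contDiff_const.mul W.contDiff_eval).exp.contDiffAt.mul h

theorem minkowski_grad_conj (l : ℝ) (x : Fin 4 → ℝ) {φ : Spc → ℝ} {y : Spc}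
    (h : DifferentiableAt ℝ φ y) :
    minkowski x (grad (W.conj l φ) y) =
      rexp (l * W.eval y) * (minkowski x (grad φ y) + l * minkowski x (W.gradient y) * φ y) := by
  simp only [minkowski, grad, (W.hasPdAt_conj l h _).pd_eq, Fin.sum_univ_four]
  ring

theorem box_conj (l : ℝ) {φ : Spc → ℝ} {y : Spc} (h : ContDiffAt ℝ 2 φ y) :
    box (W.conj l φ) y =
      rexp (l * W.eval y) * (box φ y + 2 * l * minkowski (W.gradient y) (grad φ y)
        + l * W.boxConst * φ y + l ^ 2 * minkowski (W.gradient y) (W.gradient y) * φ y) := by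
  have hpd₂ (α : Fin 4) : pd α (pd α (W.conj l φ)) y = rexp (l * W.eval y) *
      (pd α (pd α φ) y + 2 * l * (W.gradient y α * pd α φ y) + l * (2 * W.coeff α) * φ y
        + l ^ 2 * W.gradient y α ^ 2 * φ y) := by
    have hpd : pd α (W.conj l φ) =ᶠ[𝓝 y] fun z =>
        rexp (l * W.eval z) * (pd α φ z + l * (W.gradient z α * φ z)) := by
      filter_upwards [h.eventually (by norm_num)] with z hz
      exact (W.hasPdAt_conj l (hz.differentiableAt two_ne_zero) α).pd_eq
    have h₁ : HasPdAt α φ (pd α φ y) y := .of_differentiableAt (h.differentiableAt two_ne_zero)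
    have h₂ : HasPdAt α (pd α φ) (pd α (pd α φ) y) y :=
      .of_differentiableAt ((contDiffAt_pd (m := 1) h (by norm_num) α).differentiableAt one_ne_zero)
    rw [pd_congr hpd, ((W.hasPdAt_exp l α y).mul
      (h₂.add (((W.hasPdAt_gradient α α y).mul h₁).const_mul l))).pd_eq]
    simp only [hessian, if_true]
    ring
  simp only [box_eq_sum, hpd₂, boxConst, minkowski, grad, Fin.sum_univ_four]
  ring

theorem sum_pd_current_conj_le {θ e₀ e₁ l : ℝ} {V : Set Spc}
    (hW : W.IsPseudoconvexOn θ e₀ e₁ V) (hl : 0 ≤ l) {φ : Spc → ℝ} {y : Spc} (hy : y ∈ V)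
    (h : ContDiffAt ℝ 2 φ y) :
    ∑ α, pd α (W.current l θ (W.conj l φ) α) y ≤
      (rexp (l * W.eval y) * box φ y) ^ 2 + l ^ 2 * θ ^ 2 * W.conj l φ y ^ 2
        - 2 * l * (e₁ * (∑ α, pd α (W.conj l φ) y ^ 2) + l ^ 2 * e₀ * W.conj l φ y ^ 2) := by
  have hhess : e₁ * (∑ α, pd α (W.conj l φ) y ^ 2) ≤
      ∑ α, (4 * W.coeff α + θ * eta α) * pd α (W.conj l φ) y ^ 2 := by
    rw [Finset.mul_sum]
    exact Finset.sum_le_sum fun α _ => mul_le_mul_of_nonneg_right (hW.le_hessian α) (sq_nonneg _)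
  have hgrad : l ^ 2 * e₀ * W.conj l φ y ^ 2 ≤ l ^ 2 * W.conj l φ y ^ 2 *
      ((∑ α, 4 * W.coeff α * W.gradient y α ^ 2)
        - θ * minkowski (W.gradient y) (W.gradient y)) := by
    rw [mul_right_comm]
    exact mul_le_mul_of_nonneg_left (hW.le_gradient y hy) (by positivity)
  rw [W.sum_pd_current _ _ (W.contDiffAt_conj l h), W.box_conj l h,
    W.minkowski_grad_conj l _ (h.differentiableAt two_ne_zero)]
  refine sub_le_sub ?_ (mul_le_mul_of_nonneg_left (add_le_add hhess hgrad) (by linarith))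
  rw [show W.conj l φ y = rexp (l * W.eval y) * φ y from rfl]
  generalize box φ y = b
  generalize minkowski (W.gradient y) (grad φ y) = X
  generalize minkowski (W.gradient y) (W.gradient y) = M
  generalize rexp (l * W.eval y) = E
  generalize φ y = f
  -- `E b` is the sum of the symmetric part `S`, the antisymmetric part `A` and `q` of the
  -- conjugated operator, and `2 S A ≤ (S + A + q)² + q²`.
  set S := E * (b + 2 * l * X + l * W.boxConst * f + l ^ 2 * M * f) + l ^ 2 * M * (E * f)
  set A := -2 * l * (E * (X + l * M * f)) - l * (θ + W.boxConst) * (E * f)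
  set q := l * θ * (E * f)
  have hsplit : E * b = S + A + q := by ring
  have hq_sq : l ^ 2 * θ ^ 2 * (E * f) ^ 2 = q ^ 2 := by ring
  rw [hsplit, hq_sq]
  nlinarith [sq_nonneg (S - A), sq_nonneg (S + A + 2 * q)]

theorem exp_sq_mul_jetSq_le {l M : ℝ} {φ : Spc → ℝ} {y : Spc} (h : DifferentiableAt ℝ φ y)
    (hM : ∀ α, |W.gradient y α| ≤ M) :
    rexp (l * W.eval y) ^ 2 * jetSq φ y ≤
      (1 + 8 * l ^ 2 * M ^ 2) * W.conj l φ y ^ 2 + 2 * ∑ α, pd α (W.conj l φ) y ^ 2 := by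
  have hpd (α : Fin 4) : rexp (l * W.eval y) ^ 2 * pd α φ y ^ 2 ≤
      2 * pd α (W.conj l φ) y ^ 2 + 2 * l ^ 2 * M ^ 2 * W.conj l φ y ^ 2 := by
    rw [(W.hasPdAt_conj l h α).pd_eq, show W.conj l φ y = rexp (l * W.eval y) * φ y from rfl]
    generalize rexp (l * W.eval y) = E
    have hsq : W.gradient y α ^ 2 ≤ M ^ 2 :=
      sq_le_sq' (by linarith [neg_abs_le (W.gradient y α), hM α]) ((le_abs_self _).trans (hM α))
    have := mul_le_mul_of_nonneg_left hsq (by positivity : 0 ≤ 2 * l ^ 2 * (E * φ y) ^ 2)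
    nlinarith [sq_nonneg (E * pd α φ y + 2 * (l * W.gradient y α * (E * φ y)))]
  have hsum := Finset.sum_le_sum fun α (_ : α ∈ Finset.univ) => hpd α
  rw [← Finset.mul_sum, Finset.sum_add_distrib, ← Finset.mul_sum, Finset.sum_const,
    Finset.card_univ, Fintype.card_fin, nsmul_eq_mul] at hsum
  rw [jetSq, mul_add, ← mul_pow]
  change W.conj l φ y ^ 2 + _ ≤ _
  push_cast at hsum
  linarith

variable {N : ℕ}

theorem exists_forall_ge_sum_pd_current_le {θ e₀ e₁ C M : ℝ} (hC : 0 ≤ C)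
    {φ : Fin N → Spc → ℝ} {V : Set Spc} (hW : W.IsPseudoconvexOn θ e₀ e₁ V)
    (hφ : ∀ I, ∀ y ∈ V, ContDiffAt ℝ 2 (φ I) y) (hM : ∀ y ∈ V, ∀ α, |W.gradient y α| ≤ M)
    (hbox : ∀ y ∈ V, ∀ I, box (φ I) y ^ 2 ≤ C * ∑ J, jetSq (φ J) y) :
    ∃ l₀ : ℝ, 1 ≤ l₀ ∧ ∀ l ≥ l₀, ∀ y ∈ V,
      ∑ I, ∑ α, pd α (W.current l θ (W.conj l (φ I)) α) y ≤
        -(l ^ 3 * e₀) * ∑ I, W.conj l (φ I) y ^ 2 := by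
  obtain ⟨l₀, hl₀, habsorb⟩ := exists_forall_ge_absorb hW.gradient_pos hW.hessian_pos
    (mul_nonneg N.cast_nonneg hC) M θ
  refine ⟨l₀, hl₀, fun l hl y hy => ?_⟩
  obtain ⟨habs₁, habs₀⟩ := habsorb l hl
  set P : Fin N → ℝ := fun I => ∑ α, pd α (W.conj l (φ I)) y ^ 2
  set Z : Fin N → ℝ := fun I => W.conj l (φ I) y ^ 2
  have hP (I : Fin N) : 0 ≤ P I := Finset.sum_nonneg fun _ _ => sq_nonneg _
  have hZ (I : Fin N) : 0 ≤ Z I := sq_nonneg _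
  have hcomp (I : Fin N) : ∑ α, pd α (W.current l θ (W.conj l (φ I)) α) y ≤
      C * (∑ J, ((1 + 8 * l ^ 2 * M ^ 2) * Z J + 2 * P J))
        + (l ^ 2 * θ ^ 2 * Z I - 2 * l * (e₁ * P I + l ^ 2 * e₀ * Z I)) := by
    rw [← add_sub_assoc]
    refine (W.sum_pd_current_conj_le hW (zero_le_one.trans (hl₀.trans hl)) hy (hφ I y hy)).trans ?_
    gcongr
    calc (rexp (l * W.eval y) * box (φ I) y) ^ 2
        ≤ rexp (l * W.eval y) ^ 2 * (C * ∑ J, jetSq (φ J) y) := by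
          rw [mul_pow]
          exact mul_le_mul_of_nonneg_left (hbox y hy I) (sq_nonneg _)
      _ = C * ∑ J, rexp (l * W.eval y) ^ 2 * jetSq (φ J) y := by
          rw [mul_left_comm, Finset.mul_sum]
      _ ≤ _ := mul_le_mul_of_nonneg_left (Finset.sum_le_sum fun J _ =>
          W.exp_sq_mul_jetSq_le ((hφ J y hy).differentiableAt two_ne_zero) (hM y hy)) hC
  calc ∑ I, ∑ α, pd α (W.current l θ (W.conj l (φ I)) α) y
      ≤ ∑ I, (N * C * ((1 + 8 * l ^ 2 * M ^ 2) * Z I + 2 * P I)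
          + (l ^ 2 * θ ^ 2 * Z I - 2 * l * (e₁ * P I + l ^ 2 * e₀ * Z I))) := by
        refine (Finset.sum_le_sum fun I _ => hcomp I).trans_eq ?_
        rw [Finset.sum_add_distrib, Finset.sum_const, Finset.card_univ, Fintype.card_fin,
          nsmul_eq_mul, ← mul_assoc, Finset.mul_sum, ← Finset.sum_add_distrib]
    _ ≤ -(l ^ 3 * e₀) * ∑ I, Z I := by
        rw [Finset.mul_sum]
        refine Finset.sum_le_sum fun I _ => ?_
        nlinarith [mul_nonneg (hP I) (sub_nonneg.2 habs₁), mul_nonneg (hZ I) (sub_nonneg.2 habs₀)]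

end QuadWeight

/-! ### The divergence theorem on open sets -/

instance isAddHaarMeasure_volume_spc : (volume : Measure Spc).IsAddHaarMeasure :=
  inferInstanceAs (((volume : Measure ℝ).prod
    (volume : Measure (EuclideanSpace ℝ (Fin 3)))).IsAddHaarMeasure)

theorem integral_pd_eq_zero {f : Spc → ℝ} {α : Fin 4} (hd : Differentiable ℝ f)
    (hf : Integrable f) (hpd : Integrable (pd α f)) : ∫ y, pd α f y = 0 := by
  have h := integral_mul_fderiv_eq_neg_fderiv_mul_of_integrable (μ := (volume : Measure Spc))
    (f := fun _ : Spc => (1 : ℝ)) (g := f) (v := eVec α) (by simp) (by simpa only [one_mul])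
    (by simpa only [one_mul]) (by simp) (fun x _ => hd x)
  simpa [pd] using h

theorem hasFDerivAt_indicator_of_frontier {E F : Type*} [NormedAddCommGroup E] [NormedSpace ℝ E]
    [NormedAddCommGroup F] [NormedSpace ℝ F] {V : Set E} (hV : IsOpen V) {f : E → F}
    (hf : ∀ y ∈ V, DifferentiableAt ℝ f y)
    (hfr : ∀ y ∈ frontier V, f y = 0 ∧ HasFDerivAt f (0 : E →L[ℝ] F) y) (y : E) :
    HasFDerivAt (V.indicator f) (V.indicator (fderiv ℝ f) y) y := by
  by_cases hyV : y ∈ V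
  · rw [indicator_of_mem hyV]
    refine (hf y hyV).hasFDerivAt.congr_of_eventuallyEq ?_
    filter_upwards [hV.mem_nhds hyV] with z hz using indicator_of_mem hz f
  rw [indicator_of_notMem hyV]
  by_cases hyc : y ∈ closure V
  · obtain ⟨hf₀, hf₁⟩ := hfr y (hV.frontier_eq ▸ ⟨hyc, hyV⟩)
    rw [hasFDerivAt_iff_isLittleO] at hf₁ ⊢
    refine Asymptotics.IsBigO.trans_isLittleO (.of_bound 1 (.of_forall fun z => ?_)) hf₁
    simpa [indicator_of_notMem hyV, hf₀] using norm_indicator_le_norm_self f z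
  · refine (hasFDerivAt_const (0 : F) y).congr_of_eventuallyEq ?_
    filter_upwards [isClosed_closure.isOpen_compl.mem_nhds hyc] with z hz
    exact indicator_of_notMem (fun h => hz (subset_closure h)) f

theorem setIntegral_pd_eq_zero {V : Set Spc} (hV : IsOpen V) {f : Spc → ℝ} {α : Fin 4}
    (hf : ∀ y ∈ V, DifferentiableAt ℝ f y)
    (hfr : ∀ y ∈ frontier V, f y = 0 ∧ HasFDerivAt f (0 : Spc →L[ℝ] ℝ) y)
    (hint : IntegrableOn f V) (hpd : IntegrableOn (pd α f) V) : ∫ y in V, pd α f y = 0 := by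
  have hder := hasFDerivAt_indicator_of_frontier hV hf hfr
  have hpd_eq : pd α (V.indicator f) = V.indicator (pd α f) := by
    funext y
    by_cases hyV : y ∈ V <;> simp [pd, (hder y).fderiv, hyV]
  rw [← integral_indicator hV.measurableSet, ← hpd_eq]
  refine integral_pd_eq_zero (fun y => (hder y).differentiableAt)
    ((integrable_indicator_iff hV.measurableSet).2 hint) ?_
  rw [hpd_eq]
  exact (integrable_indicator_iff hV.measurableSet).2 hpd

theorem integrableOn_of_forall_notMem_eq_zero {V Z : Set Spc} (hV : IsOpen V)
    (hVb : Bornology.IsBounded V) (hZ : IsClosed Z) {f : Spc → ℝ}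
    (hf₀ : ∀ y, y ∉ Z → f y = 0) (hf : ∀ y ∈ closure V ∩ Z, ContinuousAt f y) :
    IntegrableOn f V := by
  have hcpt : IsCompact (closure V ∩ Z) := hVb.isCompact_closure.inter_right hZ
  have hint : IntegrableOn f (closure V ∩ Z) :=
    ContinuousOn.integrableOn_compact hcpt fun y hy => (hf y hy).continuousWithinAt
  exact hint.of_forall_sdiff_eq_zero hV.measurableSet fun y hy =>
    hf₀ y fun hyZ => hy.2 ⟨subset_closure hy.1, hyZ⟩

theorem setIntegral_pd_eq_zero_of_forall_notMem {V Z : Set Spc} (hV : IsOpen V)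
    (hVb : Bornology.IsBounded V) (hZ : IsClosed Z) {f : Spc → ℝ}
    (hf₀ : ∀ y, y ∉ Z → f y = 0) (hf : ∀ y ∈ closure V ∩ Z, ContDiffAt ℝ 1 f y)
    (hfr : ∀ y ∈ frontier V ∩ Z, f y = 0 ∧ ∀ α, pd α f y = 0) (α : Fin 4) :
    IntegrableOn (pd α f) V ∧ ∫ y in V, pd α f y = 0 := by
  have hder₀ (y : Spc) (hy : y ∉ Z) : HasFDerivAt f (0 : Spc →L[ℝ] ℝ) y := by
    refine (hasFDerivAt_const (0 : ℝ) y).congr_of_eventuallyEq ?_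
    filter_upwards [hZ.isOpen_compl.mem_nhds hy] with z hz using hf₀ z hz
  have hdiff (y : Spc) (hy : y ∈ closure V) : DifferentiableAt ℝ f y := by
    by_cases hyZ : y ∈ Z
    exacts [(hf y ⟨hy, hyZ⟩).differentiableAt one_ne_zero, (hder₀ y hyZ).differentiableAt]
  have hpd : IntegrableOn (pd α f) V :=
    integrableOn_of_forall_notMem_eq_zero hV hVb hZ
      (fun y hy => by rw [pd, (hder₀ y hy).fderiv]; rfl) fun y hy =>
        (contDiffAt_pd (m := 0) (hf y hy) (by norm_num) α).continuousAt
  refine ⟨hpd, setIntegral_pd_eq_zero hV (fun y hy => hdiff y (subset_closure hy)) ?_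
    (integrableOn_of_forall_notMem_eq_zero hV hVb hZ hf₀ fun y hy => (hf y hy).continuousAt) hpd⟩
  intro y hy
  by_cases hyZ : y ∈ Z
  · obtain ⟨h₀, h₁⟩ := hfr y ⟨hy, hyZ⟩
    exact ⟨h₀, fderiv_eq_zero_of_pd h₁ ▸
      (hdiff y (frontier_subset_closure hy)).hasFDerivAt⟩
  · exact ⟨hf₀ y hyZ, hder₀ y hyZ⟩

/-! ### Fluxes of the Carleman current -/

theorem isBigO_one_of_continuous {V : Set Spc} (hV : Bornology.IsBounded V) {f : Spc → ℝ}
    (hf : Continuous f) : f =O[𝓟 V] (fun _ => (1 : ℝ)) := by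
  obtain ⟨B, hB⟩ := hV.isCompact_closure.exists_bound_of_continuousOn hf.continuousOn
  exact Asymptotics.isBigO_principal.2 ⟨B, fun y hy => by simpa using hB y (subset_closure hy)⟩

theorem exists_forall_abs_le_of_isBigO {X ι : Type*} [Finite ι] {V : Set X} {f : ι → X → ℝ}
    {g : X → ℝ} (h : ∀ i, f i =O[𝓟 V] g) : ∃ B, 0 ≤ B ∧ ∀ i, ∀ y ∈ V, |f i y| ≤ B * |g y| := by
  choose b hb using fun i => Asymptotics.isBigO_principal.1 (h i)
  obtain ⟨B, hB⟩ := (Set.finite_range b).bddAbove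
  refine ⟨max B 0, le_max_right _ _, fun i y hy => (hb i y hy).trans ?_⟩
  exact mul_le_mul_of_nonneg_right ((hB (mem_range_self i)).trans (le_max_left _ _)) (abs_nonneg _)

theorem exists_forall_abs_le_of_isBigO_one {X ι : Type*} [Finite ι] {V : Set X} {f : ι → X → ℝ}
    (h : ∀ i, f i =O[𝓟 V] (fun _ => (1 : ℝ))) : ∃ B, 0 ≤ B ∧ ∀ i, ∀ y ∈ V, |f i y| ≤ B := by
  simpa using exists_forall_abs_le_of_isBigO h

theorem isBigO_mul_one {X : Type*} {l : Filter X} {f g h : X → ℝ} (hf : f =O[l] g)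
    (hh : h =O[l] (fun _ => (1 : ℝ))) : (fun y => f y * h y) =O[l] g := by
  simpa using hf.mul hh

theorem isBigO_one_minkowski {X : Type*} {V : Set X} {x z : X → Fin 4 → ℝ}
    (hx : ∀ β, (x · β) =O[𝓟 V] (fun _ => (1 : ℝ)))
    (hz : ∀ β, (z · β) =O[𝓟 V] (fun _ => (1 : ℝ))) :
    (fun y => minkowski (x y) (z y)) =O[𝓟 V] (fun _ => (1 : ℝ)) :=
  Asymptotics.IsBigO.fun_sum fun β _ => (isBigO_mul_one (hx β) (hz β)).const_mul_left _

namespace QuadWeight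

variable (W : QuadWeight)

theorem contDiffAt_current (l θ : ℝ) {ψ : Spc → ℝ} {y : Spc} (h : ContDiffAt ℝ 2 ψ y)
    (α : Fin 4) : ContDiffAt ℝ 1 (W.current l θ ψ α) y := by
  have hψ : ContDiffAt ℝ 1 ψ y := h.of_le one_le_two
  have hpd (β : Fin 4) : ContDiffAt ℝ 1 (pd β ψ) y := contDiffAt_pd h (by norm_num) β
  have hgrad (β : Fin 4) : ContDiffAt ℝ 1 (fun z => W.gradient z β) y :=
    (W.contDiff_gradient β).contDiffAt
  unfold current minkowski grad
  fun_prop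

theorem current_eq_zero (l θ : ℝ) {ψ : Spc → ℝ} {y : Spc} (h₀ : ψ y = 0)
    (h₁ : ∀ α, pd α ψ y = 0) (α : Fin 4) : W.current l θ ψ α y = 0 := by
  simp [current, minkowski, grad, h₀, h₁]

theorem hasPdAt_current_zero (l θ : ℝ) {ψ : Spc → ℝ} {y : Spc} (h : ContDiffAt ℝ 2 ψ y)
    (h₀ : ψ y = 0) (h₁ : ∀ α, pd α ψ y = 0) (γ α : Fin 4) :
    HasPdAt γ (W.current l θ ψ α) 0 y := by
  have hcur := W.hasPdAt_current l θ h γ α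
  exact ⟨hcur.differentiableAt, hcur.pd_eq.trans (by simp [minkowski, grad, h₀, h₁])⟩

theorem sum_mul_current (l θ : ℝ) (x : Fin 4 → ℝ) (ψ : Spc → ℝ) (y : Spc) :
    ∑ α, x α * W.current l θ ψ α y =
      -4 * l * (minkowski x (grad ψ y) * minkowski (W.gradient y) (grad ψ y)
          - 1 / 2 * (minkowski x (W.gradient y) * minkowski (grad ψ y) (grad ψ y)))
        - 2 * l * (θ + W.boxConst) * (ψ y * minkowski x (grad ψ y))
        - 2 * l ^ 3 * (minkowski x (W.gradient y)
          * (minkowski (W.gradient y) (W.gradient y) * (ψ y * ψ y))) := by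
  simp only [current, minkowski, grad, Fin.sum_univ_four]
  ring

theorem abs_sum_gradient_mul_current_le {l θ a E : ℝ} (hl : 1 ≤ l) (hE : 0 ≤ E) {ψ : Spc → ℝ}
    {y : Spc} (hψ : |ψ y| ≤ a * E) (hpd : ∀ β, |pd β ψ y| ≤ a * (l * E))
    (hgrad : ∀ β, |W.gradient y β| ≤ a) :
    |∑ α, W.gradient y α * W.current l θ ψ α y| ≤
      (96 * a ^ 4 + 8 * |θ + W.boxConst| * a ^ 3 + 32 * a ^ 6) * (l ^ 3 * E ^ 2) := by
  have ha : 0 ≤ a := (abs_nonneg _).trans (hgrad 0)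
  have hl₀ : 0 ≤ l := zero_le_one.trans hl
  have hX := abs_minkowski_le (z := grad ψ y) hgrad hpd
  have hN := abs_minkowski_le (x := grad ψ y) (z := grad ψ y) hpd hpd
  have hM := abs_minkowski_le hgrad hgrad
  rw [W.sum_mul_current]
  set X := minkowski (W.gradient y) (grad ψ y)
  set N := minkowski (grad ψ y) (grad ψ y)
  set M := minkowski (W.gradient y) (W.gradient y)
  have henergy : |-4 * l * (X * X - 1 / 2 * (M * N))| ≤ 96 * a ^ 4 * (l ^ 3 * E ^ 2) := by
    calc |-4 * l * (X * X - 1 / 2 * (M * N))| ≤ 4 * l * (|X| * |X| + 1 / 2 * (|M| * |N|)) := by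
          rw [abs_mul, abs_mul, abs_of_nonneg hl₀, show |(-4 : ℝ)| = 4 by norm_num]
          refine mul_le_mul_of_nonneg_left ((abs_sub _ _).trans_eq ?_) (by positivity)
          simp [abs_mul]
      _ ≤ 4 * l * (4 * (a * (a * (l * E))) * (4 * (a * (a * (l * E))))
            + 1 / 2 * (4 * (a * a) * (4 * (a * (l * E) * (a * (l * E)))))) := by gcongr
      _ = 96 * a ^ 4 * (l ^ 3 * E ^ 2) := by ring
  have hlagrange : |2 * l * (θ + W.boxConst) * (ψ y * X)| ≤
      8 * |θ + W.boxConst| * a ^ 3 * (l ^ 3 * E ^ 2) := by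
    calc |2 * l * (θ + W.boxConst) * (ψ y * X)|
        = 2 * l * |θ + W.boxConst| * (|ψ y| * |X|) := by
          simp only [abs_mul, abs_two, abs_of_nonneg hl₀]
      _ ≤ 2 * l * |θ + W.boxConst| * (a * E * (4 * (a * (a * (l * E))))) := by gcongr
      _ = 8 * |θ + W.boxConst| * a ^ 3 * (l ^ 2 * E ^ 2) := by ring
      _ ≤ 8 * |θ + W.boxConst| * a ^ 3 * (l ^ 3 * E ^ 2) := by
          gcongr 8 * |θ + W.boxConst| * a ^ 3 * (?_ * E ^ 2)
          exact pow_le_pow_right₀ hl (by norm_num)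
  have hzeroth : |2 * l ^ 3 * (M * (M * (ψ y * ψ y)))| ≤ 32 * a ^ 6 * (l ^ 3 * E ^ 2) := by
    calc |2 * l ^ 3 * (M * (M * (ψ y * ψ y)))| = 2 * l ^ 3 * (|M| * (|M| * (|ψ y| * |ψ y|))) := by
          simp only [abs_mul, abs_pow, abs_two, abs_of_nonneg hl₀]
      _ ≤ 2 * l ^ 3 * (4 * (a * a) * (4 * (a * a) * (a * E * (a * E)))) := by gcongr
      _ = 32 * a ^ 6 * (l ^ 3 * E ^ 2) := by ring
  refine (abs_sub _ _).trans ((add_le_add ((abs_sub _ _).trans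
    (add_le_add henergy hlagrange)) hzeroth).trans_eq ?_)
  ring

theorem minkowski_grad_conj_self (l : ℝ) {φ : Spc → ℝ} {y : Spc} (h : DifferentiableAt ℝ φ y) :
    minkowski (grad (W.conj l φ) y) (grad (W.conj l φ) y) =
      rexp (l * W.eval y) ^ 2 * (minkowski (grad φ y) (grad φ y)
        + 2 * l * (φ y * minkowski (W.gradient y) (grad φ y))
        + l ^ 2 * (φ y * φ y * minkowski (W.gradient y) (W.gradient y))) := by
  simp only [minkowski, grad, (W.hasPdAt_conj l h _).pd_eq, Fin.sum_univ_four]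
  ring

variable {V : Set Spc} (hV : Bornology.IsBounded V)
include hV

theorem isBigO_one_exp_eval (l : ℝ) :
    (fun y => rexp (l * W.eval y)) =O[𝓟 V] (fun _ => (1 : ℝ)) :=
  isBigO_one_of_continuous hV (contDiff_const.mul (W.contDiff_eval (n := 0))).exp.continuous

theorem isBigO_one_gradient (β : Fin 4) :
    (fun y => W.gradient y β) =O[𝓟 V] (fun _ => (1 : ℝ)) :=
  isBigO_one_of_continuous hV (W.contDiff_gradient (n := 0) β).continuous

theorem isBigO_conj (l : ℝ) {g φ : Spc → ℝ} (hφ : φ =O[𝓟 V] g) : W.conj l φ =O[𝓟 V] g :=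
  (isBigO_mul_one hφ (W.isBigO_one_exp_eval hV l)).congr_left fun _ => mul_comm _ _

theorem isBigO_minkowski_grad_conj (l : ℝ) {g φ : Spc → ℝ} {x : Spc → Fin 4 → ℝ}
    (hd : ∀ y ∈ V, DifferentiableAt ℝ φ y) (hφ : φ =O[𝓟 V] g)
    (hx : ∀ β, (x · β) =O[𝓟 V] (fun _ => (1 : ℝ)))
    (hxφ : (fun y => minkowski (x y) (grad φ y)) =O[𝓟 V] g) :
    (fun y => minkowski (x y) (grad (W.conj l φ) y)) =O[𝓟 V] g := by
  have hxW := isBigO_one_minkowski hx (W.isBigO_one_gradient hV)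
  refine (isBigO_mul_one (hxφ.add (isBigO_mul_one hφ (hxW.const_mul_left l)))
    (W.isBigO_one_exp_eval hV l)).congr' ?_ .rfl
  filter_upwards [mem_principal_self V] with y hy
  rw [W.minkowski_grad_conj l _ (hd y hy)]
  ring

theorem isBigO_minkowski_grad_conj_self (l : ℝ) {g φ : Spc → ℝ}
    (hd : ∀ y ∈ V, DifferentiableAt ℝ φ y) (hφ : φ =O[𝓟 V] g)
    (hφ₁ : φ =O[𝓟 V] (fun _ => (1 : ℝ))) (hpd : ∀ α, pd α φ =O[𝓟 V] (fun _ => (1 : ℝ)))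
    (hφφ : (fun y => minkowski (grad φ y) (grad φ y)) =O[𝓟 V] g) :
    (fun y => minkowski (grad (W.conj l φ) y) (grad (W.conj l φ) y)) =O[𝓟 V] g := by
  have hE := W.isBigO_one_exp_eval hV l
  have hW := W.isBigO_one_gradient hV
  have hWφ := isBigO_one_minkowski (z := grad φ) hW hpd
  refine (isBigO_mul_one ((hφφ.add ((isBigO_mul_one hφ hWφ).const_mul_left (2 * l))).add
    ((isBigO_mul_one (isBigO_mul_one hφ hφ₁) (isBigO_one_minkowski hW hW)).const_mul_left
      (l ^ 2))) (isBigO_mul_one hE hE)).congr' ?_ .rfl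
  filter_upwards [mem_principal_self V] with y hy
  rw [W.minkowski_grad_conj_self l (hd y hy)]
  ring

theorem isBigO_sum_pd_mul_current_conj (l θ : ℝ) {g φ : Spc → ℝ} (hg : ContDiff ℝ 1 g)
    (hd : ∀ y ∈ V, DifferentiableAt ℝ φ y) (hφ : φ =O[𝓟 V] g)
    (hpd : ∀ α, pd α φ =O[𝓟 V] (fun _ => (1 : ℝ)))
    (hgφ : (fun y => minkowski (grad g y) (grad φ y)) =O[𝓟 V] g)
    (hφφ : (fun y => minkowski (grad φ y) (grad φ y)) =O[𝓟 V] g) :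
    (fun y => ∑ α, pd α g y * W.current l θ (W.conj l φ) α y) =O[𝓟 V] g := by
  have hg₁ : g =O[𝓟 V] (fun _ => (1 : ℝ)) := isBigO_one_of_continuous hV hg.continuous
  have hdg (β : Fin 4) : (grad g · β) =O[𝓟 V] (fun _ => (1 : ℝ)) :=
    isBigO_one_of_continuous hV (continuous_pd hg β)
  have hW := W.isBigO_one_gradient hV
  have hgW := isBigO_one_minkowski hdg hW
  have hgψ := W.isBigO_minkowski_grad_conj hV l hd hφ hdg hgφ
  have hWψ := W.isBigO_minkowski_grad_conj hV l hd (hφ.trans hg₁) hW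
    (isBigO_one_minkowski (z := grad φ) hW hpd)
  have hψψ := W.isBigO_minkowski_grad_conj_self hV l hd hφ (hφ.trans hg₁) hpd hφφ
  have hψ := W.isBigO_conj hV l hφ
  have henergy := (isBigO_mul_one hgψ hWψ).sub ((isBigO_mul_one hψψ hgW).const_mul_left (1 / 2))
  have hlagrange := isBigO_mul_one hgψ (hψ.trans hg₁)
  have hzeroth := isBigO_mul_one (isBigO_mul_one hψ (hψ.trans hg₁))
    (isBigO_mul_one hgW (isBigO_one_minkowski hW hW))
  refine (((henergy.const_mul_left (-4 * l)).sub
    (hlagrange.const_mul_left (2 * l * (θ + W.boxConst)))).sub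
    (hzeroth.const_mul_left (2 * l ^ 3))).congr_left fun y => ?_
  change _ = ∑ α, grad g y α * _
  rw [W.sum_mul_current]
  ring

theorem exists_abs_sum_gradient_mul_current_conj_le (θ : ℝ) {φ : Spc → ℝ}
    (hd : ∀ y ∈ V, DifferentiableAt ℝ φ y)
    (hφ : φ =O[𝓟 V] (fun _ => (1 : ℝ))) (hpd : ∀ α, pd α φ =O[𝓟 V] (fun _ => (1 : ℝ))) :
    ∃ B, 0 ≤ B ∧ ∀ l ≥ 1, ∀ y ∈ V,
      |∑ α, W.gradient y α * W.current l θ (W.conj l φ) α y| ≤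
        B * (l ^ 3 * rexp (l * W.eval y) ^ 2) := by
  obtain ⟨b₀, hb₀, hφ⟩ := exists_forall_abs_le_of_isBigO_one fun _ : Unit => hφ
  obtain ⟨b₁, hb₁, hpd⟩ := exists_forall_abs_le_of_isBigO_one hpd
  obtain ⟨w, hw, hgrad⟩ := exists_forall_abs_le_of_isBigO_one (W.isBigO_one_gradient hV)
  set a := b₀ + b₁ + w + w * b₀ with ha
  have hwb : 0 ≤ w * b₀ := mul_nonneg hw hb₀
  refine ⟨96 * a ^ 4 + 8 * |θ + W.boxConst| * a ^ 3 + 32 * a ^ 6, by positivity,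
    fun l hl y hy => W.abs_sum_gradient_mul_current_le hl (exp_pos _).le ?_ (fun β => ?_)
      fun β => (hgrad β y hy).trans (by linarith)⟩
  · rw [conj, abs_mul, abs_of_pos (exp_pos _), mul_comm]
    gcongr
    exact (hφ () y hy).trans (by linarith)
  · rw [(W.hasPdAt_conj l (hd y hy) β).pd_eq, abs_mul, abs_of_pos (exp_pos _), mul_comm,
      ← mul_assoc a]
    refine mul_le_mul_of_nonneg_right ?_ (exp_pos _).le
    calc |pd β φ y + l * (W.gradient y β * φ y)| ≤ |pd β φ y| + l * (|W.gradient y β| * |φ y|) := by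
          simpa only [abs_mul, abs_of_pos (zero_lt_one.trans_le hl)] using
            abs_add_le (pd β φ y) (l * (W.gradient y β * φ y))
      _ ≤ b₁ * l + l * (w * b₀) := by
          gcongr
          · exact (hpd β y hy).trans (le_mul_of_one_le_right hb₁ hl)
          · exact hgrad β y hy
          · exact hφ () y hy
      _ ≤ a * l := by nlinarith [ha]

end QuadWeight

/-! ### Unique continuation in a pseudoconvex region -/

/-- A smooth step equal to `0` on `(-∞, s]` and to `1` on `[2s, ∞)`, for `0 < s`. -/
def cutoff (s x : ℝ) : ℝ := smoothTransition (s⁻¹ * x - 1)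

theorem cutoff_of_le {s x : ℝ} (hs : 0 < s) (hx : x ≤ s) : cutoff s x = 0 := by
  refine smoothTransition.zero_of_nonpos (sub_nonpos.2 ?_)
  rwa [inv_mul_le_iff₀ hs, mul_one]

theorem cutoff_of_ge {s x : ℝ} (hs : 0 < s) (hx : 2 * s ≤ x) : cutoff s x = 1 := by
  refine smoothTransition.one_of_one_le (le_sub_iff_add_le.2 ?_)
  rw [le_inv_mul_iff₀ hs]
  linarith

theorem contDiff_cutoff (s : ℝ) {n : ℕ∞} : ContDiff ℝ n (cutoff s) :=
  smoothTransition.contDiff.comp ((contDiff_const.mul contDiff_id).sub contDiff_const)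

theorem cutoff_nonneg (s x : ℝ) : 0 ≤ cutoff s x := smoothTransition.nonneg _

theorem abs_cutoff_le_one (s x : ℝ) : |cutoff s x| ≤ 1 :=
  (abs_of_nonneg (cutoff_nonneg s x)).trans_le (smoothTransition.le_one _)

theorem exists_abs_deriv_cutoff_le : ∃ M : ℝ, 0 ≤ M ∧ ∀ s > 0, ∀ x,
    |deriv (cutoff s) x| ≤ (Iic (2 * s)).indicator (fun _ => M / s) x := by
  have hcont : Continuous (deriv smoothTransition) :=
    (smoothTransition.contDiff (n := 1)).continuous_deriv le_rfl
  obtain ⟨M, hM⟩ := (isCompact_Icc (a := (-1 : ℝ)) (b := 1)).exists_bound_of_continuousOn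
    hcont.continuousOn
  have hM₀ : 0 ≤ M := (norm_nonneg _).trans (hM 0 (by simp))
  refine ⟨M, hM₀, fun s hs x => ?_⟩
  have hlocal {c : ℝ} {U : Set ℝ} (hU : IsOpen U) (hx : x ∈ U) (hc : ∀ z ∈ U, cutoff s z = c) :
      |deriv (cutoff s) x| = 0 := by
    rw [EventuallyEq.deriv_eq (f := fun _ => c) (eventually_of_mem (hU.mem_nhds hx) hc),
      deriv_const, abs_zero]
  have hnonneg : 0 ≤ (Iic (2 * s)).indicator (fun _ => M / s) x :=
    indicator_nonneg (fun _ _ => by positivity) x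
  rcases lt_or_ge x 0 with hx₀ | hx₀
  · exact (hlocal isOpen_Iio hx₀ fun z hz => cutoff_of_le hs (le_of_lt hz |>.trans hs.le)).trans_le
      hnonneg
  rcases lt_or_ge (2 * s) x with hx₂ | hx₂
  · exact (hlocal isOpen_Ioi hx₂ fun z hz => cutoff_of_ge hs (le_of_lt hz)).trans_le hnonneg
  have hinner : HasDerivAt (fun z => s⁻¹ * z - 1) s⁻¹ x := by
    simpa using ((hasDerivAt_id x).const_mul s⁻¹).sub_const 1
  have hder : deriv (cutoff s) x = deriv smoothTransition (s⁻¹ * x - 1) * s⁻¹ :=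
    ((smoothTransition.contDiff (n := 1)).differentiable one_ne_zero _).hasDerivAt.comp x hinner
      |>.deriv
  rw [indicator_of_mem (mem_Iic.2 hx₂), hder, abs_mul, abs_of_pos (inv_pos.2 hs), div_eq_mul_inv]
  refine mul_le_mul_of_nonneg_right (hM _ ⟨?_, ?_⟩) (inv_pos.2 hs).le
  · linarith [mul_nonneg (inv_pos.2 hs).le hx₀]
  · rw [tsub_le_iff_right, inv_mul_le_iff₀ hs]
    linarith

theorem mul_deriv_cutoff_mul_le {s x M a D F : ℝ}
    (hM : |deriv (cutoff s) x| ≤ (Iic (2 * s)).indicator (fun _ => M / s) x) (ha : |a| ≤ 1)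
    (hF : x ≤ 2 * s → |F| ≤ D) :
    a * deriv (cutoff s) x * F ≤ (Iic (2 * s)).indicator (fun _ => M / s * D) x := by
  by_cases hx : x ≤ 2 * s
  · rw [indicator_of_mem (mem_Iic.2 hx)] at hM ⊢
    calc a * deriv (cutoff s) x * F ≤ |a| * |deriv (cutoff s) x| * |F| := by
          rw [← abs_mul, ← abs_mul]
          exact le_abs_self _
      _ ≤ 1 * (M / s) * D := by
          gcongr
          · exact mul_nonneg zero_le_one ((abs_nonneg _).trans hM)
          · exact hF hx
      _ = M / s * D := by ring
  · rw [indicator_of_notMem (mt mem_Iic.1 hx)] at hM ⊢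
    rw [abs_nonpos_iff.1 hM, mul_zero, zero_mul]

theorem indicator_le_cutoff_mul_cutoff_mul {X : Type*} {f g : X → ℝ} {s r : ℝ} (hs : 0 < s)
    (hr : 0 < r) {Q : X → ℝ} (y : X) (hQ : 0 ≤ Q y) :
    {y | 2 * s ≤ f y ∧ 2 * r ≤ g y}.indicator Q y ≤ cutoff s (f y) * cutoff r (g y) * Q y := by
  refine indicator_apply_le' (fun hy => ?_) fun _ => ?_
  · rw [cutoff_of_ge hs hy.1, cutoff_of_ge hr hy.2, one_mul, one_mul]
  · exact mul_nonneg (mul_nonneg (cutoff_nonneg s _) (cutoff_nonneg r _)) hQ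

theorem eventually_measureReal_inter_le_lt {X : Type*} [MeasurableSpace X] {μ : Measure X}
    {V : Set X} (hV : MeasurableSet V) (hμ : μ V ≠ ⊤) {g : X → ℝ} (hg : Measurable g)
    (hpos : ∀ y ∈ V, 0 < g y) {ε : ℝ} (hε : 0 < ε) :
    ∀ᶠ δ in 𝓝[>] (0 : ℝ), μ.real (V ∩ {y | g y ≤ δ}) < ε := by
  have hempty : ⋂ δ > (0 : ℝ), V ∩ {y | g y ≤ δ} = ∅ := by
    refine eq_empty_of_forall_notMem fun y hy => ?_
    simp only [mem_iInter] at hy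
    have hgy := hpos y (hy 1 one_pos).1
    exact absurd (hy (g y / 2) (half_pos hgy)).2 (not_le.2 (half_lt_self hgy))
  have htendsto := tendsto_measure_biInter_gt (μ := μ) (s := fun δ => V ∩ {y | g y ≤ δ}) (a := 0)
    (fun δ _ => (hV.inter (hg measurableSet_Iic)).nullMeasurableSet)
    (fun _ _ _ hij => inter_subset_inter_right V fun _ hy => le_trans hy hij)
    ⟨1, one_pos, measure_ne_top_of_subset inter_subset_left hμ⟩
  rw [hempty, measure_empty] at htendsto
  filter_upwards [htendsto.eventually_lt_const (ENNReal.ofReal_pos.2 hε)] with δ hδ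
  exact ENNReal.toReal_lt_of_lt_ofReal hδ

theorem mul_measureReal_le_of_setIntegral_nonneg {X : Type*} [MeasurableSpace X] {μ : Measure X}
    {V S B : Set X} (hV : MeasurableSet V) (hμ : μ V ≠ ⊤) (hS : MeasurableSet S)
    (hB : MeasurableSet B) (hBV : B ⊆ V) {f : X → ℝ} (hint : IntegrableOn f V μ)
    (hf : 0 ≤ ∫ y in V, f y ∂μ) {a b c : ℝ}
    (hle : ∀ y ∈ V, f y ≤ a + S.indicator (fun _ => b) y - B.indicator (fun _ => c) y) :
    c * μ.real B ≤ a * μ.real V + b * μ.real (V ∩ S) := by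
  have hconst (r : ℝ) : IntegrableOn (fun _ => r) V μ := integrableOn_const hμ
  have hSint := (hconst b).indicator hS
  have hBint := (hconst c).indicator hB
  have := hf.trans (setIntegral_mono_on hint (((hconst a).add hSint).sub hBint) hV hle)
  rw [integral_sub' ((hconst a).add hSint) hBint, integral_add' (hconst a) hSint,
    setIntegral_indicator hS, setIntegral_indicator hB, inter_eq_right.2 hBV] at this
  simp only [setIntegral_const, smul_eq_mul] at this
  linarith

namespace QuadWeight

/-- The setting of the Carleman argument: `W` is pseudoconvex on the bounded open set `V`, on
which `0 < W` and `0 < g`; the functions `φ` satisfy `|□φ|² ≤ C (|φ|² + |∂φ|²)` on `V`, vanish to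
first order on the part of `∂V` inside the open set `O` of regularity, which contains all of `∂V`
where `0 < W` and `0 < g`, and are such that the flux of the Carleman current through the level
sets of `g` is `O(g)`. -/
structure IsContinuationDomain {N : ℕ} (W : QuadWeight) (θ e₀ e₁ C : ℝ) (g : Spc → ℝ)
    (V O : Set Spc) (φ : Fin N → Spc → ℝ) : Prop where
  pseudoconvex : W.IsPseudoconvexOn θ e₀ e₁ V
  nonneg : 0 ≤ C
  isOpen : IsOpen V
  isBounded : Bornology.IsBounded V
  subset : V ⊆ O
  mem_of_pos : ∀ y ∈ closure V, 0 < W.eval y → 0 < g y → y ∈ O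
  contDiff : ContDiff ℝ 1 g
  contDiffAt : ∀ I, ∀ y ∈ O, ContDiffAt ℝ 2 (φ I) y
  eq_zero : ∀ y ∈ O ∩ frontier V, ∀ I, φ I y = 0 ∧ ∀ α, pd α (φ I) y = 0
  pos : ∀ y ∈ V, 0 < g y
  eval_pos : ∀ y ∈ V, 0 < W.eval y
  box_sq_le : ∀ y ∈ V, ∀ I, box (φ I) y ^ 2 ≤ C * ∑ J, jetSq (φ J) y
  isBigO : ∀ I, φ I =O[𝓟 V] g
  isBigO_pd : ∀ I α, pd α (φ I) =O[𝓟 V] (fun _ => (1 : ℝ))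
  isBigO_grad : ∀ I, (fun y => minkowski (grad g y) (grad (φ I) y)) =O[𝓟 V] g
  isBigO_grad_self : ∀ I, (fun y => minkowski (grad (φ I) y) (grad (φ I) y)) =O[𝓟 V] g

/-- The Carleman current of `φ`, cut off to `{k < W}` and to `{δ < g}`. -/
def cutCurrent (W : QuadWeight) (g : Spc → ℝ) (k δ l θ : ℝ) (φ : Spc → ℝ) (α : Fin 4)
    (y : Spc) : ℝ :=
  cutoff k (W.eval y) * cutoff δ (g y) * W.current l θ (W.conj l φ) α y

variable {W : QuadWeight} {g : Spc → ℝ} {k δ : ℝ}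

theorem hasPdAt_cutCurrent (l θ : ℝ) {φ : Spc → ℝ} {y : Spc} (hg : DifferentiableAt ℝ g y)
    (hφ : ContDiffAt ℝ 2 φ y) (γ α : Fin 4) :
    HasPdAt γ (W.cutCurrent g k δ l θ φ α)
      ((deriv (cutoff k) (W.eval y) * W.gradient y γ * cutoff δ (g y)
          + cutoff k (W.eval y) * (deriv (cutoff δ) (g y) * pd γ g y))
          * W.current l θ (W.conj l φ) α y
        + cutoff k (W.eval y) * cutoff δ (g y) * pd γ (W.current l θ (W.conj l φ) α) y) y := by
  have hcut (s x : ℝ) : HasDerivAt (cutoff s) (deriv (cutoff s) x) x :=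
    ((contDiff_cutoff s (n := 1)).differentiable one_ne_zero x).hasDerivAt
  exact (((W.hasPdAt_eval γ y).scomp (hcut k _)).mul
    ((HasPdAt.of_differentiableAt hg).scomp (hcut δ _))).mul (.of_differentiableAt
      ((W.contDiffAt_current l θ (W.contDiffAt_conj l hφ) α).differentiableAt one_ne_zero))

theorem sum_pd_cutCurrent (l θ : ℝ) {φ : Spc → ℝ} {y : Spc} (hg : DifferentiableAt ℝ g y)
    (hφ : ContDiffAt ℝ 2 φ y) :
    ∑ α, pd α (W.cutCurrent g k δ l θ φ α) y =
      deriv (cutoff k) (W.eval y) * cutoff δ (g y)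
          * ∑ α, W.gradient y α * W.current l θ (W.conj l φ) α y
        + cutoff k (W.eval y) * deriv (cutoff δ) (g y)
          * ∑ α, pd α g y * W.current l θ (W.conj l φ) α y
        + cutoff k (W.eval y) * cutoff δ (g y)
          * ∑ α, pd α (W.current l θ (W.conj l φ) α) y := by
  simp only [(hasPdAt_cutCurrent l θ hg hφ _ _).pd_eq, Finset.mul_sum, ← Finset.sum_add_distrib]
  exact Finset.sum_congr rfl fun α _ => by ring

theorem sum_pd_cutCurrent_le {M B G l θ : ℝ} {φ : Spc → ℝ} {y : Spc} (hk : 0 < k) (hδ : 0 < δ)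
    (hM : ∀ s > 0, ∀ x, |deriv (cutoff s) x| ≤ (Iic (2 * s)).indicator (fun _ => M / s) x)
    (hl : 0 ≤ l) (hg : DifferentiableAt ℝ g y) (hgy : 0 ≤ g y) (hφ : ContDiffAt ℝ 2 φ y)
    (hB : |∑ α, W.gradient y α * W.current l θ (W.conj l φ) α y|
      ≤ B * (l ^ 3 * rexp (l * W.eval y) ^ 2))
    (hG : |∑ α, pd α g y * W.current l θ (W.conj l φ) α y| ≤ G * |g y|) :
    ∑ α, pd α (W.cutCurrent g k δ l θ φ α) y ≤
      M / k * |B| * (l ^ 3 * rexp (l * (2 * k)) ^ 2)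
        + (g ⁻¹' Iic (2 * δ)).indicator (fun _ => 2 * M * |G|) y
        + cutoff k (W.eval y) * cutoff δ (g y)
          * ∑ α, pd α (W.current l θ (W.conj l φ) α) y := by
  have hM₀ : 0 ≤ M := by
    have := (abs_nonneg _).trans (hM 1 one_pos 0)
    rwa [indicator_of_mem (by simp), div_one] at this
  rw [sum_pd_cutCurrent l θ hg hφ, mul_comm (deriv (cutoff k) _)]
  refine add_le_add (add_le_add ?_ ?_) le_rfl
  · refine (mul_deriv_cutoff_mul_le (D := |B| * (l ^ 3 * rexp (l * (2 * k)) ^ 2)) (hM k hk _)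
      (abs_cutoff_le_one _ _) fun hWk => hB.trans ?_).trans ?_
    · gcongr
      exact le_abs_self B
    · rw [mul_assoc]
      exact indicator_le_self' (fun _ _ => by positivity) _
  · refine (mul_deriv_cutoff_mul_le (D := |G| * (2 * δ)) (hM δ hδ _) (abs_cutoff_le_one _ _)
      fun hgδ => hG.trans ?_).trans_eq ?_
    · rw [abs_of_nonneg hgy]
      exact mul_le_mul (le_abs_self _) hgδ hgy (abs_nonneg _)
    · rw [show M / δ * (|G| * (2 * δ)) = 2 * M * |G| by field_simp]
      rfl

namespace IsContinuationDomain

variable {N : ℕ} {θ e₀ e₁ C : ℝ} {V O : Set Spc} {φ : Fin N → Spc → ℝ}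

theorem integral_pd_cutCurrent (H : W.IsContinuationDomain θ e₀ e₁ C g V O φ) (hk : 0 < k)
    (hδ : 0 < δ) (l : ℝ) (I : Fin N) (α : Fin 4) :
    IntegrableOn (pd α (W.cutCurrent g k δ l θ (φ I) α)) V ∧
      ∫ y in V, pd α (W.cutCurrent g k δ l θ (φ I) α) y = 0 := by
  have hgd := H.contDiff.differentiable one_ne_zero
  have hmem {y : Spc} (hy : y ∈ closure V) (hyZ : k ≤ W.eval y ∧ δ ≤ g y) : y ∈ O :=
    H.mem_of_pos y hy (hk.trans_le hyZ.1) (hδ.trans_le hyZ.2)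
  refine setIntegral_pd_eq_zero_of_forall_notMem (Z := {y | k ≤ W.eval y ∧ δ ≤ g y}) H.isOpen
    H.isBounded ((isClosed_le continuous_const (W.contDiff_eval (n := 0)).continuous).inter
      (isClosed_le continuous_const H.contDiff.continuous)) (fun y hy => ?_)
    (fun y hy => ?_) (fun y hy => ?_) α
  · rw [cutCurrent]
    rcases not_and_or.1 hy with hy | hy
    · rw [cutoff_of_le hk (not_le.1 hy).le, zero_mul, zero_mul]
    · rw [cutoff_of_le hδ (not_le.1 hy).le, mul_zero, zero_mul]
  · exact (((contDiff_cutoff k).comp W.contDiff_eval).mul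
      ((contDiff_cutoff δ).comp H.contDiff)).contDiffAt.mul
        (W.contDiffAt_current l θ (W.contDiffAt_conj l (H.contDiffAt I y (hmem hy.1 hy.2))) α)
  · have hyO := hmem (frontier_subset_closure hy.1) hy.2
    have hφ := H.contDiffAt I y hyO
    obtain ⟨hφ₀, hφ₁⟩ := H.eq_zero y ⟨hyO, hy.1⟩ I
    have hψ₀ : W.conj l (φ I) y = 0 := by rw [conj, hφ₀, mul_zero]
    have hψ₁ (β : Fin 4) : pd β (W.conj l (φ I)) y = 0 := by
      rw [(W.hasPdAt_conj l (hφ.differentiableAt two_ne_zero) β).pd_eq, hφ₀, hφ₁]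
      ring
    have hcur := W.current_eq_zero l θ hψ₀ hψ₁ α
    refine ⟨by rw [cutCurrent, hcur, mul_zero], fun γ => ?_⟩
    rw [(hasPdAt_cutCurrent l θ (hgd y) hφ γ α).pd_eq, hcur,
      (W.hasPdAt_current_zero l θ (W.contDiffAt_conj l hφ) hψ₀ hψ₁ γ α).pd_eq]
    ring

theorem exists_sum_pd_cutCurrent_le (H : W.IsContinuationDomain θ e₀ e₁ C g V O φ) (hk : 0 < k) :
    ∃ l₀ : ℝ, 1 ≤ l₀ ∧ ∃ B : ℝ, ∀ l ≥ l₀, ∃ G : ℝ, ∀ δ > 0, ∀ y ∈ V,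
      ∑ I, ∑ α, pd α (W.cutCurrent g k δ l θ (φ I) α) y ≤
        B * (l ^ 3 * rexp (l * (2 * k)) ^ 2) + (g ⁻¹' Iic (2 * δ)).indicator (fun _ => G) y
          - {y | 2 * k ≤ W.eval y ∧ 2 * δ ≤ g y}.indicator
              (fun y => l ^ 3 * e₀ * ∑ I, W.conj l (φ I) y ^ 2) y := by
  have hφ (I : Fin N) (y : Spc) (hy : y ∈ V) : ContDiffAt ℝ 2 (φ I) y :=
    H.contDiffAt I y (H.subset hy)
  have hφd (I : Fin N) (y : Spc) (hy : y ∈ V) : DifferentiableAt ℝ (φ I) y :=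
    (hφ I y hy).differentiableAt two_ne_zero
  obtain ⟨m, -, hm⟩ := exists_forall_abs_le_of_isBigO_one (W.isBigO_one_gradient H.isBounded)
  obtain ⟨l₀, hl₀, hbulk⟩ := W.exists_forall_ge_sum_pd_current_le H.nonneg H.pseudoconvex hφ
    (fun y hy α => hm α y hy) H.box_sq_le
  have hg₁ := isBigO_one_of_continuous H.isBounded H.contDiff.continuous
  choose b _ hb using fun I => W.exists_abs_sum_gradient_mul_current_conj_le H.isBounded θ
    (hφd I) ((H.isBigO I).trans hg₁) (H.isBigO_pd I)
  obtain ⟨M, -, hM⟩ := exists_abs_deriv_cutoff_le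
  refine ⟨l₀, hl₀, ∑ I, M / k * |b I|, fun l hl => ?_⟩
  choose d hd using fun I => Asymptotics.isBigO_principal.1 (W.isBigO_sum_pd_mul_current_conj
    H.isBounded l θ H.contDiff (hφd I) (H.isBigO I) (H.isBigO_pd I) (H.isBigO_grad I)
    (H.isBigO_grad_self I))
  have hl₁ : 1 ≤ l := hl₀.trans hl
  refine ⟨∑ I, 2 * M * |d I|, fun δ hδ y hy => ?_⟩
  have hinterior := indicator_le_cutoff_mul_cutoff_mul (f := W.eval) (g := g) hk hδ
    (Q := fun y => l ^ 3 * e₀ * ∑ I, W.conj l (φ I) y ^ 2) y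
    (by have := H.pseudoconvex.gradient_pos; positivity)
  have hbulk := mul_le_mul_of_nonneg_left (hbulk l hl y hy) 
    (mul_nonneg (cutoff_nonneg k (W.eval y)) (cutoff_nonneg δ (g y)))
  refine (Finset.sum_le_sum fun I _ => sum_pd_cutCurrent_le hk hδ hM (zero_le_one.trans hl₁)
    (H.contDiff.differentiable one_ne_zero y) (H.pos y hy).le (hφ I y hy) (hb I l hl₁ y hy)
    (hd I y hy)).trans ?_
  have hindicator : ∑ I, (g ⁻¹' Iic (2 * δ)).indicator (fun _ => 2 * M * |d I|) y =
      (g ⁻¹' Iic (2 * δ)).indicator (fun _ => ∑ I, 2 * M * |d I|) y := by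
    by_cases hyS : y ∈ g ⁻¹' Iic (2 * δ) <;> simp [hyS]
  rw [Finset.sum_add_distrib, Finset.sum_add_distrib, hindicator, ← Finset.sum_mul,
    ← Finset.mul_sum (f := fun I => ∑ α, pd α (W.current l θ (W.conj l (φ I)) α) y)]
  linarith

theorem integral_sum_pd_cutCurrent (H : W.IsContinuationDomain θ e₀ e₁ C g V O φ) (hk : 0 < k)
    (hδ : 0 < δ) (l : ℝ) :
    IntegrableOn (fun y => ∑ I, ∑ α, pd α (W.cutCurrent g k δ l θ (φ I) α) y) V ∧
      ∫ y in V, ∑ I, ∑ α, pd α (W.cutCurrent g k δ l θ (φ I) α) y = 0 := by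
  have hcomp (I : Fin N) (α : Fin 4) := H.integral_pd_cutCurrent hk hδ l I α
  have hsum (I : Fin N) := integrable_finsetSum Finset.univ fun α _ => (hcomp I α).1
  refine ⟨integrable_finsetSum _ fun I _ => hsum I, ?_⟩
  rw [integral_finsetSum _ fun I _ => hsum I]
  refine Finset.sum_eq_zero fun I _ => ?_
  rw [integral_finsetSum _ fun α _ => (hcomp I α).1]
  exact Finset.sum_eq_zero fun α _ => (hcomp I α).2

theorem exists_forall_ge_mul_measureReal_le (H : W.IsContinuationDomain θ e₀ e₁ C g V O φ)
    (hk : 0 < k) {r c : ℝ} (hr : 0 < r) {B : Set Spc} (hB : MeasurableSet B) (hBV : B ⊆ V)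
    (hWB : ∀ y ∈ B, 3 * k ≤ W.eval y) (hgB : ∀ y ∈ B, r ≤ g y) (hc : 0 ≤ c)
    (hφB : ∀ y ∈ B, c ≤ ∑ I, φ I y ^ 2) :
    ∃ l₀ b : ℝ, ∀ l ≥ l₀, rexp (l * k) ^ 2 * (e₀ * c * volume.real B) ≤ b := by
  obtain ⟨l₀, hl₀, b, hb⟩ := H.exists_sum_pd_cutCurrent_le hk
  refine ⟨l₀, b * volume.real V + 1, fun l hl => ?_⟩
  obtain ⟨G, hG⟩ := hb l hl
  have hl₁ : 1 ≤ l := hl₀.trans hl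
  have he₀ := H.pseudoconvex.gradient_pos
  have hV : volume V ≠ ⊤ := H.isBounded.measure_lt_top.ne
  have hsmall := eventually_measureReal_inter_le_lt H.isOpen.measurableSet hV
    H.contDiff.continuous.measurable H.pos (inv_pos.2 (by positivity : 0 < |G| + 1))
  obtain ⟨δ', ⟨hδ'₀, hδ'r⟩, hδ'⟩ :=
    (Filter.Eventually.and (Ioo_mem_nhdsGT hr) hsmall).exists
  obtain ⟨δ, rfl⟩ : ∃ δ, δ' = 2 * δ := ⟨δ' / 2, by ring⟩
  have hδ₀ : 0 < δ := by linarith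
  obtain ⟨hint, hint₀⟩ := H.integral_sum_pd_cutCurrent hk hδ₀ l
  have hle := mul_measureReal_le_of_setIntegral_nonneg H.isOpen.measurableSet hV
    (H.contDiff.continuous.measurable measurableSet_Iic) hB hBV hint hint₀.ge
    (c := l ^ 3 * e₀ * (rexp (l * (3 * k)) ^ 2 * c)) fun y hy =>
      (hG δ hδ₀ y hy).trans (sub_le_sub_left ?_ _)
  · have hflux : G * volume.real (V ∩ g ⁻¹' Iic (2 * δ)) ≤ 1 := by
      refine (mul_le_mul ((le_abs_self G).trans (lt_add_one _).le) hδ'.le measureReal_nonneg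
        (by positivity)).trans_eq (mul_inv_cancel₀ (by positivity))
    have hunit : 1 ≤ l ^ 3 * rexp (l * (2 * k)) ^ 2 :=
      one_le_mul_of_one_le_of_one_le (one_le_pow₀ hl₁)
        (one_le_pow₀ (one_le_exp (by positivity)))
    rw [show l * (3 * k) = l * k + l * (2 * k) by ring, exp_add] at hle
    refine le_of_mul_le_mul_left ?_ (zero_lt_one.trans_le hunit)
    linarith
  · refine indicator_apply_le' (fun hyB => ?_) fun _ =>
      indicator_nonneg (fun _ _ => by positivity) y
    have hWy := hWB y hyB
    rw [indicator_of_mem (by constructor <;> linarith [hgB y hyB])]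
    simp only [conj, mul_pow, ← Finset.mul_sum]
    gcongr
    exact hφB y hyB

theorem eq_zero_of_mem (H : W.IsContinuationDomain θ e₀ e₁ C g V O φ) {y₀ : Spc} (hy₀ : y₀ ∈ V)
    (I₀ : Fin N) : φ I₀ y₀ = 0 := by
  by_contra hφ₀
  have hW₀ := H.eval_pos y₀ hy₀
  have hg₀ := H.pos y₀ hy₀
  have hs₀ : 0 < φ I₀ y₀ ^ 2 := by positivity
  have hcont : ContinuousOn (fun y => (W.eval y, g y, φ I₀ y ^ 2)) V := fun y hy =>
    ((W.contDiff_eval (n := 0)).continuous.continuousAt.prodMk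
      (H.contDiff.continuous.continuousAt.prodMk
        ((H.contDiffAt I₀ y (H.subset hy)).continuousAt.pow 2))).continuousWithinAt
  set B := V ∩ (fun y => (W.eval y, g y, φ I₀ y ^ 2)) ⁻¹'
    (Ioi (3 * (W.eval y₀ / 4)) ×ˢ Ioi (g y₀ / 2) ×ˢ Ioi (φ I₀ y₀ ^ 2 / 2))
  have hBo : IsOpen B :=
    hcont.isOpen_inter_preimage H.isOpen (isOpen_Ioi.prod (isOpen_Ioi.prod isOpen_Ioi))
  have hBpos : 0 < volume.real B := by
    refine ENNReal.toReal_pos (hBo.measure_pos volume ⟨y₀, hy₀, ?_, ?_, ?_⟩).ne'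
      (measure_ne_top_of_subset inter_subset_left H.isBounded.measure_lt_top.ne)
    all_goals simp only [mem_Ioi]; linarith
  obtain ⟨l₀, b, hb⟩ := H.exists_forall_ge_mul_measureReal_le (k := W.eval y₀ / 4)
    (r := g y₀ / 2) (c := φ I₀ y₀ ^ 2 / 2) (by positivity) (by positivity) hBo.measurableSet
    inter_subset_left (fun y hy => hy.2.1.le) (fun y hy => hy.2.2.1.le) (by positivity)
    fun y hy => hy.2.2.2.le.trans
      (Finset.single_le_sum (f := fun I => φ I y ^ 2) (fun _ _ => sq_nonneg _) (Finset.mem_univ I₀))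
  have hgrowth : Tendsto (fun l => rexp (l * (W.eval y₀ / 4)) ^ 2
      * (e₀ * (φ I₀ y₀ ^ 2 / 2) * volume.real B)) atTop atTop := by
    have := H.pseudoconvex.gradient_pos
    refine Tendsto.atTop_mul_const (by positivity) ((tendsto_pow_atTop two_ne_zero).comp ?_)
    exact tendsto_exp_atTop.comp (tendsto_id.atTop_mul_const (by positivity))
  obtain ⟨l, hbl, hl⟩ := ((hgrowth.eventually_gt_atTop b).and (eventually_ge_atTop l₀)).exists
  exact (hb l hl).not_gt hbl

end IsContinuationDomain

end QuadWeight

/-! ### Finite speed of propagation -/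

section Jets

variable {N : ℕ}

/-- The 1-jet `(u, ∂u)` of a vector-valued function at a point: the argument of the nonlinearity. -/
def jet (u : Fin N → Spc → ℝ) (p : Spc) : (Fin N → ℝ) × (Fin N → Fin 4 → ℝ) :=
  (fun J => u J p, fun J α => pd α (u J) p)

/-- `u` is smooth and solves `□u^I = Q^I(u, ∂u)` for `t > 0`; no condition is imposed on its
initial data. -/
def IsSmoothSolution (Q : ((Fin N → ℝ) × (Fin N → Fin 4 → ℝ)) → Fin N → ℝ)
    (u : Fin N → Spc → ℝ) : Prop :=
  (∀ I, ContDiff ℝ (⊤ : ℕ∞) (u I)) ∧ ∀ p : Spc, 0 < p.1 → ∀ I, box (u I) p = Q (jet u p) I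

theorem IsGlobalSolution.isSmoothSolution {Q : ((Fin N → ℝ) × (Fin N → Fin 4 → ℝ)) → Fin N → ℝ}
    {u : Fin N → Spc → ℝ} (hu : IsGlobalSolution Q u) : IsSmoothSolution Q u :=
  ⟨hu.1, fun p hp => hu.2.2.2 p hp.le⟩

theorem pd_sub {f g : Spc → ℝ} (hf : Differentiable ℝ f) (hg : Differentiable ℝ g) (α : Fin 4) :
    pd α (f - g) = pd α f - pd α g :=
  funext fun y =>
    ((HasPdAt.of_differentiableAt (hf y)).sub (HasPdAt.of_differentiableAt (hg y))).pd_eq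

theorem box_sub {f g : Spc → ℝ} (hf : ContDiff ℝ 2 f) (hg : ContDiff ℝ 2 g) (y : Spc) :
    box (f - g) y = box f y - box g y := by
  have hpd {h : Spc → ℝ} (hh : ContDiff ℝ 2 h) (α : Fin 4) : Differentiable ℝ (pd α h) :=
    (contDiff_pd (m := 1) hh (by norm_num) α).differentiable one_ne_zero
  simp only [box_eq_sum, pd_sub (hf.differentiable two_ne_zero) (hg.differentiable two_ne_zero),
    pd_sub (hpd hf _) (hpd hg _), Pi.sub_apply, mul_sub, Finset.sum_sub_distrib]

theorem jet_sub {u v : Fin N → Spc → ℝ} (hu : ∀ I, Differentiable ℝ (u I))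
    (hv : ∀ I, Differentiable ℝ (v I)) (p : Spc) : jet (u - v) p = jet u p - jet v p := by
  simp only [jet, Pi.sub_apply, pd_sub (hu _) (hv _)]
  rfl

theorem norm_jet_le {u : Fin N → Spc → ℝ} {p : Spc} {M : ℝ} (hM : 0 ≤ M)
    (h₀ : ∀ J, |u J p| ≤ M) (h₁ : ∀ J α, |pd α (u J) p| ≤ M) : ‖jet u p‖ ≤ M :=
  max_le ((pi_norm_le_iff_of_nonneg hM).2 h₀) <| (pi_norm_le_iff_of_nonneg hM).2 fun J =>
    (pi_norm_le_iff_of_nonneg hM).2 (h₁ J)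

theorem jetSq_nonneg (φ : Spc → ℝ) (y : Spc) : 0 ≤ jetSq φ y := by
  unfold jetSq
  positivity

theorem sq_le_sum_jetSq (φ : Fin N → Spc → ℝ) (y : Spc) (J : Fin N) :
    φ J y ^ 2 ≤ ∑ J, jetSq (φ J) y :=
  calc φ J y ^ 2 ≤ jetSq (φ J) y := le_add_of_nonneg_right (by positivity)
    _ ≤ ∑ J, jetSq (φ J) y :=
      Finset.single_le_sum (fun J _ => jetSq_nonneg (φ J) y) (Finset.mem_univ J)

theorem pd_sq_le_sum_jetSq (φ : Fin N → Spc → ℝ) (y : Spc) (J : Fin N) (α : Fin 4) :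
    pd α (φ J) y ^ 2 ≤ ∑ J, jetSq (φ J) y :=
  calc pd α (φ J) y ^ 2 ≤ ∑ α, pd α (φ J) y ^ 2 :=
      Finset.single_le_sum (f := fun α => pd α (φ J) y ^ 2) (fun _ _ => sq_nonneg _)
        (Finset.mem_univ α)
    _ ≤ jetSq (φ J) y := le_add_of_nonneg_left (sq_nonneg _)
    _ ≤ ∑ J, jetSq (φ J) y :=
      Finset.single_le_sum (fun J _ => jetSq_nonneg (φ J) y) (Finset.mem_univ J)

theorem norm_jet_le_sqrt_sum_jetSq (φ : Fin N → Spc → ℝ) (y : Spc) :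
    ‖jet φ y‖ ≤ √(∑ J, jetSq (φ J) y) :=
  norm_jet_le (sqrt_nonneg _) (fun J => abs_le_sqrt (sq_le_sum_jetSq φ y J))
    fun J α => abs_le_sqrt (pd_sq_le_sum_jetSq φ y J α)

theorem continuous_jet {u : Fin N → Spc → ℝ} (hu : ∀ I, ContDiff ℝ 1 (u I)) :
    Continuous (jet u) :=
  (continuous_pi fun J => (hu J).continuous).prodMk <|
    continuous_pi fun J => continuous_pi fun α => continuous_pd (hu J) α

theorem exists_box_sub_sq_le {Q : ((Fin N → ℝ) × (Fin N → Fin 4 → ℝ)) → Fin N → ℝ}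
    (hQ : ContDiff ℝ 1 Q) {u v : Fin N → Spc → ℝ} (hu : ∀ I, ContDiff ℝ 2 (u I))
    (hv : ∀ I, ContDiff ℝ 2 (v I)) {V : Set Spc} (hV : Bornology.IsBounded V)
    (hub : ∀ y ∈ V, ∀ I, box (u I) y = Q (jet u y) I)
    (hvb : ∀ y ∈ V, ∀ I, box (v I) y = Q (jet v y) I) :
    ∃ C, 0 ≤ C ∧ ∀ y ∈ V, ∀ I, box ((u - v) I) y ^ 2 ≤ C * ∑ J, jetSq ((u - v) J) y := by
  have hjet {u : Fin N → Spc → ℝ} (hu : ∀ I, ContDiff ℝ 2 (u I)) :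
      Bornology.IsBounded (jet u '' V) :=
    (hV.isCompact_closure.image (continuous_jet fun I => (hu I).of_le one_le_two)).isBounded.subset
      (image_mono subset_closure)
  obtain ⟨r, hr⟩ := ((hjet hu).union (hjet hv)).subset_closedBall 0
  obtain ⟨L, hL⟩ := (hQ.contDiffOn (s := Metric.closedBall 0 r)).exists_lipschitzOnWith
    one_ne_zero (convex_closedBall _ _) (isCompact_closedBall _ _)
  refine ⟨(L : ℝ) ^ 2, by positivity, fun y hy I => ?_⟩
  have hlip : |box ((u - v) I) y| ≤ L * √(∑ J, jetSq ((u - v) J) y) :=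
    calc |box ((u - v) I) y| = |(Q (jet u y) - Q (jet v y)) I| := by
          rw [Pi.sub_apply, box_sub (hu I) (hv I), hub y hy, hvb y hy, Pi.sub_apply]
      _ ≤ ‖Q (jet u y) - Q (jet v y)‖ := norm_le_pi_norm (Q (jet u y) - Q (jet v y)) I
      _ ≤ L * ‖jet u y - jet v y‖ :=
          hL.norm_sub_le (hr (.inl (mem_image_of_mem _ hy))) (hr (.inr (mem_image_of_mem _ hy)))
      _ ≤ L * √(∑ J, jetSq ((u - v) J) y) := by
          rw [← jet_sub (fun I => (hu I).differentiable two_ne_zero)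
            fun I => (hv I).differentiable two_ne_zero]
          gcongr
          exact norm_jet_le_sqrt_sum_jetSq _ y
  calc box ((u - v) I) y ^ 2 ≤ (L * √(∑ J, jetSq ((u - v) J) y)) ^ 2 := by
        rw [← sq_abs]
        gcongr
    _ = L ^ 2 * ∑ J, jetSq ((u - v) J) y := by
        rw [mul_pow, sq_sqrt (Finset.sum_nonneg fun J _ => jetSq_nonneg _ y)]

end Jets

theorem norm_sq_eq_three (x : EuclideanSpace ℝ (Fin 3)) :
    ‖x‖ ^ 2 = x 0 ^ 2 + x 1 ^ 2 + x 2 ^ 2 := by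
  rw [EuclideanSpace.real_norm_sq_eq, Fin.sum_univ_three]

namespace QuadWeight

/-- The rotationally symmetric weight `β (t - t₀)² + γ |x - x₀|² - K`. -/
def spherical (β γ t₀ : ℝ) (x₀ : EuclideanSpace ℝ (Fin 3)) (K : ℝ) : QuadWeight where
  coeff := Fin.cons β fun _ => γ
  center α := coord α (t₀, x₀)
  level := K

variable {β γ t₀ K : ℝ} {x₀ : EuclideanSpace ℝ (Fin 3)}

theorem eval_spherical (y : Spc) : (spherical β γ t₀ x₀ K).eval y =
    β * (y.1 - t₀) ^ 2 + γ * ‖y.2 - x₀‖ ^ 2 - K := by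
  rw [norm_sq_eq_three]
  simp only [eval, spherical, Fin.sum_univ_succ, Fin.cons_zero, Fin.cons_succ, coord_zero,
    coord_succ, Fin.sum_univ_zero, PiLp.sub_apply]
  simp only [Fin.succ_zero_eq_one, Fin.succ_one_eq_two]
  ring

theorem sum_gradient_spherical (θ : ℝ) (y : Spc) :
    (∑ α, 4 * (spherical β γ t₀ x₀ K).coeff α * (spherical β γ t₀ x₀ K).gradient y α ^ 2)
      - θ * minkowski ((spherical β γ t₀ x₀ K).gradient y) ((spherical β γ t₀ x₀ K).gradient y)
    = (4 * β + θ) * (4 * β ^ 2 * (y.1 - t₀) ^ 2)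
      + (4 * γ - θ) * (4 * γ ^ 2 * ‖y.2 - x₀‖ ^ 2) := by
  rw [norm_sq_eq_three]
  simp only [minkowski, gradient, spherical, Fin.sum_univ_succ, Fin.cons_zero, Fin.cons_succ,
    coord_zero, coord_succ, Fin.sum_univ_zero, PiLp.sub_apply, eta, Fin.succ_ne_zero, if_true,
    if_false]
  simp only [Fin.succ_zero_eq_one, Fin.succ_one_eq_two]
  ring

theorem mul_sq_sub_mul_le_of_lt {a b A B K : ℝ} (hb : b ≤ 0) (hab : 0 < a + b) (hB : 0 ≤ B)
    (hK : 0 < K) (h : K < a * A + b * B) :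
    6 * (a - b) ^ 2 * K ≤
      (6 * a - 2 * b) * (4 * a ^ 2 * A) + (6 * b - 2 * a) * (4 * b ^ 2 * B) := by
  have hA : (6 * a - 2 * b) * (4 * a) * K ≤ (6 * a - 2 * b) * (4 * a) * (a * A + b * B) :=
    mul_le_mul_of_nonneg_left h.le (by nlinarith)
  have hB : 0 ≤ 24 * ((a + b) * (a - b) * -b * B) :=
    mul_nonneg (by norm_num) (mul_nonneg (mul_nonneg (by nlinarith) (by linarith)) hB)
  have hK : 0 ≤ ((6 * a - 2 * b) * (4 * a) - 6 * (a - b) ^ 2) * K :=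
    mul_nonneg (by nlinarith) hK.le
  linarith

theorem isPseudoconvexOn_spherical (hβγ : β * γ ≤ 0) (hpos : 0 < β + γ) (hK : 0 < K)
    {V : Set Spc} (hV : ∀ y ∈ V, 0 < (spherical β γ t₀ x₀ K).eval y) :
    (spherical β γ t₀ x₀ K).IsPseudoconvexOn (2 * (β - γ)) (6 * (β - γ) ^ 2 * K)
      (2 * (β + γ)) V where
  gradient_pos := mul_pos (by nlinarith [mul_pos hpos hpos]) hK
  hessian_pos := by linarith
  le_hessian α := by
    refine Fin.cases ?_ (fun i => ?_) α <;>
      simp only [spherical, Fin.cons_zero, Fin.cons_succ, eta, Fin.succ_ne_zero, if_true,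
        if_false] <;> linarith
  le_gradient y hy := by
    have hW := hV y hy
    rw [eval_spherical] at hW
    rw [sum_gradient_spherical]
    have hT := sq_nonneg (y.1 - t₀)
    have hS := sq_nonneg ‖y.2 - x₀‖
    rcases le_or_gt γ 0 with hγ | hγ
    · linarith [mul_sq_sub_mul_le_of_lt (A := (y.1 - t₀) ^ 2) hγ hpos hS hK (by linarith)]
    · have hβ : β ≤ 0 := nonpos_of_mul_nonpos_left hβγ hγ
      linarith [mul_sq_sub_mul_le_of_lt (A := ‖y.2 - x₀‖ ^ 2) hβ (add_comm β γ ▸ hpos) hT hK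
        (by linarith)]

end QuadWeight

theorem pd_eq_zero_of_cauchyData {f : Spc → ℝ} {x : EuclideanSpace ℝ (Fin 3)}
    (hf : DifferentiableAt ℝ f (0, x)) (h₀ : ∀ᶠ z in 𝓝 x, f (0, z) = 0)
    (h₁ : pd 0 f (0, x) = 0) (α : Fin 4) : pd α f (0, x) = 0 := by
  have hinr : HasFDerivAt (fun z : EuclideanSpace ℝ (Fin 3) => f (0, z))
      ((fderiv ℝ f (0, x)).comp (.inr ℝ ℝ (EuclideanSpace ℝ (Fin 3)))) x :=
    hf.hasFDerivAt.comp x (hasFDerivAt_prodMk_right 0 x)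
  have hzero := hinr.unique ((hasFDerivAt_const (0 : ℝ) x).congr_of_eventuallyEq h₀)
  refine Fin.cases h₁ (fun i => ?_) α
  exact congrArg (fun L => L (EuclideanSpace.single i 1)) hzero

section DomainOfDependence

variable {N : ℕ} {β t₀ L K : ℝ} {x₁ : EuclideanSpace ℝ (Fin 3)} {φ : Fin N → Spc → ℝ}

open QuadWeight in
theorem norm_sub_lt_of_eval_spherical_pos (hL : 0 < L) (hβ : 0 < β) (hβL : β * t₀ ^ 2 ≤ L ^ 2)
    (hK : 0 < K) {y : Spc} (hy : 0 ≤ y.1) (hyt : y.1 ≤ t₀)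
    (hW : 0 < (spherical β (-1) t₀ x₁ K).eval y) : ‖y.2 - x₁‖ < L := by
  rw [eval_spherical] at hW
  have hsq : β * (y.1 - t₀) ^ 2 ≤ β * t₀ ^ 2 := mul_le_mul_of_nonneg_left (by nlinarith) hβ.le
  exact lt_of_pow_lt_pow_left₀ 2 hL.le (by linarith)

theorem exists_weight_params {t₁ : ℝ} (ht₁ : 0 < t₁) (htL : t₁ < L) :
    ∃ t₀ β K : ℝ, t₁ < t₀ ∧ t₀ ≤ L ∧ 1 < β ∧ β * t₀ ^ 2 ≤ L ^ 2 ∧ 0 < K ∧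
      K < β * (t₁ - t₀) ^ 2 := by
  obtain ⟨t₀, ht, htL⟩ := exists_between htL
  have ht₀ : 0 < t₀ := ht₁.trans ht
  have hβ : 1 < (L / t₀) ^ 2 := one_lt_pow₀ ((one_lt_div ht₀).2 htL) two_ne_zero
  have hpos : 0 < (L / t₀) ^ 2 * (t₁ - t₀) ^ 2 :=
    mul_pos (by linarith) (pow_pos (by linarith) 2 |>.trans_eq (neg_sq (t₁ - t₀)))
  obtain ⟨K, hK, hKlt⟩ := exists_between hpos
  exact ⟨t₀, (L / t₀) ^ 2, K, ht, htL.le, hβ, by rw [div_pow, div_mul_cancel₀ _ (by positivity)],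
    hK, hKlt⟩

open QuadWeight in
theorem isContinuationDomain_cap {C : ℝ} (hC : 0 ≤ C) (ht₀ : 0 < t₀) (htL : t₀ ≤ L) (hβ : 1 < β)
    (hβL : β * t₀ ^ 2 ≤ L ^ 2) (hK : 0 < K) (hφ : ∀ I, ContDiff ℝ 2 (φ I))
    (hbox : ∀ y : Spc, 0 < y.1 → y.1 < L → ‖y.2 - x₁‖ < L → ∀ I,
      box (φ I) y ^ 2 ≤ C * ∑ J, jetSq (φ J) y)
    (hdata : ∀ x : EuclideanSpace ℝ (Fin 3), ‖x - x₁‖ < L → ∀ I,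
      φ I (0, x) = 0 ∧ pd 0 (φ I) (0, x) = 0) :
    (spherical β (-1) t₀ x₁ K).IsContinuationDomain (2 * (β - -1)) (6 * (β - -1) ^ 2 * K)
      (2 * (β + -1)) C (fun _ => 1)
      {y | 0 < y.1 ∧ y.1 < t₀ ∧ 0 < (spherical β (-1) t₀ x₁ K).eval y}
      {y | y.1 < t₀ ∧ 0 < (spherical β (-1) t₀ x₁ K).eval y} φ := by
  set W := spherical β (-1) t₀ x₁ K
  have hball (y : Spc) (hy : 0 ≤ y.1) (hyt : y.1 ≤ t₀) (hW : 0 < W.eval y) : ‖y.2 - x₁‖ < L :=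
    norm_sub_lt_of_eval_spherical_pos (by linarith) (by linarith) hβL hK hy hyt hW
  have hWc : Continuous W.eval := (W.contDiff_eval (n := 0)).continuous
  have hopen : IsOpen {y : Spc | 0 < y.1 ∧ y.1 < t₀ ∧ 0 < W.eval y} :=
    (isOpen_lt continuous_const continuous_fst).inter
      ((isOpen_lt continuous_fst continuous_const).inter (isOpen_lt continuous_const hWc))
  have hbdd : Bornology.IsBounded {y : Spc | 0 < y.1 ∧ y.1 < t₀ ∧ 0 < W.eval y} :=
    ((Metric.isBounded_Icc 0 t₀).prod Metric.isBounded_ball).subset fun y hy =>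
      ⟨⟨hy.1.le, hy.2.1.le⟩, mem_ball_iff_norm.2 (hball y hy.1.le hy.2.1.le hy.2.2)⟩
  have hclosure : closure {y : Spc | 0 < y.1 ∧ y.1 < t₀ ∧ 0 < W.eval y} ⊆
      {y | 0 ≤ y.1 ∧ y.1 ≤ t₀} :=
    closure_minimal (fun y hy => ⟨hy.1.le, hy.2.1.le⟩)
      ((isClosed_le continuous_const continuous_fst).inter
        (isClosed_le continuous_fst continuous_const))
  have hpd (I : Fin N) (α : Fin 4) := isBigO_one_of_continuous hbdd
    (continuous_pd ((hφ I).of_le one_le_two) α)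
  refine ⟨isPseudoconvexOn_spherical (by linarith) (by linarith) hK fun y hy => hy.2.2, hC, hopen,
    hbdd, fun y hy => hy.2, fun y hy hW _ => ⟨(hclosure hy).2.lt_of_ne fun heq => ?_, hW⟩,
    contDiff_const, fun I y _ => (hφ I).contDiffAt, ?_, fun _ _ => one_pos, fun y hy => hy.2.2,
    fun y hy => hbox y hy.1 (hy.2.1.trans_le htL) (hball y hy.1.le hy.2.1.le hy.2.2),
    fun I => isBigO_one_of_continuous hbdd (hφ I).continuous, hpd, fun I => ?_,
    fun I => isBigO_one_minkowski (hpd I) (hpd I)⟩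
  · rw [eval_spherical, heq] at hW
    nlinarith [sq_nonneg ‖y.2 - x₁‖]
  · rintro ⟨t, x⟩ ⟨hyO, hyV⟩ I
    obtain rfl : t = 0 := by
      by_contra hne
      rw [hopen.frontier_eq] at hyV
      exact hyV.2 ⟨(hclosure hyV.1).1.lt_of_ne' hne, hyO⟩
    have hx : ‖x - x₁‖ < L := hball (0, x) le_rfl ht₀.le hyO.2
    refine ⟨(hdata x hx I).1, pd_eq_zero_of_cauchyData
      ((hφ I).differentiable two_ne_zero _) ?_ (hdata x hx I).2⟩
    filter_upwards [Metric.isOpen_ball.mem_nhds (mem_ball_iff_norm.2 hx)] with z hz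
    exact (hdata z (mem_ball_iff_norm.1 hz) I).1
  · exact isBigO_one_minkowski (fun α => isBigO_one_of_continuous hbdd
      (continuous_pd contDiff_const α)) (hpd I)

open QuadWeight in
theorem eq_zero_of_cauchyData_eq_zero {C t₁ : ℝ} (hC : 0 ≤ C) (ht₁ : 0 < t₁) (htL : t₁ < L)
    (hφ : ∀ I, ContDiff ℝ 2 (φ I))
    (hbox : ∀ y : Spc, 0 < y.1 → y.1 < L → ‖y.2 - x₁‖ < L → ∀ I,
      box (φ I) y ^ 2 ≤ C * ∑ J, jetSq (φ J) y)
    (hdata : ∀ x : EuclideanSpace ℝ (Fin 3), ‖x - x₁‖ < L → ∀ I,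
      φ I (0, x) = 0 ∧ pd 0 (φ I) (0, x) = 0) (I : Fin N) : φ I (t₁, x₁) = 0 := by
  obtain ⟨t₀, β, K, ht, htL, hβ, hβL, hK, hKlt⟩ := exists_weight_params ht₁ htL
  refine (isContinuationDomain_cap hC (ht₁.trans ht) htL hβ hβL hK hφ hbox
    hdata).eq_zero_of_mem ⟨ht₁, ht, ?_⟩ I
  simpa [eval_spherical] using hKlt

end DomainOfDependence

section FiniteSpeed

variable {N : ℕ} {Q : ((Fin N → ℝ) × (Fin N → Fin 4 → ℝ)) → Fin N → ℝ} {u v : Fin N → Spc → ℝ}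
  {R₁ : ℝ} {p : Spc}

theorem IsSmoothSolution.sub_eq_zero_of_lt (hQ : ContDiff ℝ 1 Q) (hu : IsSmoothSolution Q u)
    (hv : IsSmoothSolution Q v)
    (hdata : ∀ x : EuclideanSpace ℝ (Fin 3), R₁ ≤ ‖x‖ → ∀ I,
      u I (0, x) = v I (0, x) ∧ dt (u I) (0, x) = dt (v I) (0, x))
    (hp : 0 < p.1) (hpr : R₁ + p.1 < ‖p.2‖) (I : Fin N) : (u - v) I p = 0 := by
  have hsmooth {u : Fin N → Spc → ℝ} (hu : IsSmoothSolution Q u) (I : Fin N) :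
      ContDiff ℝ 2 (u I) := (hu.1 I).of_le (by norm_cast)
  have hu₁ (I : Fin N) := (hsmooth hu I).differentiable two_ne_zero
  have hv₁ (I : Fin N) := (hsmooth hv I).differentiable two_ne_zero
  set L := ‖p.2‖ - R₁
  let V : Set Spc := {y | 0 < y.1 ∧ y.1 < L ∧ ‖y.2 - p.2‖ < L}
  have hV : Bornology.IsBounded V :=
    ((Metric.isBounded_Icc 0 L).prod (Metric.isBounded_ball (x := p.2) (r := L))).subset
      fun y hy => ⟨⟨hy.1.le, hy.2.1.le⟩, mem_ball_iff_norm.2 hy.2.2⟩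
  obtain ⟨C, hC, hbox⟩ := exists_box_sub_sq_le hQ (hsmooth hu) (hsmooth hv) hV
    (fun y hy => hu.2 y hy.1) (fun y hy => hv.2 y hy.1)
  refine eq_zero_of_cauchyData_eq_zero hC hp (by linarith : p.1 < L)
    (fun I => (hsmooth hu I).sub (hsmooth hv I)) (fun y h₀ h₁ h₂ => hbox y ⟨h₀, h₁, h₂⟩)
    (fun x hx I => ?_) I
  have hxR : R₁ ≤ ‖x‖ := by
    have := norm_sub_norm_le p.2 x
    rw [norm_sub_rev] at this
    linarith
  exact ⟨sub_eq_zero.2 (hdata x hxR I).1, (congrFun (pd_sub (hu₁ I) (hv₁ I) 0) (0, x)).trans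
    (sub_eq_zero.2 (hdata x hxR I).2)⟩

theorem IsSmoothSolution.sub_eq_zero_of_le (hQ : ContDiff ℝ 1 Q) (hu : IsSmoothSolution Q u)
    (hv : IsSmoothSolution Q v)
    (hdata : ∀ x : EuclideanSpace ℝ (Fin 3), R₁ ≤ ‖x‖ → ∀ I,
      u I (0, x) = v I (0, x) ∧ dt (u I) (0, x) = dt (v I) (0, x))
    (hp : 0 < p.1) (hpr : R₁ + p.1 ≤ ‖p.2‖) (I : Fin N) :
    (u - v) I p = 0 ∧ ∀ α, pd α ((u - v) I) p = 0 := by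
  have hw : ContDiff ℝ 1 ((u - v) I) :=
    ((hu.1 I).sub (hv.1 I)).of_le (by norm_cast)
  let U : Set Spc := {y | 0 < y.1 ∧ R₁ + y.1 < ‖y.2‖}
  have hU : IsOpen U := (isOpen_lt continuous_const continuous_fst).inter
    (isOpen_lt (continuous_const.add continuous_fst) continuous_snd.norm)
  have hzero : ∀ y ∈ U, (u - v) I y = 0 := fun y hy =>
    hu.sub_eq_zero_of_lt hQ hv hdata hy.1 hy.2 I
  have hpd (α : Fin 4) : ∀ y ∈ U, pd α ((u - v) I) y = 0 := fun y hy => by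
    rw [pd_congr (eventually_of_mem (hU.mem_nhds hy) hzero), (hasPdAt_const α 0 y).pd_eq]
  have hpU : p ∈ closure U := by
    have hT : Tendsto (fun t : ℝ => ((t, p.2) : Spc)) (𝓝[<] p.1) (𝓝 p) :=
      (Continuous.tendsto (by fun_prop) p.1).mono_left nhdsWithin_le_nhds
    refine mem_closure_of_tendsto hT ?_
    filter_upwards [self_mem_nhdsWithin, mem_nhdsWithin_of_mem_nhds (lt_mem_nhds hp)]
      with t ht ht₀ using ⟨ht₀, (add_lt_add_right (mem_Iio.1 ht) R₁).trans_le hpr⟩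
  exact ⟨closure_minimal hzero (isClosed_eq hw.continuous continuous_const) hpU, fun α =>
    closure_minimal (hpd α) (isClosed_eq (continuous_pd hw α) continuous_const) hpU⟩

end FiniteSpeed

/-! ### Conformal inversion and the Kelvin transform -/

/-- The Lorentzian square `t² - |x|²`. -/
def lorentzSq (y : Spc) : ℝ := y.1 ^ 2 - ‖y.2‖ ^ 2

/-- The conformal inversion `y ↦ y / (t² - |x|²)`, an involution off the light cone. -/
def inversion (y : Spc) : Spc := (lorentzSq y)⁻¹ • y

/-- The Euler (scaling) field `∑_μ y_μ ∂_μ h`. -/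
def euler (h : Spc → ℝ) (y : Spc) : ℝ := ∑ μ, coord μ y * pd μ h y

/-- `h + ∑_μ y_μ ∂_μ h`, the combination produced by differentiating a Kelvin transform. -/
def oneAddEuler (h : Spc → ℝ) (y : Spc) : ℝ := h y + euler h y

/-- The Kelvin transform of `h`, with the conformal weight of `□` in dimension `1 + 3`. -/
def kelvin (h : Spc → ℝ) (y : Spc) : ℝ := (lorentzSq y)⁻¹ * h (inversion y)

section Kelvin

variable {h : Spc → ℝ} {y : Spc}

theorem minkowski_coord_self (y : Spc) :
    minkowski (coord · y) (coord · y) = -lorentzSq y := by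
  simp only [lorentzSq, norm_sq_eq_three, minkowski, Fin.sum_univ_four, eta_zero, eta_one, eta_two,
    eta_three, coord_zero, coord_one, coord_two, coord_three]
  ring

theorem contDiff_lorentzSq {n : WithTop ℕ∞} : ContDiff ℝ n lorentzSq :=
  (contDiff_fst.pow 2).sub (contDiff_snd.norm_sq ℝ)

theorem lorentzSq_pos (hy : ‖y.2‖ < y.1) : 0 < lorentzSq y :=
  sub_pos.2 (pow_lt_pow_left₀ hy (norm_nonneg _) two_ne_zero)

theorem lorentzSq_smul (a : ℝ) (y : Spc) : lorentzSq (a • y) = a ^ 2 * lorentzSq y := by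
  simp only [lorentzSq, Prod.smul_fst, Prod.smul_snd, norm_smul, smul_eq_mul, mul_pow,
    Real.norm_eq_abs, sq_abs]
  ring

theorem lorentzSq_inversion (hD : lorentzSq y ≠ 0) :
    lorentzSq (inversion y) = (lorentzSq y)⁻¹ := by
  rw [inversion, lorentzSq_smul]
  field_simp

theorem inversion_inversion (hD : lorentzSq y ≠ 0) : inversion (inversion y) = y := by
  rw [inversion, lorentzSq_inversion hD, inv_inv, inversion, smul_inv_smul₀ hD]

theorem coord_inversion (α : Fin 4) (y : Spc) :
    coord α (inversion y) = (lorentzSq y)⁻¹ * coord α y := by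
  rw [inversion, map_smul, smul_eq_mul]

theorem sum_coord_mul (hD : lorentzSq y ≠ 0) (f : Fin 4 → ℝ) :
    ∑ μ, coord μ y * f μ = lorentzSq y * ∑ μ, coord μ (inversion y) * f μ := by
  simp only [coord_inversion, mul_assoc, ← Finset.mul_sum]
  rw [mul_inv_cancel_left₀ hD]

theorem hasPdAt_lorentzSq (α : Fin 4) (y : Spc) :
    HasPdAt α lorentzSq (-2 * (eta α * coord α y)) y := by
  have h := (HasPdAt.minkowski (hasPdAt_coord α · y) (hasPdAt_coord α · y)).const_mul (-1)
  simp only [minkowski_coord_self, neg_mul_neg, one_mul] at h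
  refine ⟨h.differentiableAt, h.pd_eq.trans ?_⟩
  simp only [minkowski, ite_mul, mul_ite, one_mul, zero_mul, mul_one, mul_zero, Finset.sum_ite_eq,
    Finset.mem_univ, if_true]
  ring

theorem hasPdAt_inv_lorentzSq (α : Fin 4) (hD : lorentzSq y ≠ 0) :
    HasPdAt α (fun z => (lorentzSq z)⁻¹) (2 * (lorentzSq y)⁻¹ ^ 2 * (eta α * coord α y)) y := by
  have h := (hasPdAt_lorentzSq α y).scomp (hasDerivAt_inv hD)
  refine ⟨h.differentiableAt, h.pd_eq.trans ?_⟩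
  rw [← inv_pow]
  ring

theorem contDiffAt_inversion {n : WithTop ℕ∞} (hD : lorentzSq y ≠ 0) :
    ContDiffAt ℝ n inversion y :=
  (contDiff_lorentzSq.contDiffAt.inv hD).smul contDiffAt_id

theorem contDiffAt_kelvin {n : WithTop ℕ∞} (hD : lorentzSq y ≠ 0) (hh : ContDiff ℝ n h) :
    ContDiffAt ℝ n (kelvin h) y :=
  (contDiff_lorentzSq.contDiffAt.inv hD).mul (hh.contDiffAt.comp y (contDiffAt_inversion hD))

theorem hasPdAt_comp_inversion (α : Fin 4) (hD : lorentzSq y ≠ 0)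
    (hh : DifferentiableAt ℝ h (inversion y)) :
    HasPdAt α (fun z => h (inversion z)) ((lorentzSq y)⁻¹ *
      (pd α h (inversion y) + 2 * (eta α * coord α y) * euler h (inversion y))) y := by
  have hcomp := HasPdAt.comp hh ((contDiffAt_inversion (n := 1) hD).differentiableAt one_ne_zero)
    fun μ => by
      simpa only [coord_inversion] using (hasPdAt_inv_lorentzSq α hD).mul (hasPdAt_coord α μ y)
  refine ⟨hcomp.differentiableAt, hcomp.pd_eq.trans ?_⟩
  simp only [add_mul, mul_ite, ite_mul, mul_one, mul_zero, zero_mul, Finset.sum_add_distrib,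
    Finset.sum_ite_eq, Finset.mem_univ, if_true, euler, coord_inversion, mul_assoc,
    ← Finset.mul_sum]
  ring

theorem hasPdAt_kelvin (α : Fin 4) (hD : lorentzSq y ≠ 0)
    (hh : DifferentiableAt ℝ h (inversion y)) :
    HasPdAt α (kelvin h) ((lorentzSq y)⁻¹ ^ 2 *
      (pd α h (inversion y) + 2 * (eta α * coord α y) * oneAddEuler h (inversion y))) y := by
  have hmul := (hasPdAt_inv_lorentzSq α hD).mul (hasPdAt_comp_inversion α hD hh)
  refine ⟨hmul.differentiableAt, hmul.pd_eq.trans ?_⟩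
  unfold oneAddEuler
  ring

theorem euler_kelvin (hD : lorentzSq y ≠ 0) (hh : DifferentiableAt ℝ h (inversion y)) :
    euler (kelvin h) y =
      (lorentzSq y)⁻¹ * (euler h (inversion y) - 2 * oneAddEuler h (inversion y)) := by
  calc euler (kelvin h) y
      = (lorentzSq y)⁻¹ ^ 2 * (∑ α, coord α y * pd α h (inversion y)
          + 2 * oneAddEuler h (inversion y) * minkowski (coord · y) (coord · y)) := by
        simp only [euler, minkowski, mul_add, Finset.mul_sum, ← Finset.sum_add_distrib]
        refine Finset.sum_congr rfl fun α _ => ?_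
        rw [(hasPdAt_kelvin α hD hh).pd_eq]
        ring
    _ = (lorentzSq y)⁻¹ * (euler h (inversion y) - 2 * oneAddEuler h (inversion y)) := by
        rw [sum_coord_mul hD, minkowski_coord_self, euler]
        field_simp
        ring

theorem minkowski_grad_kelvin (hD : lorentzSq y ≠ 0) (hh : DifferentiableAt ℝ h (inversion y)) :
    minkowski (grad (kelvin h) y) (grad (kelvin h) y) = (lorentzSq y)⁻¹ ^ 4 *
      (minkowski (grad h (inversion y)) (grad h (inversion y)) + 4 * lorentzSq y
        * oneAddEuler h (inversion y)
        * (euler h (inversion y) - oneAddEuler h (inversion y))) := by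
  calc minkowski (grad (kelvin h) y) (grad (kelvin h) y)
      = (lorentzSq y)⁻¹ ^ 4 * (minkowski (grad h (inversion y)) (grad h (inversion y))
          + 4 * oneAddEuler h (inversion y) * (∑ α, coord α y * pd α h (inversion y))
          + 4 * oneAddEuler h (inversion y) ^ 2 * minkowski (coord · y) (coord · y)) := by
        simp only [minkowski, grad, mul_add, Finset.mul_sum, ← Finset.sum_add_distrib]
        refine Finset.sum_congr rfl fun α _ => ?_
        rw [(hasPdAt_kelvin α hD hh).pd_eq]
        linear_combination ((lorentzSq y)⁻¹ ^ 4 *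
          (4 * coord α y * pd α h (inversion y) * oneAddEuler h (inversion y)
            + 4 * eta α * coord α y ^ 2 * oneAddEuler h (inversion y) ^ 2)) * eta_mul_self α
    _ = _ := by
        rw [sum_coord_mul hD, minkowski_coord_self, euler]
        ring

theorem pd_inversion_eq (hD : lorentzSq y ≠ 0) (hh : DifferentiableAt ℝ h (inversion y))
    (α : Fin 4) : pd α h (inversion y) = lorentzSq y ^ 2 * pd α (kelvin h) y
      + 2 * (eta α * coord α y) * lorentzSq y * oneAddEuler (kelvin h) y := by
  have hone : oneAddEuler (kelvin h) y = kelvin h y + euler (kelvin h) y := rfl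
  rw [(hasPdAt_kelvin α hD hh).pd_eq, hone, euler_kelvin hD hh, kelvin, oneAddEuler]
  field_simp
  ring

theorem contDiff_euler (hh : ContDiff ℝ 2 h) : ContDiff ℝ 1 (euler h) :=
  ContDiff.sum fun μ _ => (coord μ).contDiff.mul (contDiff_pd hh (by norm_num) μ)

theorem contDiff_oneAddEuler (hh : ContDiff ℝ 2 h) : ContDiff ℝ 1 (oneAddEuler h) :=
  (hh.of_le one_le_two).add (contDiff_euler hh)

theorem pd_oneAddEuler (hh : ContDiff ℝ 2 h) (α : Fin 4) (y : Spc) :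
    pd α (oneAddEuler h) y = 2 * pd α h y + euler (pd α h) y := by
  have hd : HasPdAt α h (pd α h y) y := .of_differentiableAt (hh.differentiable two_ne_zero y)
  have hpd (μ : Fin 4) : HasPdAt α (pd μ h) (pd μ (pd α h) y) y := by
    rw [← pd_comm hh.contDiffAt]
    exact .of_differentiableAt
      ((contDiff_pd (m := 1) hh (by norm_num) μ).differentiable one_ne_zero y)
  refine (hd.add (.sum Finset.univ fun μ _ => (hasPdAt_coord α μ y).mul (hpd μ))).pd_eq.trans ?_
  simp only [ite_mul, one_mul, zero_mul, Finset.sum_add_distrib, Finset.sum_ite_eq,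
    Finset.mem_univ, if_true, euler]
  ring

theorem euler_oneAddEuler (hh : ContDiff ℝ 2 h) (y : Spc) :
    euler (oneAddEuler h) y = 2 * euler h y + ∑ α, coord α y * euler (pd α h) y := by
  rw [euler, euler, Finset.mul_sum, ← Finset.sum_add_distrib]
  refine Finset.sum_congr rfl fun α _ => ?_
  rw [pd_oneAddEuler hh]
  ring

theorem pd_pd_kelvin (hD : lorentzSq y ≠ 0) (hh : ContDiff ℝ 2 h) (α : Fin 4) :
    pd α (pd α (kelvin h)) y = (lorentzSq y)⁻¹ ^ 3 * (4 * (eta α * coord α y)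
        * (pd α h (inversion y) + 2 * (eta α * coord α y) * oneAddEuler h (inversion y))
      + pd α (pd α h) (inversion y) + 2 * (eta α * coord α y) * euler (pd α h) (inversion y)
      + 2 * (eta α * coord α y) * (pd α (oneAddEuler h) (inversion y)
        + 2 * (eta α * coord α y) * euler (oneAddEuler h) (inversion y)))
      + 2 * (lorentzSq y)⁻¹ ^ 2 * eta α * oneAddEuler h (inversion y) := by
  have hfirst : pd α (kelvin h) =ᶠ[𝓝 y] fun z => ((lorentzSq z)⁻¹ * (lorentzSq z)⁻¹) *
      (pd α h (inversion z) + (2 * eta α) * (coord α z * oneAddEuler h (inversion z))) := by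
    filter_upwards [(contDiff_lorentzSq (n := 0)).continuous.continuousAt.eventually_ne hD]
      with z hz
    rw [(hasPdAt_kelvin α hz (hh.differentiable two_ne_zero _)).pd_eq]
    ring
  have hinv := hasPdAt_inv_lorentzSq α hD
  have hpd := hasPdAt_comp_inversion α hD
    ((contDiff_pd (m := 1) hh (by norm_num) α).differentiable one_ne_zero _)
  have hone := hasPdAt_comp_inversion α hD
    ((contDiff_oneAddEuler hh).differentiable one_ne_zero _)
  rw [pd_congr hfirst, ((hinv.mul hinv).mul
    (hpd.add (((hasPdAt_coord α α y).mul hone).const_mul (2 * eta α)))).pd_eq, if_pos rfl]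
  ring

theorem box_kelvin (hD : lorentzSq y ≠ 0) (hh : ContDiff ℝ 2 h) :
    box (kelvin h) y = (lorentzSq y)⁻¹ ^ 3 * box h (inversion y) := by
  set i := (lorentzSq y)⁻¹
  set P := inversion y
  have hi : i * lorentzSq y = 1 := inv_mul_cancel₀ hD
  have hsum : box (kelvin h) y = 4 * i ^ 3 * (∑ α, coord α y * pd α h P)
      + 4 * i ^ 3 * (2 * oneAddEuler h P + euler (oneAddEuler h) P)
        * minkowski (coord · y) (coord · y)
      + i ^ 3 * box h P + 2 * i ^ 3 * (∑ α, coord α y * euler (pd α h) P)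
      + 2 * i ^ 2 * oneAddEuler h P * (∑ α : Fin 4, eta α * eta α)
      + 2 * i ^ 3 * (∑ α, coord α y * pd α (oneAddEuler h) P) := by
    simp only [box_eq_sum, minkowski, Finset.mul_sum, ← Finset.sum_add_distrib]
    refine Finset.sum_congr rfl fun α _ => ?_
    rw [pd_pd_kelvin hD hh α]
    linear_combination (4 * i ^ 3 * coord α y * pd α h P
      + 8 * i ^ 3 * eta α * coord α y ^ 2 * oneAddEuler h P
      + 2 * i ^ 3 * coord α y * euler (pd α h) P
      + 2 * i ^ 3 * coord α y * pd α (oneAddEuler h) P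
      + 4 * i ^ 3 * eta α * coord α y ^ 2 * euler (oneAddEuler h) P) * eta_mul_self α
  have heuler (g : Spc → ℝ) : ∑ α, coord α y * pd α g P = lorentzSq y * euler g P :=
    sum_coord_mul hD _
  have heta : ∑ α : Fin 4, eta α * eta α = 4 := by simp [eta_mul_self]
  rw [hsum, heuler, heuler, sum_coord_mul hD, minkowski_coord_self, heta, euler_oneAddEuler hh]
  set B := ∑ α, coord α P * euler (pd α h) P
  unfold oneAddEuler
  linear_combination (4 * i ^ 2 * euler h P - 8 * i ^ 2 * (h P + euler h P) + 2 * i ^ 2 * B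
    - 2 * i ^ 2 * (2 * euler h P + B)) * hi

end Kelvin

/-! ### Asymptotics at null infinity -/

section RadialFunctions

variable {p : Spc} (α : Fin 4)

theorem abs_hatom_le_one (p : Spc) : |hatom p α| ≤ 1 := by
  refine Fin.cases (by simp [hatom]) (fun i => ?_) α
  have hi : |p.2 i| ≤ rr p := by simpa only [Real.norm_eq_abs, rr] using PiLp.norm_apply_le p.2 i
  simpa only [hatom, Fin.cases_succ, abs_div, rr, abs_norm] using
    div_le_one_of_le₀ hi (norm_nonneg _)

theorem continuous_rr : Continuous rr := continuous_snd.norm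

theorem hasPdAt_rr (hp : 0 < rr p) :
    HasPdAt α rr (hatom p α + if α = 0 then 1 else 0) p := by
  have hsq : rr = fun z => √(coord 1 z * coord 1 z + coord 2 z * coord 2 z + coord 3 z * coord 3 z)
  · funext z
    simp only [rr, coord_one, coord_two, coord_three, ← sq, ← norm_sq_eq_three,
      Real.sqrt_sq (norm_nonneg _)]
  have hpos : coord 1 p * coord 1 p + coord 2 p * coord 2 p + coord 3 p * coord 3 p = rr p ^ 2 := by
    simp only [rr, coord_one, coord_two, coord_three, ← sq, norm_sq_eq_three]
  have hmul (β : Fin 4) := (hasPdAt_coord α β p).mul (hasPdAt_coord α β p)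
  have h := (((hmul 1).add (hmul 2)).add (hmul 3)).scomp
    (Real.hasDerivAt_sqrt (hpos.trans_ne (by positivity)))
  rw [← hsq] at h
  refine ⟨h.differentiableAt, h.pd_eq.trans ?_⟩
  rw [hpos, Real.sqrt_sq hp.le]
  fin_cases α <;> simp [hatom, Fin.cases, Fin.induction, Fin.induction.go] <;> field_simp <;> ring

/-- The map `(t, x) ↦ (r - t, x / r)` into the domain of a radiation field. -/
def retarded (p : Spc) : Spc := (rr p - p.1, (rr p)⁻¹ • p.2)

theorem norm_inv_rr_smul (hp : 0 < rr p) : ‖(rr p)⁻¹ • p.2‖ = 1 :=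
  norm_smul_inv_norm (norm_pos_iff.1 hp)

end RadialFunctions

/-- The region `R₂ < r - t < R₁` (off the axis), a neighbourhood of part of null infinity. -/
def nullStrip (R₁ R₂ : ℝ) : Set Spc := {p | 0 < p.1 ∧ R₂ < rr p - p.1 ∧ rr p - p.1 < R₁ ∧ 0 < rr p}

/-- The filter `t → ∞` along `nullStrip R₁ R₂`. -/
def nullInfty (R₁ R₂ : ℝ) : Filter Spc := 𝓟 (nullStrip R₁ R₂) ⊓ comap Prod.fst atTop

/-- The rate `(1 + t)⁻¹`. -/
def timeDecay (p : Spc) : ℝ := (1 + p.1)⁻¹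

/-- The derivatives `∂_α + ω̂_α ∂_t`, tangential to the outgoing light cones. -/
def goodPd (α : Fin 4) (g : Spc → ℝ) (p : Spc) : ℝ := pd α g p + hatom p α * pd 0 g p

section NullInfinity

variable {R₁ R₂ : ℝ} {f : Spc → ℝ}

theorem timeDecay_pos {p : Spc} (hp : 0 < p.1) : 0 < timeDecay p := by
  rw [timeDecay]; positivity

theorem isBigO_timeDecay_one : timeDecay =O[𝓟 (nullStrip R₁ R₂)] (fun _ => (1 : ℝ)) := by
  refine Asymptotics.isBigO_principal.2 ⟨1, fun p hp => ?_⟩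
  rw [Real.norm_of_nonneg (timeDecay_pos hp.1).le, norm_one, mul_one]
  exact inv_le_one_of_one_le₀ (by linarith [hp.1])

theorem nullInfty_le : nullInfty R₁ R₂ ≤ 𝓟 (nullStrip R₁ R₂) := inf_le_left

theorem eventually_nullInfty_iff {P : Spc → Prop} :
    (∀ᶠ p in nullInfty R₁ R₂, P p) ↔ ∃ T, ∀ p ∈ nullStrip R₁ R₂, T ≤ p.1 → P p := by
  rw [nullInfty, inf_comm, eventually_inf_principal, eventually_comap, eventually_atTop]
  exact ⟨fun ⟨T, h⟩ => ⟨T, fun p hp hT => h p.1 hT p rfl hp⟩,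
    fun ⟨T, h⟩ => ⟨T, fun t ht p hpt hp => h p hp (hpt ▸ ht)⟩⟩

theorem isBounded_nullStrip_inter (R₁ R₂ T : ℝ) :
    Bornology.IsBounded (nullStrip R₁ R₂ ∩ {p | p.1 ≤ T}) := by
  refine ((Metric.isBounded_Icc 0 T).prod
    (Metric.isBounded_closedBall (x := 0) (r := T + R₁))).subset fun p hp => ?_
  obtain ⟨⟨h0, -, h1, -⟩, hT⟩ := hp
  refine ⟨⟨h0.le, hT⟩, mem_closedBall_zero_iff.2 ?_⟩
  change ‖p.2‖ ≤ T + R₁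
  change ‖p.2‖ - p.1 < R₁ at h1
  change p.1 ≤ T at hT
  linarith

theorem isBigO_nullStrip_of_nullInfty (n : ℕ)
    (hb : ∀ V, Bornology.IsBounded V → f =O[𝓟 V] (fun _ => (1 : ℝ)))
    (h : f =O[nullInfty R₁ R₂] (timeDecay ^ n)) : f =O[𝓟 (nullStrip R₁ R₂)] (timeDecay ^ n) := by
  obtain ⟨C, hC⟩ := h.bound
  obtain ⟨T, hT⟩ := eventually_nullInfty_iff.1 hC
  have hfar : f =O[𝓟 (nullStrip R₁ R₂ ∩ {p | T ≤ p.1})] (timeDecay ^ n) :=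
    Asymptotics.isBigO_principal.2 ⟨C, fun p hp => hT p hp.1 hp.2⟩
  have hone : (fun _ => (1 : ℝ)) =O[𝓟 (nullStrip R₁ R₂ ∩ {p | p.1 ≤ T})] (timeDecay ^ n) := by
    refine Asymptotics.isBigO_principal.2 ⟨(1 + T) ^ n, fun p ⟨⟨h0, _⟩, hpT⟩ => ?_⟩
    have hpos : 0 ≤ (timeDecay ^ n) p := pow_nonneg (timeDecay_pos h0).le n
    rw [norm_one, Real.norm_of_nonneg hpos, Pi.pow_apply, ← mul_pow, timeDecay, ← div_eq_mul_inv]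
    exact one_le_pow₀ ((one_le_div (by linarith)).2 (add_le_add_right hpT 1))
  refine (((hb _ (isBounded_nullStrip_inter R₁ R₂ T)).trans hone).sup hfar).mono ?_
  rw [sup_principal, principal_mono, ← inter_union_distrib_left]
  exact fun p hp => ⟨hp, le_total p.1 T⟩

theorem isBigO_sq_timeDecay : (timeDecay ^ 2) =O[nullInfty R₁ R₂] timeDecay := by
  rw [sq]
  exact isBigO_mul_one (Asymptotics.isBigO_refl _ _) (isBigO_timeDecay_one.mono nullInfty_le)

theorem isBigO_inv_rr : (fun p => (rr p)⁻¹) =O[nullInfty R₁ R₂] timeDecay := by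
  refine .of_bound 2 (eventually_nullInfty_iff.2 ⟨1 + 2 * |R₂|, fun p ⟨h0, h2, _, hr⟩ hT => ?_⟩)
  rw [Real.norm_of_nonneg (inv_pos.2 hr).le, Real.norm_of_nonneg (timeDecay_pos h0).le, timeDecay,
    ← div_eq_mul_inv, inv_le_comm₀ hr (by positivity), inv_div]
  linarith [neg_abs_le R₂]

theorem isBigO_hatom (α : Fin 4) (l : Filter Spc) : (hatom · α) =O[l] (fun _ => (1 : ℝ)) :=
  .of_bound 1 (.of_forall fun p => by simpa using abs_hatom_le_one α p)

theorem isBigO_comp_retarded (hf : Continuous f) :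
    (fun p => f (retarded p)) =O[nullInfty R₁ R₂] (fun _ => (1 : ℝ)) := by
  have hb : Bornology.IsBounded (retarded '' nullStrip R₁ R₂) := by
    refine ((Metric.isBounded_Icc R₂ R₁).prod
      (Metric.isBounded_closedBall (x := 0) (r := 1))).subset ?_
    rintro _ ⟨p, ⟨-, h2, h1, hr⟩, rfl⟩
    exact ⟨⟨h2.le, h1.le⟩, mem_closedBall_zero_iff.2 (norm_inv_rr_smul hr).le⟩
  obtain ⟨C, hC⟩ := Asymptotics.isBigO_principal.1 (isBigO_one_of_continuous hb hf)
  exact (Asymptotics.isBigO_principal.2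
    ⟨C, fun p hp => hC _ (mem_image_of_mem retarded hp)⟩).mono nullInfty_le

end NullInfinity

/-- The leading term `r⁻¹ F(r - t, x/r)` of a field with radiation field `F`. -/
def outgoingProfile {N : ℕ} (F : ℝ → EuclideanSpace ℝ (Fin 3) → Fin N → ℝ) (I : Fin N) (p : Spc) :
    ℝ :=
  (rr p)⁻¹ * F (rr p - p.1) ((rr p)⁻¹ • p.2) I

section OutgoingProfile

variable {N : ℕ} {F : ℝ → EuclideanSpace ℝ (Fin 3) → Fin N → ℝ}
  (hF : ContDiff ℝ 1 fun z : ℝ × EuclideanSpace ℝ (Fin 3) => F z.1 z.2) (I : Fin N) (α : Fin 4)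
  {R₁ R₂ : ℝ}

include hF

theorem hasPdAt_outgoingProfile {p : Spc} (hp : 0 < rr p) :
    HasPdAt α (outgoingProfile F I)
      ((rr p)⁻¹ * (hatom p α * pd 0 (fun z : Spc => F z.1 z.2 I) (retarded p))
        + (rr p)⁻¹ ^ 2 * (∑ i : Fin 3, ((if α = i.succ then 1 else 0)
            - (hatom p α + if α = 0 then 1 else 0) * hatom p i.succ)
              * pd i.succ (fun z : Spc => F z.1 z.2 I) (retarded p)
          - (hatom p α + if α = 0 then 1 else 0) * F (retarded p).1 (retarded p).2 I)) p := by
  have hFI : ContDiff ℝ 1 fun z : Spc => F z.1 z.2 I := contDiff_pi.1 hF I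
  have hr := hasPdAt_rr α hp
  have hrinv := hr.scomp (hasDerivAt_inv hp.ne')
  have hν : DifferentiableAt ℝ retarded p :=
    (hr.differentiableAt.sub differentiableAt_fst).prodMk
      (hrinv.differentiableAt.smul differentiableAt_snd)
  have hd (μ : Fin 4) : HasPdAt α (fun z => coord μ (retarded z)) (Fin.cases (hatom p α)
      (fun i => (rr p)⁻¹ * ((if α = i.succ then 1 else 0)
        - (hatom p α + if α = 0 then 1 else 0) * hatom p i.succ)) μ) p := by
    refine Fin.cases ?_ (fun i => ?_) μ
    · simpa [retarded] using hr.sub (hasPdAt_coord α 0 p)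
    · have h := hrinv.mul (hasPdAt_coord α i.succ p)
      refine ⟨h.differentiableAt, h.pd_eq.trans ?_⟩
      simp only [show hatom p i.succ = p.2 i / rr p from rfl, Fin.cases_succ, coord_succ]
      ring
  have h := hrinv.mul (HasPdAt.comp (hFI.differentiable one_ne_zero _) hν hd)
  refine ⟨h.differentiableAt, h.pd_eq.trans ?_⟩
  simp only [Fin.sum_univ_succ (n := 3), Fin.cases_zero, Fin.cases_succ, mul_assoc,
    ← Finset.mul_sum]
  ring

theorem isBigO_outgoingProfile : outgoingProfile F I =O[nullInfty R₁ R₂] timeDecay :=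
  isBigO_mul_one isBigO_inv_rr
    (isBigO_comp_retarded (f := fun z => F z.1 z.2 I) (contDiff_pi.1 hF I).continuous)

theorem isBigO_pd_outgoingProfile_sub :
    (fun p => pd α (outgoingProfile F I) p
      - (rr p)⁻¹ * (hatom p α * pd 0 (fun z : Spc => F z.1 z.2 I) (retarded p)))
      =O[nullInfty R₁ R₂] (timeDecay ^ 2) := by
  have hFI : ContDiff ℝ 1 fun z : Spc => F z.1 z.2 I := contDiff_pi.1 hF I
  have hconst (a : ℝ) : (fun _ => a) =O[nullInfty R₁ R₂] fun _ => (1 : ℝ) :=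
    Asymptotics.isBigO_const_const a one_ne_zero _
  have hrad := (isBigO_hatom α (nullInfty R₁ R₂)).add (hconst (if α = 0 then 1 else 0))
  have hang (i : Fin 3) := isBigO_mul_one ((hconst (if α = i.succ then 1 else 0)).sub
    (isBigO_mul_one hrad (isBigO_hatom i.succ _)))
    (isBigO_comp_retarded (continuous_pd hFI i.succ))
  have hrest := (Asymptotics.IsBigO.fun_sum (s := Finset.univ) fun i _ => hang i).sub
    (isBigO_mul_one hrad (isBigO_comp_retarded hFI.continuous))
  refine (isBigO_mul_one (isBigO_inv_rr.pow 2) hrest).congr'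
    (eventually_nullInfty_iff.2 ⟨0, fun p hp _ => ?_⟩) .rfl
  simp only [(hasPdAt_outgoingProfile hF I α hp.2.2.2).pd_eq, add_sub_cancel_left]

theorem isBigO_pd_outgoingProfile :
    pd α (outgoingProfile F I) =O[nullInfty R₁ R₂] timeDecay := by
  have hlead := isBigO_mul_one (isBigO_inv_rr (R₁ := R₁) (R₂ := R₂))
    (isBigO_mul_one (isBigO_hatom α _)
      (isBigO_comp_retarded (continuous_pd (contDiff_pi.1 hF I : ContDiff ℝ 1 fun z : Spc =>
        F z.1 z.2 I) 0)))
  simpa using ((isBigO_pd_outgoingProfile_sub hF I α).trans isBigO_sq_timeDecay).add hlead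

theorem isBigO_goodPd_outgoingProfile :
    goodPd α (outgoingProfile F I) =O[nullInfty R₁ R₂] (timeDecay ^ 2) := by
  refine ((isBigO_pd_outgoingProfile_sub hF I α).add (isBigO_mul_one
    (isBigO_pd_outgoingProfile_sub hF I 0) (isBigO_hatom α _))).congr_left fun p => ?_
  simp only [goodPd, show hatom p 0 = -1 from rfl]
  ring

end OutgoingProfile

section CommutingFields

variable {f g : Spc → ℝ} {L : (Spc → ℝ) → Spc → ℝ}

theorem abs_le_Z1sum (g : Spc → ℝ) (p : Spc) : |g p| ≤ Z1sum g p :=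
  le_add_of_nonneg_right (List.sum_nonneg (by simp))

theorem abs_le_Z1sum_of_mem_ZList (hL : L ∈ ZList) (g : Spc → ℝ) (p : Spc) :
    |L g p| ≤ Z1sum g p :=
  (List.single_le_sum (l := ZList.map fun Z => |Z g p|) (by simp) _
    (List.mem_map_of_mem hL)).trans (le_add_of_nonneg_left (abs_nonneg _))

theorem pd_mem_ZList (α : Fin 4) : pd α ∈ ZList := by
  fin_cases α <;> simp [ZList]

theorem exists_coeff_of_mem_ZList (hL : L ∈ ZList) : ∃ c : Fin 4 → Spc → ℝ,
    (∀ α, Continuous (c α)) ∧ ∀ g p, L g p = ∑ α, c α p * pd α g p := by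
  have hpd (β : Fin 4) : ∃ c : Fin 4 → Spc → ℝ,
      (∀ α, Continuous (c α)) ∧ ∀ g p, pd β g p = ∑ α, c α p * pd α g p :=
    ⟨fun α _ => if α = β then 1 else 0, fun _ => continuous_const, by simp⟩
  have hSc : ∃ c : Fin 4 → Spc → ℝ,
      (∀ α, Continuous (c α)) ∧ ∀ g p, Sc g p = ∑ α, c α p * pd α g p :=
    ⟨fun α => coord α, fun α => (coord α).continuous, by simp [Sc, dt, dxi, Fin.sum_univ_succ]⟩
  have hRot (i j : Fin 3) : ∃ c : Fin 4 → Spc → ℝ,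
      (∀ α, Continuous (c α)) ∧ ∀ g p, Rot i j g p = ∑ α, c α p * pd α g p :=
    ⟨fun α p => (if α = j.succ then 1 else 0) * p.2 i - (if α = i.succ then 1 else 0) * p.2 j,
      fun α => by fun_prop, by simp [Rot, dxi, sub_mul, Finset.sum_sub_distrib]⟩
  have hLor (i : Fin 3) : ∃ c : Fin 4 → Spc → ℝ,
      (∀ α, Continuous (c α)) ∧ ∀ g p, Lor i g p = ∑ α, c α p * pd α g p :=
    ⟨fun α p => (if α = 0 then 1 else 0) * p.2 i + (if α = i.succ then 1 else 0) * p.1,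
      fun α => by fun_prop,
      by simp [Lor, dt, dxi, add_mul, Finset.sum_add_distrib]⟩
  simp only [ZList, List.mem_cons, List.not_mem_nil, or_false] at hL
  rcases hL with rfl | rfl | rfl | rfl | rfl | rfl | rfl | rfl | rfl | rfl | rfl
  exacts [hpd 0, hpd 1, hpd 2, hpd 3, hSc, hRot 0 1, hRot 0 2, hRot 1 2, hLor 0, hLor 1, hLor 2]

theorem continuous_of_mem_ZList (hL : L ∈ ZList) (hg : ContDiff ℝ 1 g) : Continuous (L g) := by
  obtain ⟨c, hc, hLc⟩ := exists_coeff_of_mem_ZList hL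
  rw [show L g = fun p => ∑ α, c α p * pd α g p from funext (hLc g)]
  exact continuous_finsetSum _ fun α _ => (hc α).mul (continuous_pd hg α)

theorem sub_of_mem_ZList (hL : L ∈ ZList) {p : Spc} (hf : DifferentiableAt ℝ f p)
    (hg : DifferentiableAt ℝ g p) : L (f - g) p = L f p - L g p := by
  obtain ⟨c, -, hLc⟩ := exists_coeff_of_mem_ZList hL
  have hpd (α : Fin 4) : pd α (f - g) p = pd α f p - pd α g p :=
    ((HasPdAt.of_differentiableAt hf).sub (HasPdAt.of_differentiableAt hg)).pd_eq
  simp only [hLc, hpd, mul_sub, Finset.sum_sub_distrib]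

theorem congr_of_mem_ZList (hL : L ∈ ZList) {p : Spc} (h : f =ᶠ[𝓝 p] g) : L f p = L g p := by
  obtain ⟨c, -, hLc⟩ := exists_coeff_of_mem_ZList hL
  simp only [hLc, pd_congr h]

end CommutingFields

namespace IsRadiationField

variable {N : ℕ} {u v : Fin N → Spc → ℝ} {F F' : ℝ → EuclideanSpace ℝ (Fin 3) → Fin N → ℝ}
  (hF : IsRadiationField u F) (I : Fin N) (R₁ R₂ : ℝ)

include hF

theorem isBigO_Z1sum : Z1sum (radProfile u F I) =O[nullInfty R₁ R₂] (timeDecay ^ 2) := by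
  obtain ⟨-, -, C, c, hC, -, h⟩ := hF
  refine .of_bound (C * (4 * √(1 + (|R₁| + |R₂|) ^ 2)))
    (eventually_nullInfty_iff.2 ⟨max (2 * c) (1 + 2 * |R₂|), fun p ⟨h0, h2, h1, _⟩ hT => ?_⟩)
  have hc := (le_max_left _ _).trans hT
  have hR := (le_max_right _ _).trans hT
  have hq : (rr p - p.1) ^ 2 ≤ (|R₁| + |R₂|) ^ 2 :=
    sq_le_sq' (by linarith [neg_abs_le R₂, abs_nonneg R₁])
      (by linarith [le_abs_self R₁, abs_nonneg R₂])
  have ht : (p.1 ^ 2)⁻¹ ≤ 4 * timeDecay p ^ 2 := by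
    rw [timeDecay, inv_pow, ← div_eq_mul_inv, inv_eq_one_div,
      div_le_div_iff₀ (by positivity) (by positivity)]
    nlinarith [abs_nonneg R₂]
  have hnn (J : Fin N) : 0 ≤ Z1sum (radProfile u F J) p :=
    (abs_nonneg _).trans (abs_le_Z1sum _ p)
  rw [Real.norm_of_nonneg (hnn I), Pi.pow_apply, Real.norm_of_nonneg (sq_nonneg _)]
  calc Z1sum (radProfile u F I) p ≤ ∑ J, Z1sum (radProfile u F J) p :=
        Finset.single_le_sum (fun J _ => hnn J) (Finset.mem_univ I)
    _ ≤ C * (p.1 ^ 2)⁻¹ * √(1 + (rr p - p.1) ^ 2) :=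
        h p (by linarith) (by linarith [neg_abs_le R₂, abs_nonneg R₂])
    _ ≤ C * (4 * timeDecay p ^ 2) * √(1 + (|R₁| + |R₂|) ^ 2) := by gcongr
    _ = C * (4 * √(1 + (|R₁| + |R₂|) ^ 2)) * timeDecay p ^ 2 := by ring

theorem isBigO_radProfile : radProfile u F I =O[nullInfty R₁ R₂] (timeDecay ^ 2) :=
  (Asymptotics.IsBigO.of_norm_le fun p => abs_le_Z1sum _ p).trans (hF.isBigO_Z1sum I R₁ R₂)

theorem isBigO_radProfile_of_mem_ZList {L : (Spc → ℝ) → Spc → ℝ} (hL : L ∈ ZList) :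
    L (radProfile u F I) =O[nullInfty R₁ R₂] (timeDecay ^ 2) :=
  (Asymptotics.IsBigO.of_norm_le fun p => abs_le_Z1sum_of_mem_ZList hL _ p).trans
    (hF.isBigO_Z1sum I R₁ R₂)

variable {I} (hu : ContDiff ℝ 1 (u I))

include hu

theorem hasPdAt_radProfile (α : Fin 4) {p : Spc} (hp : 0 < rr p) :
    HasPdAt α (radProfile u F I) (pd α (u I) p - pd α (outgoingProfile F I) p) p :=
  .sub (.of_differentiableAt (hu.differentiable one_ne_zero p))
    (.of_differentiableAt (hasPdAt_outgoingProfile hF.1 I α hp).differentiableAt)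

theorem isBigO : u I =O[𝓟 (nullStrip R₁ R₂)] timeDecay := by
  have h : u I =O[nullInfty R₁ R₂] timeDecay :=
    (((hF.isBigO_radProfile I R₁ R₂).trans isBigO_sq_timeDecay).add
      (isBigO_outgoingProfile hF.1 I)).congr_left fun p => sub_add_cancel _ _
  simpa only [pow_one] using isBigO_nullStrip_of_nullInfty 1
    (fun V hV => isBigO_one_of_continuous hV hu.continuous) (by rwa [pow_one])

theorem isBigO_pd (α : Fin 4) : pd α (u I) =O[𝓟 (nullStrip R₁ R₂)] timeDecay := by
  have h : pd α (u I) =O[nullInfty R₁ R₂] timeDecay := by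
    refine (((hF.isBigO_radProfile_of_mem_ZList I R₁ R₂ (pd_mem_ZList α)).trans
      isBigO_sq_timeDecay).add (isBigO_pd_outgoingProfile hF.1 I α)).congr'
      (eventually_nullInfty_iff.2 ⟨0, fun p hp _ => ?_⟩) .rfl
    simp only [(hF.hasPdAt_radProfile hu α hp.2.2.2).pd_eq, sub_add_cancel]
  simpa only [pow_one] using isBigO_nullStrip_of_nullInfty 1
    (fun V hV => isBigO_one_of_continuous hV (continuous_pd hu α)) (by rwa [pow_one])

theorem isBigO_goodPd (α : Fin 4) :
    goodPd α (u I) =O[𝓟 (nullStrip R₁ R₂)] (timeDecay ^ 2) := by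
  refine isBigO_nullStrip_of_nullInfty 2 (fun V hV => ?_) ?_
  · exact (isBigO_one_of_continuous hV (continuous_pd hu α)).add (isBigO_mul_one
      (isBigO_hatom α _) (isBigO_one_of_continuous hV (continuous_pd hu 0)))
  have hpd (β : Fin 4) := hF.isBigO_radProfile_of_mem_ZList I R₁ R₂ (pd_mem_ZList β)
  refine (((hpd α).add (isBigO_mul_one (hpd 0) (isBigO_hatom α _))).add
    (isBigO_goodPd_outgoingProfile hF.1 I α)).congr'
      (eventually_nullInfty_iff.2 ⟨0, fun p hp _ => ?_⟩) .rfl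
  simp only [goodPd, (hF.hasPdAt_radProfile hu _ hp.2.2.2).pd_eq]
  ring

variable {R₂} (hF' : IsRadiationField v F') (hv : ContDiff ℝ 1 (v I))
  (hrad : ∀ (q : ℝ) (ω : EuclideanSpace ℝ (Fin 3)), ‖ω‖ = 1 → R₂ < q → F q ω = F' q ω)

omit hF hu in
include hrad in
theorem sub_eventuallyEq_radProfile_sub {p : Spc} (hp : p ∈ nullStrip R₁ R₂) :
    (u - v) I =ᶠ[𝓝 p] radProfile u F I - radProfile v F' I := by
  have hr : ∀ᶠ z in 𝓝 p, 0 < rr z := continuous_rr.continuousAt.eventually (lt_mem_nhds hp.2.2.2)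
  have hq : ∀ᶠ z in 𝓝 p, R₂ < rr z - z.1 :=
    (continuous_rr.sub continuous_fst).continuousAt.eventually (lt_mem_nhds hp.2.1)
  filter_upwards [hr, hq] with z hzr hzq
  simp only [Pi.sub_apply, radProfile, hrad _ _ (norm_inv_rr_smul hzr) hzq,
    sub_sub_sub_cancel_right]

include hF' hv hrad

theorem isBigO_sub : (u - v) I =O[𝓟 (nullStrip R₁ R₂)] (timeDecay ^ 2) := by
  refine isBigO_nullStrip_of_nullInfty 2
    (fun V hV => isBigO_one_of_continuous hV (hu.sub hv).continuous) ?_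
  exact ((hF.isBigO_radProfile I R₁ R₂).sub (hF'.isBigO_radProfile I R₁ R₂)).congr'
    (eventually_nullInfty_iff.2 ⟨0, fun p hp _ =>
      (sub_eventuallyEq_radProfile_sub R₁ hrad hp).symm.eq_of_nhds⟩) .rfl

theorem isBigO_sub_of_mem_ZList {L : (Spc → ℝ) → Spc → ℝ} (hL : L ∈ ZList) :
    L ((u - v) I) =O[𝓟 (nullStrip R₁ R₂)] (timeDecay ^ 2) := by
  refine isBigO_nullStrip_of_nullInfty 2
    (fun V hV => isBigO_one_of_continuous hV (continuous_of_mem_ZList hL (hu.sub hv))) ?_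
  refine ((hF.isBigO_radProfile_of_mem_ZList I R₁ R₂ hL).sub
    (hF'.isBigO_radProfile_of_mem_ZList I R₁ R₂ hL)).congr'
    (eventually_nullInfty_iff.2 ⟨0, fun p hp _ => ?_⟩) .rfl
  rw [congr_of_mem_ZList hL (sub_eventuallyEq_radProfile_sub R₁ hrad hp),
    sub_of_mem_ZList hL (hF.hasPdAt_radProfile hu 0 hp.2.2.2).differentiableAt
      (hF'.hasPdAt_radProfile hv 0 hp.2.2.2).differentiableAt]

end IsRadiationField

/-! ### Null forms -/

section CubicRemainder

variable {E F : Type*} [NormedAddCommGroup E] [NormedSpace ℝ E] [NormedAddCommGroup F]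
  [NormedSpace ℝ F] {R : E → F}

theorem deriv_deriv_eq_zero_of_isLittleO {f : ℝ → F} (hf : ContDiff ℝ 2 f)
    (h : f =o[𝓝 0] fun t : ℝ => t ^ 2) : deriv (deriv f) 0 = 0 := by
  have hO : f =O[𝓝 0] fun t : ℝ => ‖t - 0‖ ^ 2 := by simpa using h.isBigO
  have h0 : f 0 = 0 := hO.eq_zero_of_norm_pow two_ne_zero
  have h1 : deriv f 0 = 0 := by simpa using (hO.hasFDerivAt one_lt_two).hasDerivAt.deriv
  have htaylor (t : ℝ) :
      taylorWithinEval f 2 univ 0 t = t ^ 2 • (2⁻¹ : ℝ) • deriv (deriv f) 0 := by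
    simp [taylor_within_apply, Finset.sum_range_succ, iteratedDerivWithin_univ,
      iteratedDeriv_succ, h0, h1, smul_smul, mul_comm, -taylorWithinEval_succ]
  have hsq : (fun t : ℝ => t ^ 2 • (2⁻¹ : ℝ) • deriv (deriv f) 0) =o[𝓝 0] fun t : ℝ => t ^ 2 := by
    refine (h.sub (taylor_isLittleO_univ (x₀ := 0) (n := 2) hf |>.congr_right fun t => by
      rw [sub_zero])).congr_left fun t => ?_
    rw [sub_sub_cancel, htaylor]
  have hlim : Tendsto (fun t : ℝ => (t ^ 2)⁻¹ • t ^ 2 • (2⁻¹ : ℝ) • deriv (deriv f) 0)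
      (𝓝[≠] 0) (𝓝 0) := (hsq.mono nhdsWithin_le_nhds).tendsto_inv_smul_nhds_zero
  have hconst : (2⁻¹ : ℝ) • deriv (deriv f) 0 = 0 := by
    refine tendsto_nhds_unique_of_eventuallyEq tendsto_const_nhds hlim ?_
    filter_upwards [self_mem_nhdsWithin] with t (ht : t ≠ 0)
    rw [inv_smul_smul₀ (pow_ne_zero 2 ht)]
  simpa using hconst

theorem fderiv_fderiv_apply_self_eq_zero_of_isBigO (hR : ContDiff ℝ 2 R)
    (h : R =O[𝓝 0] fun z => ‖z‖ ^ 3) (e : E) : fderiv ℝ (fderiv ℝ R) 0 e e = 0 := by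
  have hline (t : ℝ) : HasDerivAt (fun t : ℝ => t • e) e t := by
    simpa using (hasDerivAt_id t).smul_const e
  have hd : deriv (fun t : ℝ => R (t • e)) = fun t => fderiv ℝ R (t • e) e := funext fun t =>
    ((hR.differentiable two_ne_zero _).hasFDerivAt.comp_hasDerivAt t (hline t)).deriv
  have hdd : HasDerivAt (fun t : ℝ => fderiv ℝ R (t • e) e) (fderiv ℝ (fderiv ℝ R) 0 e e) 0 := by
    have hfd : HasFDerivAt (fderiv ℝ R) (fderiv ℝ (fderiv ℝ R) 0) ((0 : ℝ) • e) := by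
      rw [zero_smul]
      exact ((hR.fderiv_right (m := 1) (by norm_num)).differentiable one_ne_zero 0).hasFDerivAt
    exact (ContinuousLinearMap.apply ℝ F e).hasFDerivAt.comp_hasDerivAt 0
      (hfd.comp_hasDerivAt 0 (hline 0))
  rw [← hdd.deriv, ← hd]
  refine deriv_deriv_eq_zero_of_isLittleO (hR.comp (contDiff_id.smul contDiff_const)) ?_
  have hlim : Tendsto (fun t : ℝ => t • e) (𝓝 0) (𝓝 0) := by
    simpa using (hline 0).continuousAt.tendsto
  refine (h.comp_tendsto hlim).trans_isLittleO ?_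
  refine ((Asymptotics.isLittleO_pow_pow (𝕜 := ℝ) (by norm_num : 2 < 3)).norm_left.const_mul_left
    (‖e‖ ^ 3)).congr_left fun t => ?_
  simp [norm_smul, mul_pow, mul_comm]

theorem fderiv_fderiv_eq_zero_of_isBigO (hR : ContDiff ℝ 2 R)
    (h : R =O[𝓝 0] fun z => ‖z‖ ^ 3) : fderiv ℝ (fderiv ℝ R) 0 = 0 := by
  have hsymm (a b : E) : fderiv ℝ (fderiv ℝ R) 0 a b = fderiv ℝ (fderiv ℝ R) 0 b a :=
    hR.contDiffAt.isSymmSndFDerivAt (by simp) a b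
  ext a b
  have hpolar := fderiv_fderiv_apply_self_eq_zero_of_isBigO hR h (a + b)
  simp only [map_add, add_apply, hsymm b a, zero_add, add_zero,
    fderiv_fderiv_apply_self_eq_zero_of_isBigO hR h] at hpolar
  rw [← two_smul ℝ] at hpolar
  exact (smul_eq_zero.1 hpolar).resolve_left two_ne_zero

theorem exists_norm_sub_le_of_isBigO_cube [FiniteDimensional ℝ E] (hR : ContDiff ℝ 3 R)
    (h : R =O[𝓝 0] fun z => ‖z‖ ^ 3) (M : ℝ) :
    ∃ L, 0 ≤ L ∧ ∀ ρ ≤ M, ∀ z z', ‖z‖ ≤ ρ → ‖z'‖ ≤ ρ →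
      ‖R z - R z'‖ ≤ L * ρ ^ 2 * ‖z - z'‖ := by
  have hR' : ContDiff ℝ 2 (fderiv ℝ R) := hR.fderiv_right (by norm_num)
  have hR'' : ContDiff ℝ 1 (fderiv ℝ (fderiv ℝ R)) := hR'.fderiv_right (by norm_num)
  have h₁ : fderiv ℝ R 0 = 0 :=
    (Asymptotics.IsBigO.hasFDerivAt (n := 3) (by simpa using h) (by norm_num)).fderiv
  have h₂ := fderiv_fderiv_eq_zero_of_isBigO (hR.of_le (by norm_num)) h
  obtain ⟨L, hL⟩ := (hR''.contDiffOn (s := Metric.closedBall 0 M)).exists_lipschitzOnWith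
    one_ne_zero (convex_closedBall _ _) (isCompact_closedBall _ _)
  refine ⟨L, L.2, fun ρ hρ z z' hz hz' => ?_⟩
  have hρ₀ : 0 ≤ ρ := (norm_nonneg z).trans hz
  have hball {y : E} (hy : y ∈ Metric.closedBall 0 ρ) : ‖y‖ ≤ ρ := mem_closedBall_zero_iff.1 hy
  have hzero : (0 : E) ∈ Metric.closedBall 0 ρ := Metric.mem_closedBall_self hρ₀
  have hD2 {y : E} (hy : y ∈ Metric.closedBall 0 ρ) : ‖fderiv ℝ (fderiv ℝ R) y‖ ≤ L * ρ := by
    have hLip := hL.norm_sub_le (Metric.closedBall_subset_closedBall hρ hy)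
      (Metric.closedBall_subset_closedBall hρ hzero)
    rw [h₂, sub_zero, sub_zero] at hLip
    exact hLip.trans (mul_le_mul_of_nonneg_left (hball hy) L.2)
  have hD1 {y : E} (hy : y ∈ Metric.closedBall 0 ρ) : ‖fderiv ℝ R y‖ ≤ L * ρ ^ 2 := by
    have hmean := (convex_closedBall (0 : E) ρ).norm_image_sub_le_of_norm_fderiv_le
      (fun x _ => hR'.differentiable two_ne_zero x) (fun x hx => hD2 hx) hzero hy
    rw [h₁, sub_zero, sub_zero] at hmean
    calc ‖fderiv ℝ R y‖ ≤ L * ρ * ‖y‖ := hmean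
      _ ≤ L * ρ * ρ := mul_le_mul_of_nonneg_left (hball hy) (mul_nonneg L.2 hρ₀)
      _ = L * ρ ^ 2 := by ring
  exact (convex_closedBall (0 : E) ρ).norm_image_sub_le_of_norm_fderiv_le
    (fun x _ => hR.differentiable three_ne_zero x) (fun x hx => hD1 hx)
    (mem_closedBall_zero_iff.2 hz') (mem_closedBall_zero_iff.2 hz)

end CubicRemainder

section QuadraticPart

variable {N : ℕ}

/-- A covector `c` of size at most `B` whose part tangent to the light cone, with null covector
`h` normalized by `h 0 = -1`, is of size at most `B'`. -/
structure IsNullBounded (h : Fin 4 → ℝ) (B B' : ℝ) (c : Fin 4 → ℝ) : Prop where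
  abs_le : ∀ α, |c α| ≤ B
  abs_tangential_le : ∀ α, |c α + h α * c 0| ≤ B'

theorem IsNullBounded.mono {h c : Fin 4 → ℝ} {B B' D D' : ℝ} (hc : IsNullBounded h B B' c)
    (hB : B ≤ D) (hB' : B' ≤ D') : IsNullBounded h D D' c :=
  ⟨fun α => (hc.abs_le α).trans hB, fun α => (hc.abs_tangential_le α).trans hB'⟩

theorem abs_sum_mul_mul_le_of_null {a : Fin 4 → Fin 4 → ℝ} {h b c : Fin 4 → ℝ}
    {M W W' B B' : ℝ} (ha : ∀ α β, |a α β| ≤ M) (hnull : ∑ α, ∑ β, a α β * h α * h β = 0)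
    (hh : ∀ α, |h α| ≤ 1) (hc : IsNullBounded h W W' c) (hb : IsNullBounded h B B' b) :
    |∑ α, ∑ β, a α β * c α * b β| ≤ 16 * (M * (W * B' + W' * B)) := by
  have hM : 0 ≤ M := (abs_nonneg _).trans (ha 0 0)
  have hW : 0 ≤ W := (abs_nonneg _).trans (hc.abs_le 0)
  have hW' : 0 ≤ W' := (abs_nonneg _).trans (hc.abs_tangential_le 0)
  have hsplit : ∑ α, ∑ β, a α β * c α * b β = ∑ α, ∑ β, a α β *
      (-(h α * c 0) * (b β + h β * b 0) + (c α + h α * c 0) * b β) := by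
    rw [← sub_eq_zero, ← mul_zero (c 0 * b 0), ← hnull]
    simp only [Finset.mul_sum, ← Finset.sum_sub_distrib]
    exact Finset.sum_congr rfl fun α _ => Finset.sum_congr rfl fun β _ => by ring
  have hterm (α β : Fin 4) : |a α β * (-(h α * c 0) * (b β + h β * b 0) +
      (c α + h α * c 0) * b β)| ≤ M * (W * B' + W' * B) := by
    have hhc : |h α * c 0| ≤ W := by
      rw [abs_mul]
      exact (mul_le_of_le_one_left (abs_nonneg _) (hh α)).trans (hc.abs_le 0)
    rw [abs_mul]
    refine mul_le_mul (ha α β) ((abs_add_le _ _).trans (add_le_add ?_ ?_)) (abs_nonneg _) hM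
    · rw [abs_mul, abs_neg]
      exact mul_le_mul hhc (hb.abs_tangential_le β) (abs_nonneg _) hW
    · rw [abs_mul]
      exact mul_le_mul (hc.abs_tangential_le α) (hb.abs_le β) (abs_nonneg _) hW'
  calc |∑ α, ∑ β, a α β * c α * b β| ≤ ∑ _α : Fin 4, ∑ _β : Fin 4, M * (W * B' + W' * B) := by
        rw [hsplit]
        exact (Finset.abs_sum_le_sum_abs _ _).trans (Finset.sum_le_sum fun α _ =>
          (Finset.abs_sum_le_sum_abs _ _).trans (Finset.sum_le_sum fun β _ => hterm α β))
    _ = 16 * (M * (W * B' + W' * B)) := by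
        simp only [Finset.sum_const, Finset.card_univ, Fintype.card_fin, nsmul_eq_mul]
        push_cast
        ring

/-- The quadratic part `Σ A_{I,JK}^{αβ} v_α^J v_β^K` of the nonlinearity. -/
def quadPart (A : Fin N → Fin N → Fin N → Fin 4 → Fin 4 → ℝ)
    (z : (Fin N → ℝ) × (Fin N → Fin 4 → ℝ)) (I : Fin N) : ℝ :=
  ∑ J, ∑ K, ∑ α, ∑ β, A I J K α β * z.2 J α * z.2 K β

variable {Q : ((Fin N → ℝ) × (Fin N → Fin 4 → ℝ)) → Fin N → ℝ}
  {A : Fin N → Fin N → Fin N → Fin 4 → Fin 4 → ℝ}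

theorem HasNullForm.isBigO_sub_quadPart (hQ : HasNullForm Q A) :
    (Q - quadPart A) =O[𝓝 0] fun z => ‖z‖ ^ 3 := by
  obtain ⟨-, ⟨C, ε, hC, hε, hrem⟩, -⟩ := hQ
  refine .of_bound (C * 8) ?_
  filter_upwards [Metric.ball_mem_nhds 0 (half_pos hε)] with z hz
  rw [mem_ball_zero_iff] at hz
  have hsum : ‖z.1‖ + ‖z.2‖ ≤ 2 * ‖z‖ := by linarith [norm_fst_le z, norm_snd_le z]
  rw [norm_pow, norm_norm]
  refine (pi_norm_le_iff_of_nonneg (by positivity)).2 fun I => ?_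
  calc ‖(Q - quadPart A) z I‖ ≤ C * (‖z.1‖ + ‖z.2‖) ^ 3 := hrem z (by linarith) I
    _ ≤ C * (2 * ‖z‖) ^ 3 := by gcongr
    _ = C * 8 * ‖z‖ ^ 3 := by ring

theorem contDiff_quadPart (A : Fin N → Fin N → Fin N → Fin 4 → Fin 4 → ℝ) :
    ContDiff ℝ (⊤ : ℕ∞) (quadPart A) := by
  unfold quadPart
  fun_prop

theorem quadPart_sub_quadPart (z y : (Fin N → ℝ) × (Fin N → Fin 4 → ℝ)) (I : Fin N) :
    quadPart A z I - quadPart A y I =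
      ∑ J, ∑ K, ((∑ α, ∑ β, A I J K α β * (z - y).2 J α * z.2 K β) +
        ∑ α, ∑ β, A I J K β α * (z - y).2 K α * y.2 J β) := by
  simp only [quadPart, ← Finset.sum_sub_distrib]
  refine Finset.sum_congr rfl fun J _ => Finset.sum_congr rfl fun K _ => ?_
  rw [Finset.sum_comm (f := fun α β => A I J K β α * (z - y).2 K α * y.2 J β)]
  simp only [← Finset.sum_add_distrib, Prod.snd_sub, Pi.sub_apply]
  exact Finset.sum_congr rfl fun α _ => Finset.sum_congr rfl fun β _ => by ring

theorem abs_quadPart_sub_quadPart_le {h : Fin 4 → ℝ} {W W' B B' : ℝ} (hh : ∀ α, |h α| ≤ 1)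
    (hnull : ∀ I J K, ∑ α, ∑ β, A I J K α β * h α * h β = 0)
    {z y : (Fin N → ℝ) × (Fin N → Fin 4 → ℝ)} (hz : ∀ J, IsNullBounded h B B' (z.2 J))
    (hy : ∀ J, IsNullBounded h B B' (y.2 J))
    (hzy : ∀ J, IsNullBounded h W W' ((z - y).2 J)) (I : Fin N) :
    |quadPart A z I - quadPart A y I| ≤ N ^ 2 * (32 * (‖A‖ * (W * B' + W' * B))) := by
  have hA (J K : Fin N) (α β : Fin 4) : |A I J K α β| ≤ ‖A‖ :=
    (norm_le_pi_norm _ β).trans <| (norm_le_pi_norm _ α).trans <| (norm_le_pi_norm _ K).trans <|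
      (norm_le_pi_norm _ J).trans <| norm_le_pi_norm A I
  have hnull' (J K : Fin N) : ∑ α, ∑ β, A I J K β α * h α * h β = 0 := by
    rw [← hnull I J K, Finset.sum_comm]
    exact Finset.sum_congr rfl fun α _ => Finset.sum_congr rfl fun β _ => by ring
  have hterm (J K : Fin N) : |(∑ α, ∑ β, A I J K α β * (z - y).2 J α * z.2 K β) +
      ∑ α, ∑ β, A I J K β α * (z - y).2 K α * y.2 J β| ≤ 32 * (‖A‖ * (W * B' + W' * B)) := by
    refine (abs_add_le _ _).trans ?_
    linarith [abs_sum_mul_mul_le_of_null (hA J K) (hnull I J K) hh (hzy J) (hz K),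
      abs_sum_mul_mul_le_of_null (fun α β => hA J K β α) (hnull' J K) hh (hzy K) (hy J)]
  rw [quadPart_sub_quadPart]
  calc _ ≤ ∑ _J : Fin N, ∑ _K : Fin N, 32 * (‖A‖ * (W * B' + W' * B)) :=
        (Finset.abs_sum_le_sum_abs _ _).trans (Finset.sum_le_sum fun J _ =>
          (Finset.abs_sum_le_sum_abs _ _).trans (Finset.sum_le_sum fun K _ => hterm J K))
    _ = N ^ 2 * (32 * (‖A‖ * (W * B' + W' * B))) := by
        simp only [Finset.sum_const, Finset.card_univ, Fintype.card_fin, nsmul_eq_mul]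
        ring

theorem HasNullForm.sum_mul_hatom_mul_hatom (hQ : HasNullForm Q A) {p : Spc} (hp : 0 < rr p)
    (I J K : Fin N) : ∑ α, ∑ β, A I J K α β * hatom p α * hatom p β = 0 := by
  have hat (α : Fin 4) : hatSph ((rr p)⁻¹ • p.2) α = hatom p α := by
    refine Fin.cases rfl (fun i => ?_) α
    simp [hatSph, hatom, div_eq_inv_mul]
  simpa only [hat] using hQ.2.2 I J K _ (norm_inv_rr_smul hp)

theorem HasNullForm.exists_abs_sub_le (hQ : HasNullForm Q A) {M : ℝ} (hM : 0 ≤ M) :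
    ∃ C, 0 ≤ C ∧ ∀ p : Spc, 0 < rr p → ∀ s ∈ Icc 0 1, ∀ W W' : ℝ,
      ∀ z y : (Fin N → ℝ) × (Fin N → Fin 4 → ℝ), ‖z‖ ≤ M * s → ‖y‖ ≤ M * s →
      (∀ J, IsNullBounded (hatom p) (M * s) (M * s ^ 2) (z.2 J)) →
      (∀ J, IsNullBounded (hatom p) (M * s) (M * s ^ 2) (y.2 J)) → ‖z - y‖ ≤ W →
      (∀ J, IsNullBounded (hatom p) W W' ((z - y).2 J)) →
      ∀ I, |Q z I - Q y I| ≤ C * (s * W' + s ^ 2 * W) := by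
  obtain ⟨L, hL, hrem⟩ := exists_norm_sub_le_of_isBigO_cube
    (contDiff_infty.1 (hQ.1.sub (contDiff_quadPart A)) 3) hQ.isBigO_sub_quadPart M
  refine ⟨L * M ^ 2 + N ^ 2 * (32 * (‖A‖ * M)), by positivity,
    fun p hp s hs W W' z y hz hy hz' hy' hzy hzy' I => ?_⟩
  have hs₀ := hs.1
  have hW' : 0 ≤ W' := (abs_nonneg _).trans ((hzy' I).abs_tangential_le 0)
  have hcubic : |(Q - quadPart A) z I - (Q - quadPart A) y I| ≤ L * (M * s) ^ 2 * W :=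
    calc |(Q - quadPart A) z I - (Q - quadPart A) y I|
        ≤ ‖(Q - quadPart A) z - (Q - quadPart A) y‖ :=
          norm_le_pi_norm ((Q - quadPart A) z - (Q - quadPart A) y) I
      _ ≤ L * (M * s) ^ 2 * ‖z - y‖ := hrem _ (mul_le_of_le_one_right hM hs.2) z y hz hy
      _ ≤ L * (M * s) ^ 2 * W := by gcongr
  have hquad := abs_quadPart_sub_quadPart_le (abs_hatom_le_one · p)
    (hQ.sum_mul_hatom_mul_hatom hp) hz' hy' hzy' I
  calc |Q z I - Q y I| = |((Q - quadPart A) z I - (Q - quadPart A) y I) +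
        (quadPart A z I - quadPart A y I)| := by simp only [Pi.sub_apply]; ring_nf
    _ ≤ L * (M * s) ^ 2 * W + N ^ 2 * (32 * (‖A‖ * (W * (M * s ^ 2) + W' * (M * s)))) :=
        (abs_add_le _ _).trans (add_le_add hcubic hquad)
    _ = (L * M ^ 2 + N ^ 2 * (32 * (‖A‖ * M))) * (s * W' + s ^ 2 * W) -
        L * M ^ 2 * (s * W') := by ring
    _ ≤ _ := sub_le_self _ (by positivity)

end QuadraticPart

section NullStrip

variable {N : ℕ} {u v : Fin N → Spc → ℝ} {F F' : ℝ → EuclideanSpace ℝ (Fin 3) → Fin N → ℝ}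

theorem IsRadiationField.exists_isNullBounded (hF : IsRadiationField u F)
    (hu : ∀ I, ContDiff ℝ 1 (u I)) (R₁ R₂ : ℝ) :
    ∃ C, 0 ≤ C ∧ ∀ p ∈ nullStrip R₁ R₂, ‖jet u p‖ ≤ C * timeDecay p ∧
      ∀ J, IsNullBounded (hatom p) (C * timeDecay p) (C * timeDecay p ^ 2) (grad (u J) p) := by
  obtain ⟨C₀, h₀, hC₀⟩ := exists_forall_abs_le_of_isBigO fun I => hF.isBigO R₁ R₂ (hu I)
  obtain ⟨C₁, h₁, hC₁⟩ := exists_forall_abs_le_of_isBigO fun i : Fin N × Fin 4 =>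
    hF.isBigO_pd R₁ R₂ (hu i.1) i.2
  obtain ⟨C₂, h₂, hC₂⟩ := exists_forall_abs_le_of_isBigO fun i : Fin N × Fin 4 =>
    hF.isBigO_goodPd R₁ R₂ (hu i.1) i.2
  have hle {a b c : ℝ} (ha : a ≤ b * |c|) (hb : b ≤ C₀ + C₁ + C₂) (hc : 0 < c) :
      a ≤ (C₀ + C₁ + C₂) * c := by
    rw [abs_of_pos hc] at ha
    exact ha.trans (by gcongr)
  refine ⟨C₀ + C₁ + C₂, by positivity, fun p hp => ?_⟩
  have hτ := timeDecay_pos hp.1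
  have hpd (J : Fin N) (α : Fin 4) : |pd α (u J) p| ≤ (C₀ + C₁ + C₂) * timeDecay p :=
    hle (hC₁ (J, α) p hp) (by linarith) hτ
  exact ⟨norm_jet_le (by positivity) (fun J => hle (hC₀ J p hp) (by linarith) hτ) hpd,
    fun J => ⟨hpd J, fun α => hle (hC₂ (J, α) p hp) (by linarith) (pow_pos hτ 2)⟩⟩

theorem HasNullForm.exists_abs_box_sub_le
    {Q : ((Fin N → ℝ) × (Fin N → Fin 4 → ℝ)) → Fin N → ℝ}
    {A : Fin N → Fin N → Fin N → Fin 4 → Fin 4 → ℝ} (hQ : HasNullForm Q A)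
    (hu : IsSmoothSolution Q u) (hv : IsSmoothSolution Q v) (hF : IsRadiationField u F)
    (hF' : IsRadiationField v F') (R₁ R₂ : ℝ) :
    ∃ C, 0 ≤ C ∧ ∀ p ∈ nullStrip R₁ R₂, ∀ W W' : ℝ, (∀ J, |(u - v) J p| ≤ W) →
      (∀ J, IsNullBounded (hatom p) W W' (grad ((u - v) J) p)) →
      ∀ I, |box ((u - v) I) p| ≤ C * (timeDecay p * W' + timeDecay p ^ 2 * W) := by
  have hsmooth {w : Fin N → Spc → ℝ} (hw : IsSmoothSolution Q w) (n : ℕ) (I : Fin N) :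
      ContDiff ℝ n (w I) := contDiff_infty.1 (hw.1 I) n
  obtain ⟨B, hB₀, hB⟩ := hF.exists_isNullBounded (hsmooth hu 1) R₁ R₂
  obtain ⟨B', hB'₀, hB'⟩ := hF'.exists_isNullBounded (hsmooth hv 1) R₁ R₂
  obtain ⟨C, hC₀, hC⟩ := hQ.exists_abs_sub_le (add_nonneg hB₀ hB'₀)
  refine ⟨C, hC₀, fun p hp W W' hW hW' I => ?_⟩
  have hτ := timeDecay_pos hp.1
  have hτ₁ : timeDecay p ≤ 1 := inv_le_one_of_one_le₀ (by linarith [hp.1])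
  have hBB' : B ≤ B + B' ∧ B' ≤ B + B' := ⟨by linarith, by linarith⟩
  have hjet : jet u p - jet v p = jet (u - v) p :=
    (jet_sub (fun J => (hsmooth hu 1 J).differentiable one_ne_zero)
      (fun J => (hsmooth hv 1 J).differentiable one_ne_zero) p).symm
  rw [Pi.sub_apply, box_sub (hsmooth hu 2 I) (hsmooth hv 2 I), hu.2 p hp.1, hv.2 p hp.1]
  refine hC p hp.2.2.2 _ ⟨hτ.le, hτ₁⟩ W W' (jet u p) (jet v p) ?_ ?_ ?_ ?_ ?_ ?_ I
  · exact (hB p hp).1.trans (by gcongr; exact hBB'.1)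
  · exact (hB' p hp).1.trans (by gcongr; exact hBB'.2)
  · exact fun J => ((hB p hp).2 J).mono (by gcongr; exact hBB'.1) (by gcongr; exact hBB'.1)
  · exact fun J => ((hB' p hp).2 J).mono (by gcongr; exact hBB'.2) (by gcongr; exact hBB'.2)
  · rw [hjet]
    exact norm_jet_le ((abs_nonneg _).trans (hW I)) hW fun J => (hW' J).abs_le
  · rw [hjet]
    exact hW'

end NullStrip

/-! ### The conformal frame -/

section TimeShift

/-- The translate of `h` by `m` in time. -/
def timeShift (m : ℝ) (h : Spc → ℝ) (P : Spc) : ℝ := h (P - (m, 0))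

variable {m : ℝ} {h : Spc → ℝ}

theorem pd_timeShift (α : Fin 4) : pd α (timeShift m h) = timeShift m (pd α h) := by
  funext P
  unfold timeShift pd
  rw [fderiv_comp_sub]

theorem contDiff_timeShift {n : WithTop ℕ∞} (hh : ContDiff ℝ n h) :
    ContDiff ℝ n (timeShift m h) :=
  hh.comp (contDiff_id.sub contDiff_const)

theorem box_timeShift : box (timeShift m h) = timeShift m (box h) := by
  funext P
  simp only [box_eq_sum, pd_timeShift, timeShift]

theorem euler_eq_Sc : euler h = Sc h := by
  funext P
  simp only [euler, Sc, dt, dxi, Fin.sum_univ_succ, coord_zero, coord_succ]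

theorem Sc_timeShift (P : Spc) :
    Sc (timeShift m h) P = Sc h (P - (m, 0)) + m * pd 0 h (P - (m, 0)) := by
  simp only [Sc, dt, dxi, pd_timeShift, timeShift, Prod.fst_sub, Prod.snd_sub, sub_zero]
  ring

theorem Lor_timeShift (i : Fin 3) (P : Spc) :
    Lor i (timeShift m h) P = Lor i h (P - (m, 0)) + m * pd i.succ h (P - (m, 0)) := by
  simp only [Lor, dt, dxi, pd_timeShift, timeShift, Prod.fst_sub, Prod.snd_sub, sub_zero]
  ring

theorem Rot_timeShift (i j : Fin 3) (P : Spc) :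
    Rot i j (timeShift m h) P = Rot i j h (P - (m, 0)) := by
  simp only [Rot, dxi, pd_timeShift, timeShift, Prod.snd_sub, sub_zero]

end TimeShift

section ConformalFrame

/-- The point of the original spacetime with conformal coordinate `y`: inversion followed by the
time translation by `-m`. -/
def physicalPoint (m : ℝ) (y : Spc) : Spc := inversion y - (m, 0)

/-- The defining function, in the conformal frame `m = R₁ + 1`, of the exterior of the hyperboloid
`|x|² - (t + R₂)² = R₁² - R₂²`. -/
def hyperboloidWeight (R₁ R₂ : ℝ) (y : Spc) : ℝ :=
  2 * (R₁ + 1 - R₂) * y.1 - 1 - ((R₁ + 1 - R₂) ^ 2 + (R₁ ^ 2 - R₂ ^ 2)) * lorentzSq y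

/-- The causal diamond with vertices the origin and `(1, 0)`. -/
def causalDiamond : Set Spc := {y | ‖y.2‖ < y.1 ∧ y.1 + ‖y.2‖ < 1}

/-- The part of the causal diamond corresponding to the exterior of the hyperboloid. -/
def conformalRegion (R₁ R₂ : ℝ) : Set Spc :=
  causalDiamond ∩ {y | 0 < hyperboloidWeight R₁ R₂ y}

variable {m R₁ R₂ : ℝ} {y : Spc}

theorem abs_coord_le_one (hy : y ∈ causalDiamond) (α : Fin 4) : |coord α y| ≤ 1 := by
  have hx := norm_nonneg y.2
  obtain ⟨h1, h2⟩ := hy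
  induction α using Fin.cases with
  | zero => rw [coord_zero, abs_of_pos (by linarith)]; linarith
  | succ i =>
    rw [coord_succ]
    exact (PiLp.norm_apply_le y.2 i).trans (by linarith)

theorem lorentzSq_le_one (hy : y ∈ causalDiamond) : lorentzSq y ≤ 1 := by
  have hle : |y.1| ≤ 1 := by simpa using abs_coord_le_one hy 0
  have hsq : y.1 ^ 2 ≤ 1 := (sq_le_one_iff_abs_le_one y.1).2 hle
  rw [lorentzSq]
  linarith [sq_nonneg ‖y.2‖]

theorem physicalPoint_fst (m : ℝ) (y : Spc) :
    (physicalPoint m y).1 = (lorentzSq y)⁻¹ * y.1 - m := rfl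

theorem physicalPoint_snd (m : ℝ) (y : Spc) : (physicalPoint m y).2 = (lorentzSq y)⁻¹ • y.2 :=
  sub_zero _

theorem rr_physicalPoint (hD : 0 < lorentzSq y) :
    rr (physicalPoint m y) = (lorentzSq y)⁻¹ * ‖y.2‖ := by
  rw [rr, physicalPoint_snd, norm_smul, Real.norm_of_nonneg (inv_nonneg.2 hD.le)]

theorem sub_mul_physicalPoint (hD : 0 < lorentzSq y) :
    (y.1 - ‖y.2‖) * ((physicalPoint m y).1 + m + rr (physicalPoint m y)) = 1 := by
  rw [physicalPoint_fst, rr_physicalPoint hD]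
  have hdef : y.1 ^ 2 - ‖y.2‖ ^ 2 = lorentzSq y := rfl
  linear_combination inv_mul_cancel₀ hD.ne' + (lorentzSq y)⁻¹ * hdef

theorem add_mul_physicalPoint (hD : 0 < lorentzSq y) :
    (y.1 + ‖y.2‖) * ((physicalPoint m y).1 + m - rr (physicalPoint m y)) = 1 := by
  rw [physicalPoint_fst, rr_physicalPoint hD]
  have hdef : y.1 ^ 2 - ‖y.2‖ ^ 2 = lorentzSq y := rfl
  linear_combination inv_mul_cancel₀ hD.ne' + (lorentzSq y)⁻¹ * hdef

theorem lorentzSq_mul_physicalPoint (hD : 0 < lorentzSq y) (R₁ R₂ : ℝ) :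
    lorentzSq y * (rr (physicalPoint (R₁ + 1) y) ^ 2 - ((physicalPoint (R₁ + 1) y).1 + R₂) ^ 2
      - (R₁ ^ 2 - R₂ ^ 2)) = hyperboloidWeight R₁ R₂ y := by
  rw [physicalPoint_fst, rr_physicalPoint hD, hyperboloidWeight]
  have hi := inv_mul_cancel₀ hD.ne'
  set i := (lorentzSq y)⁻¹
  have hdef : y.1 ^ 2 - ‖y.2‖ ^ 2 = lorentzSq y := rfl
  linear_combination (-i ^ 2 * lorentzSq y) * hdef
    + (2 * (R₁ + 1 - R₂) * y.1 - (1 + i * lorentzSq y)) * hi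

theorem hatom_physicalPoint (hD : 0 < lorentzSq y) :
    hatom (physicalPoint m y) = hatom y := by
  funext α
  induction α using Fin.cases with
  | zero => rfl
  | succ i =>
    change (physicalPoint m y).2 i / rr (physicalPoint m y) = y.2 i / ‖y.2‖
    rw [physicalPoint_snd, rr_physicalPoint hD, PiLp.smul_apply, smul_eq_mul,
      mul_div_mul_left _ _ (inv_ne_zero hD.ne')]

theorem abs_eta_mul_coord_sub_le (hy : ‖y.2‖ ≤ y.1) (α : Fin 4) :
    |eta α * coord α y - hatom y α * y.1| ≤ y.1 - ‖y.2‖ := by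
  have hle := abs_hatom_le_one α y
  induction α using Fin.cases with
  | zero => simpa [hatom] using hy
  | succ i =>
    have hcoord : y.2 i = hatom y i.succ * ‖y.2‖ := by
      obtain h0 | h0 := eq_or_ne ‖y.2‖ 0
      · rw [h0, norm_eq_zero.1 h0, mul_zero, PiLp.zero_apply]
      · exact (div_mul_cancel₀ _ h0).symm
    rw [eta, if_neg i.succ_ne_zero, one_mul, coord_succ, hcoord, ← mul_sub, abs_mul,
      abs_sub_comm, abs_of_nonneg (sub_nonneg.2 hy)]
    exact mul_le_of_le_one_left (sub_nonneg.2 hy) hle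

theorem sub_le_of_add_le_one (hy : ‖y.2‖ < y.1) (hle : y.1 + ‖y.2‖ ≤ 1) :
    rr (physicalPoint (R₁ + 1) y) - (physicalPoint (R₁ + 1) y).1 ≤ R₁ := by
  have hone := add_mul_physicalPoint (m := R₁ + 1) (lorentzSq_pos hy)
  have hpos : 0 < y.1 + ‖y.2‖ := by linarith [norm_nonneg y.2]
  nlinarith

theorem pos_of_exterior {t r : ℝ} (hR₂ : |R₂| < R₁) (hr : 0 ≤ r)
    (hext : R₁ ^ 2 - R₂ ^ 2 < r ^ 2 - (t + R₂) ^ 2) (hq : r - t ≤ R₁) :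
    0 < t ∧ 0 < r ∧ R₂ < r - t := by
  obtain ⟨hneg, hlt⟩ := abs_lt.1 hR₂
  have hcc : 0 < R₁ ^ 2 - R₂ ^ 2 := by nlinarith
  have hcone : t + R₂ < r := by nlinarith
  refine ⟨?_, hr.lt_of_ne fun h => ?_, by linarith⟩
  · nlinarith
  · rw [← h] at hext
    nlinarith [sq_nonneg (t + R₂)]

theorem physicalPoint_pos (hR₂ : |R₂| < R₁) (hy : ‖y.2‖ < y.1) (hle : y.1 + ‖y.2‖ ≤ 1)
    (hG : 0 < hyperboloidWeight R₁ R₂ y) :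
    0 < (physicalPoint (R₁ + 1) y).1 ∧ 0 < rr (physicalPoint (R₁ + 1) y) ∧
      R₂ < rr (physicalPoint (R₁ + 1) y) - (physicalPoint (R₁ + 1) y).1 := by
  have hD := lorentzSq_pos hy
  refine pos_of_exterior hR₂ (norm_nonneg _) ?_ (sub_le_of_add_le_one hy hle)
  rw [← lorentzSq_mul_physicalPoint hD] at hG
  exact sub_pos.1 (pos_of_mul_pos_right hG hD.le)

theorem physicalPoint_mem_nullStrip (hR₂ : |R₂| < R₁) (hy : y ∈ conformalRegion R₁ R₂) :
    physicalPoint (R₁ + 1) y ∈ nullStrip R₁ R₂ := by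
  obtain ⟨⟨hcone, hlt⟩, hG⟩ := hy
  obtain ⟨ht, hr, hq⟩ := physicalPoint_pos hR₂ hcone hlt.le hG
  refine ⟨ht, hq, (sub_le_of_add_le_one hcone hlt.le).lt_of_ne fun heq => ?_, hr⟩
  have hone := add_mul_physicalPoint (m := R₁ + 1) (lorentzSq_pos hcone)
  rw [show (physicalPoint (R₁ + 1) y).1 + (R₁ + 1) - rr (physicalPoint (R₁ + 1) y) = 1 by linarith]
    at hone
  linarith

theorem sub_norm_le (hR₂ : |R₂| < R₁) (hy : y ∈ conformalRegion R₁ R₂) :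
    y.1 - ‖y.2‖ ≤ (R₁ + 1 - R₂) * lorentzSq y := by
  obtain ⟨-, hq, -, -⟩ := physicalPoint_mem_nullStrip hR₂ hy
  obtain ⟨⟨hcone, -⟩, -⟩ := hy
  have : 0 < y.1 - ‖y.2‖ := sub_pos.2 hcone
  have hadd : 0 < y.1 + ‖y.2‖ := by linarith [norm_nonneg y.2]
  have hle : (physicalPoint (R₁ + 1) y).1 + (R₁ + 1) - rr (physicalPoint (R₁ + 1) y)
      ≤ R₁ + 1 - R₂ := by linarith
  calc y.1 - ‖y.2‖
      = (y.1 - ‖y.2‖) * ((y.1 + ‖y.2‖)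
          * ((physicalPoint (R₁ + 1) y).1 + (R₁ + 1) - rr (physicalPoint (R₁ + 1) y))) := by
        rw [add_mul_physicalPoint (lorentzSq_pos hcone), mul_one]
    _ ≤ (y.1 - ‖y.2‖) * ((y.1 + ‖y.2‖) * (R₁ + 1 - R₂)) := by
        gcongr
    _ = (R₁ + 1 - R₂) * lorentzSq y := by rw [lorentzSq]; ring

theorem timeDecay_physicalPoint_le (hR₂ : |R₂| < R₁) (hy : y ∈ conformalRegion R₁ R₂) :
    timeDecay (physicalPoint (R₁ + 1) y) ≤
      2 * (R₁ + 1) * (R₁ + 1 - R₂) * lorentzSq y := by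
  obtain ⟨ht, -, hq, -⟩ := physicalPoint_mem_nullStrip hR₂ hy
  have hR₁ : 0 < R₁ := (abs_nonneg R₂).trans_lt hR₂
  have hsub : 0 < y.1 - ‖y.2‖ := sub_pos.2 hy.1.1
  set p := physicalPoint (R₁ + 1) y with hp
  calc timeDecay p
      = (y.1 - ‖y.2‖) * (p.1 + (R₁ + 1) + rr p) * timeDecay p := by
        rw [hp, sub_mul_physicalPoint (lorentzSq_pos hy.1.1), one_mul]
    _ ≤ (y.1 - ‖y.2‖) * (2 * (R₁ + 1) * (1 + p.1)) * timeDecay p := by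
        have := (timeDecay_pos ht).le
        gcongr
        nlinarith
    _ = 2 * (R₁ + 1) * (y.1 - ‖y.2‖) := by
        rw [timeDecay]
        field_simp
    _ ≤ 2 * (R₁ + 1) * ((R₁ + 1 - R₂) * lorentzSq y) := by
        gcongr
        exact sub_norm_le hR₂ hy
    _ = 2 * (R₁ + 1) * (R₁ + 1 - R₂) * lorentzSq y := by ring

theorem exists_physicalPoint_eq {p : Spc} (hlt : ‖p.2‖ < R₁ + p.1)
    (hext : R₁ ^ 2 - R₂ ^ 2 < rr p ^ 2 - (p.1 + R₂) ^ 2) :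
    ∃ y ∈ conformalRegion R₁ R₂, physicalPoint (R₁ + 1) y = p := by
  set P : Spc := p + (R₁ + 1, 0)
  have hP : ‖P.2‖ < P.1 := by
    simp only [P, Prod.snd_add, Prod.fst_add, add_zero]
    linarith
  have hPD := lorentzSq_pos hP
  have hcone : ‖(inversion P).2‖ < (inversion P).1 := by
    rw [inversion, Prod.smul_snd, Prod.smul_fst, norm_smul, smul_eq_mul,
      Real.norm_of_nonneg (inv_nonneg.2 hPD.le)]
    exact mul_lt_mul_of_pos_left hP (inv_pos.2 hPD)
  have hD := lorentzSq_pos hcone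
  have hphys : physicalPoint (R₁ + 1) (inversion P) = p := by
    rw [physicalPoint, inversion_inversion hPD.ne', add_sub_cancel_right]
  refine ⟨inversion P, ⟨⟨hcone, ?_⟩, ?_⟩, hphys⟩
  · have hone := add_mul_physicalPoint (m := R₁ + 1) hD
    rw [hphys, rr] at hone
    nlinarith [norm_nonneg (inversion P).2]
  · change 0 < hyperboloidWeight R₁ R₂ (inversion P)
    rw [← lorentzSq_mul_physicalPoint hD, hphys]
    exact mul_pos hD (sub_pos.2 hext)

end ConformalFrame

/-! ### Decay and the equation in the conformal frame -/

section KelvinDecay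

theorem lorentzSq_mul_minkowski_grad (h : Spc → ℝ) (P : Spc) :
    lorentzSq P * minkowski (grad h P) (grad h P) = Lor 0 h P ^ 2 + Lor 1 h P ^ 2 + Lor 2 h P ^ 2
      - Sc h P ^ 2 - Rot 0 1 h P ^ 2 - Rot 0 2 h P ^ 2 - Rot 1 2 h P ^ 2 := by
  simp only [lorentzSq, norm_sq_eq_three, minkowski, grad, Lor, Sc, Rot, dt, dxi,
    Fin.sum_univ_four, Fin.sum_univ_three, eta_zero, eta_one, eta_two, eta_three,
    Fin.succ_zero_eq_one, Fin.succ_one_eq_two, show Fin.succ (2 : Fin 3) = 3 from rfl]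
  ring

theorem minkowski_grad_lorentzSq (f : Spc → ℝ) (y : Spc) :
    minkowski (grad lorentzSq y) (grad f y) = -2 * euler f y := by
  rw [minkowski, euler, Finset.mul_sum]
  refine Finset.sum_congr rfl fun α _ => ?_
  rw [grad, (hasPdAt_lorentzSq α y).pd_eq, grad]
  linear_combination (-2 * coord α y * pd α f y) * eta_mul_self α

theorem isBigO_timeShift_of_mem_ZList {X : Type*} {l : Filter X} {g : X → ℝ} {P : X → Spc}
    {h : Spc → ℝ} (m : ℝ) (hZ : ∀ L ∈ ZList, (fun x => L h (P x - (m, 0))) =O[l] g)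
    {L : (Spc → ℝ) → Spc → ℝ} (hL : L ∈ ZList) :
    (fun x => L (timeShift m h) (P x)) =O[l] g := by
  have hpd (α : Fin 4) : (fun x => pd α h (P x - (m, 0))) =O[l] g := hZ _ (pd_mem_ZList α)
  have hpd' (α : Fin 4) : (fun x => pd α (timeShift m h) (P x)) =O[l] g := by
    rw [pd_timeShift]
    exact hpd α
  have hSc : (fun x => Sc (timeShift m h) (P x)) =O[l] g := by
    simpa only [Sc_timeShift] using (hZ Sc (by simp [ZList])).add ((hpd 0).const_mul_left m)
  have hLor (i : Fin 3) (hi : Lor i ∈ ZList) : (fun x => Lor i (timeShift m h) (P x)) =O[l] g := by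
    simpa only [Lor_timeShift] using (hZ _ hi).add ((hpd i.succ).const_mul_left m)
  have hRot (i j : Fin 3) (hij : Rot i j ∈ ZList) :
      (fun x => Rot i j (timeShift m h) (P x)) =O[l] g := by
    simpa only [Rot_timeShift] using hZ _ hij
  have hL' := hL
  simp only [ZList, List.mem_cons, List.not_mem_nil, or_false] at hL'
  rcases hL' with rfl | rfl | rfl | rfl | rfl | rfl | rfl | rfl | rfl | rfl | rfl
  exacts [hpd' 0, hpd' 1, hpd' 2, hpd' 3, hSc, hRot _ _ hL, hRot _ _ hL, hRot _ _ hL, hLor _ hL,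
    hLor _ hL, hLor _ hL]

variable {S : Set Spc} {h : Spc → ℝ}

theorem isBigO_inv_lorentzSq_pow_mul (hS : S ⊆ causalDiamond) {f : Spc → ℝ} {k n : ℕ}
    (hf : f =O[𝓟 S] (lorentzSq ^ (k + n))) :
    (fun y => (lorentzSq y)⁻¹ ^ k * f y) =O[𝓟 S] (lorentzSq ^ n) := by
  refine ((Asymptotics.isBigO_refl (fun y => (lorentzSq y)⁻¹ ^ k) _).mul hf).congr' .rfl ?_
  filter_upwards [mem_principal_self S] with y hy
  have hD := (lorentzSq_pos (hS hy).1).ne'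
  simp only [Pi.pow_apply]
  rw [pow_add, ← mul_assoc, ← mul_pow, inv_mul_cancel₀ hD, one_pow, one_mul]

variable (hS : S ⊆ causalDiamond) (hh : Differentiable ℝ h)
  (h₀ : (fun y => h (inversion y)) =O[𝓟 S] (lorentzSq ^ 2))
  (h₁ : ∀ L ∈ ZList, (fun y => L h (inversion y)) =O[𝓟 S] (lorentzSq ^ 2))

include h₁

theorem isBigO_euler_inversion : (fun y => euler h (inversion y)) =O[𝓟 S] (lorentzSq ^ 2) := by
  rw [euler_eq_Sc]
  exact h₁ Sc (by simp [ZList])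

include hS

theorem isBigO_minkowski_grad_inversion :
    (fun y => minkowski (grad h (inversion y)) (grad h (inversion y)))
      =O[𝓟 S] (lorentzSq ^ 5) := by
  have hsq (L) (hL : L ∈ ZList) : (fun y => L h (inversion y) ^ 2) =O[𝓟 S] (lorentzSq ^ 4) := by
    exact ((h₁ L hL).pow 2).congr_right fun y => (pow_mul _ 2 2).symm
  have hsum := ((((((hsq (Lor 0) (by simp [ZList])).add (hsq (Lor 1) (by simp [ZList]))).add
    (hsq (Lor 2) (by simp [ZList]))).sub (hsq Sc (by simp [ZList]))).sub
    (hsq (Rot 0 1) (by simp [ZList]))).sub (hsq (Rot 0 2) (by simp [ZList]))).sub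
    (hsq (Rot 1 2) (by simp [ZList]))
  refine ((Asymptotics.isBigO_refl lorentzSq _).mul hsum).congr' ?_ ?_
  · filter_upwards [mem_principal_self S] with y hy
    have hD := (lorentzSq_pos (hS hy).1).ne'
    rw [← lorentzSq_mul_minkowski_grad, lorentzSq_inversion hD, mul_inv_cancel_left₀ hD]
  · exact .of_forall fun y => (pow_succ' _ _).symm

include h₀

omit hS in
theorem isBigO_oneAddEuler_inversion :
    (fun y => oneAddEuler h (inversion y)) =O[𝓟 S] (lorentzSq ^ 2) :=
  h₀.add (isBigO_euler_inversion h₁)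

omit h₁ in
theorem isBigO_kelvin : kelvin h =O[𝓟 S] lorentzSq := by
  refine (isBigO_inv_lorentzSq_pow_mul hS (k := 1) (n := 1) h₀).congr (fun y => ?_)
    (fun y => pow_one _)
  rw [pow_one, kelvin]

include hh

theorem isBigO_euler_kelvin : euler (kelvin h) =O[𝓟 S] lorentzSq := by
  have hmul := isBigO_inv_lorentzSq_pow_mul hS (k := 1) (n := 1) <|
    (isBigO_euler_inversion h₁).sub ((isBigO_oneAddEuler_inversion h₀ h₁).const_mul_left 2)
  refine hmul.congr' ?_ (.of_forall fun y => pow_one _)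
  filter_upwards [mem_principal_self S] with y hy
  rw [euler_kelvin (lorentzSq_pos (hS hy).1).ne' (hh _), pow_one]

theorem isBigO_minkowski_grad_lorentzSq_kelvin :
    (fun y => minkowski (grad lorentzSq y) (grad (kelvin h) y)) =O[𝓟 S] lorentzSq := by
  simp only [minkowski_grad_lorentzSq]
  exact (isBigO_euler_kelvin hS hh h₀ h₁).const_mul_left _

theorem isBigO_pd_kelvin (α : Fin 4) : pd α (kelvin h) =O[𝓟 S] (fun _ => (1 : ℝ)) := by
  have hcoord : (fun y => 2 * (eta α * coord α y)) =O[𝓟 S] (fun _ => (1 : ℝ)) := by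
    refine (Asymptotics.isBigO_principal.2 ⟨1, fun y hy => ?_⟩ : coord α =O[𝓟 S] _)
      |>.const_mul_left (eta α) |>.const_mul_left 2
    simpa using abs_coord_le_one (hS hy) α
  have hmul := isBigO_inv_lorentzSq_pow_mul hS (k := 2) (n := 0) <|
    (h₁ _ (pd_mem_ZList α)).add (isBigO_mul_one (isBigO_oneAddEuler_inversion h₀ h₁) hcoord)
  refine hmul.congr' ?_ (.of_forall fun y => pow_zero _)
  filter_upwards [mem_principal_self S] with y hy
  rw [(hasPdAt_kelvin α (lorentzSq_pos (hS hy).1).ne' (hh _)).pd_eq]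
  ring

theorem isBigO_minkowski_grad_kelvin :
    (fun y => minkowski (grad (kelvin h) y) (grad (kelvin h) y)) =O[𝓟 S] lorentzSq := by
  have hone := isBigO_oneAddEuler_inversion h₀ h₁
  have hcross : (fun y => 4 * (lorentzSq y * (oneAddEuler h (inversion y)
      * (euler h (inversion y) - oneAddEuler h (inversion y))))) =O[𝓟 S] (lorentzSq ^ 5) := by
    refine (((Asymptotics.isBigO_refl lorentzSq _).mul (hone.mul
      ((isBigO_euler_inversion h₁).sub hone))).const_mul_left 4).congr_right fun y => ?_
    simp only [Pi.pow_apply]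
    ring
  refine (isBigO_inv_lorentzSq_pow_mul hS (k := 4) (n := 1)
    ((isBigO_minkowski_grad_inversion hS h₁).add hcross)).congr' ?_ (.of_forall fun y => pow_one _)
  filter_upwards [mem_principal_self S] with y hy
  rw [minkowski_grad_kelvin (lorentzSq_pos (hS hy).1).ne' (hh _)]
  ring

end KelvinDecay

section KelvinBounds

variable {h : Spc → ℝ} {y : Spc} {X : ℝ}

theorem abs_oneAddEuler_le (hy : y ∈ causalDiamond) {f : Spc → ℝ} (hX : |f y| ≤ X)
    (hX' : ∀ α, |pd α f y| ≤ X) : |oneAddEuler f y| ≤ 5 * X := by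
  have hterm (α : Fin 4) : |coord α y * pd α f y| ≤ X := by
    rw [abs_mul]
    exact (mul_le_of_le_one_left (abs_nonneg _) (abs_coord_le_one hy α)).trans (hX' α)
  calc |oneAddEuler f y|
      ≤ |f y| + ∑ α, |coord α y * pd α f y| :=
        (abs_add_le _ _).trans (by gcongr; exact Finset.abs_sum_le_sum_abs _ _)
    _ ≤ X + ∑ _ : Fin 4, X := by gcongr; exact hterm _
    _ = 5 * X := by simp only [Finset.sum_const, Finset.card_univ, Fintype.card_fin]; ring

theorem abs_inversion_le (hD : 0 < lorentzSq y) (hX : |kelvin h y| ≤ X) :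
    |h (inversion y)| ≤ lorentzSq y * X := by
  rw [kelvin, abs_mul, abs_of_pos (inv_pos.2 hD)] at hX
  exact (inv_mul_le_iff₀ hD).1 hX

theorem isNullBounded_grad_inversion {ν : Fin 4 → ℝ} {n : ℝ} (hy : y ∈ causalDiamond)
    (hh : DifferentiableAt ℝ h (inversion y)) (hX : |kelvin h y| ≤ X)
    (hX' : ∀ α, |pd α (kelvin h) y| ≤ X) (hν : ∀ α, |ν α| ≤ 1)
    (hn : ∀ α, |eta α * coord α y - ν α * y.1| ≤ n * lorentzSq y) :
    IsNullBounded ν (11 * (lorentzSq y * X)) ((2 + 10 * n) * (lorentzSq y ^ 2 * X))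
      (grad h (inversion y)) := by
  have hD := lorentzSq_pos hy.1
  have hX₀ : 0 ≤ X := (abs_nonneg _).trans hX
  have hpd := pd_inversion_eq hD.ne' hh
  have hs := abs_oneAddEuler_le hy hX hX'
  set D := lorentzSq y
  set s := oneAddEuler (kelvin h) y
  refine ⟨fun α => ?_, fun α => ?_⟩
  · have hle : D ^ 2 ≤ D := pow_le_of_le_one hD.le (lorentzSq_le_one hy) two_ne_zero
    have hc : |eta α * coord α y| ≤ 1 := by
      rw [abs_mul, abs_eta, one_mul]
      exact abs_coord_le_one hy α
    calc |grad h (inversion y) α|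
        = |D ^ 2 * pd α (kelvin h) y + 2 * (eta α * coord α y) * D * s| := by rw [grad, hpd]
      _ ≤ |D ^ 2 * pd α (kelvin h) y| + |2 * (eta α * coord α y) * D * s| := abs_add_le _ _
      _ = D ^ 2 * |pd α (kelvin h) y| + 2 * |eta α * coord α y| * D * |s| := by
        simp only [abs_mul, abs_pow, abs_of_pos hD, abs_two]
      _ ≤ D * X + 2 * 1 * D * (5 * X) := by
        gcongr
        exact hX' α
      _ = 11 * (D * X) := by ring
  · have heq : grad h (inversion y) α + ν α * grad h (inversion y) 0 =
        D ^ 2 * (pd α (kelvin h) y + ν α * pd 0 (kelvin h) y)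
          + 2 * D * s * (eta α * coord α y - ν α * y.1) := by
      rw [grad, grad, hpd, hpd, eta_zero, coord_zero]
      ring
    calc |grad h (inversion y) α + ν α * grad h (inversion y) 0|
        ≤ |D ^ 2 * (pd α (kelvin h) y + ν α * pd 0 (kelvin h) y)|
          + |2 * D * s * (eta α * coord α y - ν α * y.1)| := heq ▸ abs_add_le _ _
      _ ≤ D ^ 2 * (|pd α (kelvin h) y| + |ν α| * |pd 0 (kelvin h) y|)
          + 2 * D * |s| * |eta α * coord α y - ν α * y.1| := by
        simp only [abs_mul, abs_pow, abs_of_pos hD, abs_two]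
        gcongr
        exact (abs_add_le _ _).trans_eq (by rw [abs_mul])
      _ ≤ D ^ 2 * (X + 1 * X) + 2 * D * (5 * X) * (n * D) := by
        gcongr
        exacts [hX' α, hν α, hX' 0, hn α]
      _ = (2 + 10 * n) * (D ^ 2 * X) := by ring

end KelvinBounds

/-- The Kelvin transform of the difference `u - v`, after the translation by `R₁ + 1` in time. -/
def kelvinSub {N : ℕ} (R₁ : ℝ) (u v : Fin N → Spc → ℝ) (I : Fin N) : Spc → ℝ :=
  kelvin (timeShift (R₁ + 1) ((u - v) I))

section KelvinSub

variable {N : ℕ} {Q : ((Fin N → ℝ) × (Fin N → Fin 4 → ℝ)) → Fin N → ℝ} {u v : Fin N → Spc → ℝ}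
  {F F' : ℝ → EuclideanSpace ℝ (Fin 3) → Fin N → ℝ} {R₁ R₂ : ℝ}

theorem abs_sub_le_of_kelvinSub {y : Spc} {X : ℝ} {J : Fin N} (hD : 0 < lorentzSq y)
    (hX : |kelvinSub R₁ u v J y| ≤ X) :
    |(u - v) J (physicalPoint (R₁ + 1) y)| ≤ lorentzSq y * X :=
  abs_inversion_le hD hX

theorem isNullBounded_grad_sub {y : Spc} {X : ℝ} {J : Fin N} (hR₂ : |R₂| < R₁)
    (hw : Differentiable ℝ ((u - v) J)) (hy : y ∈ conformalRegion R₁ R₂)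
    (hX : |kelvinSub R₁ u v J y| ≤ X) (hX' : ∀ α, |pd α (kelvinSub R₁ u v J) y| ≤ X) :
    IsNullBounded (hatom (physicalPoint (R₁ + 1) y)) (11 * (lorentzSq y * X))
      ((2 + 10 * (R₁ + 1 - R₂)) * (lorentzSq y ^ 2 * X))
      (grad ((u - v) J) (physicalPoint (R₁ + 1) y)) := by
  have hgrad : grad ((u - v) J) (physicalPoint (R₁ + 1) y)
      = grad (timeShift (R₁ + 1) ((u - v) J)) (inversion y) := by
    funext α
    rw [grad, grad, pd_timeShift]
    rfl
  rw [hgrad, hatom_physicalPoint (lorentzSq_pos hy.1.1)]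
  exact isNullBounded_grad_inversion hy.1
    (hw.comp (differentiable_id.sub (differentiable_const _)) _) hX hX'
    (fun α => abs_hatom_le_one α y)
    fun α => (abs_eta_mul_coord_sub_le hy.1.1.le α).trans (sub_norm_le hR₂ hy)

theorem HasNullForm.exists_box_kelvinSub_sq_le
    {A : Fin N → Fin N → Fin N → Fin 4 → Fin 4 → ℝ} (hQ : HasNullForm Q A)
    (hu : IsSmoothSolution Q u) (hv : IsSmoothSolution Q v) (hF : IsRadiationField u F)
    (hF' : IsRadiationField v F') (hR₂ : |R₂| < R₁) :
    ∃ C, 0 ≤ C ∧ ∀ y ∈ conformalRegion R₁ R₂, ∀ I,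
      box (kelvinSub R₁ u v I) y ^ 2 ≤ C * ∑ J, jetSq (kelvinSub R₁ u v J) y := by
  obtain ⟨B, hB, hbox⟩ := hQ.exists_abs_box_sub_le hu hv hF hF' R₁ R₂
  have hw (I : Fin N) : ContDiff ℝ 2 ((u - v) I) := contDiff_infty.1 ((hu.1 I).sub (hv.1 I)) 2
  set n := R₁ + 1 - R₂
  set K := 2 * (R₁ + 1) * n
  refine ⟨(B * (K * (2 + 10 * n) + K ^ 2 * 11)) ^ 2, sq_nonneg _, fun y hy I => ?_⟩
  have hn₀ : 0 < n := by linarith [(abs_lt.1 hR₂).2]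
  have hD := lorentzSq_pos hy.1.1
  have hp := physicalPoint_mem_nullStrip hR₂ hy
  have hτ := timeDecay_physicalPoint_le hR₂ hy
  have hτ₀ := (timeDecay_pos hp.1).le
  set X := √(∑ J, jetSq (kelvinSub R₁ u v J) y) with hXdef
  have hX (J : Fin N) : |kelvinSub R₁ u v J y| ≤ X := abs_le_sqrt (sq_le_sum_jetSq _ y J)
  have hX' (J : Fin N) (α : Fin 4) : |pd α (kelvinSub R₁ u v J) y| ≤ X :=
    abs_le_sqrt (pd_sq_le_sum_jetSq _ y J α)
  have : 0 ≤ X := sqrt_nonneg _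
  set D := lorentzSq y
  have hsub (J : Fin N) : |(u - v) J (physicalPoint (R₁ + 1) y)| ≤ 11 * (D * X) :=
    (abs_sub_le_of_kelvinSub hD (hX J)).trans
      (le_mul_of_one_le_left (by positivity) (by norm_num))
  have habs : |box (kelvinSub R₁ u v I) y| ≤ B * (K * (2 + 10 * n) + K ^ 2 * 11) * X := by
    have hbound := hbox _ hp _ _ hsub (fun J => isNullBounded_grad_sub hR₂
      ((hw J).differentiable two_ne_zero) hy (hX J) (hX' J)) I
    rw [kelvinSub, box_kelvin hD.ne' (contDiff_timeShift (hw I)), box_timeShift, abs_mul,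
      abs_of_pos (by positivity), inv_pow, inv_mul_le_iff₀ (by positivity)]
    calc |box ((u - v) I) (physicalPoint (R₁ + 1) y)|
        ≤ B * (K * D * ((2 + 10 * n) * (D ^ 2 * X)) + (K * D) ^ 2 * (11 * (D * X))) :=
          hbound.trans (by gcongr)
      _ = D ^ 3 * (B * (K * (2 + 10 * n) + K ^ 2 * 11) * X) := by ring
  calc box (kelvinSub R₁ u v I) y ^ 2
      ≤ (B * (K * (2 + 10 * n) + K ^ 2 * 11) * X) ^ 2 := by
        rw [← sq_abs]
        gcongr
    _ = _ := by
      rw [mul_pow, hXdef, sq_sqrt (Finset.sum_nonneg fun J _ => jetSq_nonneg _ y)]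

theorem isBigO_comp_physicalPoint (hR₂ : |R₂| < R₁) {f : Spc → ℝ} {n : ℕ}
    (hf : f =O[𝓟 (nullStrip R₁ R₂)] (timeDecay ^ n)) :
    (fun y => f (physicalPoint (R₁ + 1) y)) =O[𝓟 (conformalRegion R₁ R₂)] (lorentzSq ^ n) := by
  have hmaps : MapsTo (physicalPoint (R₁ + 1)) (conformalRegion R₁ R₂) (nullStrip R₁ R₂) :=
    fun y hy => physicalPoint_mem_nullStrip hR₂ hy
  have hτ : (fun y => timeDecay (physicalPoint (R₁ + 1) y))
      =O[𝓟 (conformalRegion R₁ R₂)] lorentzSq :=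
    Asymptotics.isBigO_principal.2 ⟨_, fun y hy => by
      rw [Real.norm_of_nonneg (timeDecay_pos (hmaps hy).1).le,
        Real.norm_of_nonneg (lorentzSq_pos hy.1.1).le]
      exact timeDecay_physicalPoint_le hR₂ hy⟩
  exact (hf.comp_tendsto hmaps.tendsto).trans (hτ.pow n)

variable (hF : IsRadiationField u F) (hF' : IsRadiationField v F') (hR₂ : |R₂| < R₁)
  (hrad : ∀ (q : ℝ) (ω : EuclideanSpace ℝ (Fin 3)), ‖ω‖ = 1 → R₂ < q → F q ω = F' q ω)
  {I : Fin N} (hu : ContDiff ℝ 1 (u I)) (hv : ContDiff ℝ 1 (v I))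

include hF hF' hR₂ hrad hu hv

namespace IsRadiationField

theorem isBigO_sub_inversion : (fun y => timeShift (R₁ + 1) ((u - v) I) (inversion y))
    =O[𝓟 (conformalRegion R₁ R₂)] (lorentzSq ^ 2) :=
  isBigO_comp_physicalPoint hR₂ (hF.isBigO_sub R₁ hu hF' hv hrad)

theorem isBigO_sub_inversion_of_mem_ZList (L : (Spc → ℝ) → Spc → ℝ) (hL : L ∈ ZList) :
    (fun y => L (timeShift (R₁ + 1) ((u - v) I)) (inversion y))
      =O[𝓟 (conformalRegion R₁ R₂)] (lorentzSq ^ 2) :=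
  isBigO_timeShift_of_mem_ZList _ (fun _ hL' => isBigO_comp_physicalPoint hR₂
    (hF.isBigO_sub_of_mem_ZList R₁ hu hF' hv hrad hL')) hL

end IsRadiationField

end KelvinSub

/-! ### Continuation from null infinity -/

section Continuation

variable {N : ℕ} {Q : ((Fin N → ℝ) × (Fin N → Fin 4 → ℝ)) → Fin N → ℝ} {u v : Fin N → Spc → ℝ}
  {F F' : ℝ → EuclideanSpace ℝ (Fin 3) → Fin N → ℝ} {R₁ R₂ ε : ℝ} {W : QuadWeight} {y : Spc}

-- The perturbation by `ε (1 - t²)` makes the Hessian of the weight strictly pseudoconvex.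
open QuadWeight in
theorem exists_isPseudoconvexOn_eval_eq (hR₂ : |R₂| < R₁) (hε : 0 < ε)
    (hε' : ε ≤ R₁ ^ 2 - R₂ ^ 2) (S : Set Spc) :
    ∃ (W : QuadWeight) (θ e₀ e₁ : ℝ), W.IsPseudoconvexOn θ e₀ e₁ (S ∩ {y | 0 < W.eval y}) ∧
      ∀ y, W.eval y = hyperboloidWeight R₁ R₂ y - ε * (1 - y.1 ^ 2) := by
  set n := R₁ + 1 - R₂ with hn
  set b := n ^ 2 + (R₁ ^ 2 - R₂ ^ 2) - ε with hb
  have hn₀ : 0 < n := by linarith [(abs_lt.1 hR₂).2]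
  have hnb : n ^ 2 ≤ b := by linarith
  have hb₀ : 0 < b := (pow_pos hn₀ 2).trans_le hnb
  have hK : 0 < 1 + ε - n ^ 2 / b := by linarith [(div_le_one hb₀).2 hnb]
  refine ⟨spherical (-b) (b + ε) (n / b) 0 (1 + ε - n ^ 2 / b), _, _, _,
    isPseudoconvexOn_spherical (by nlinarith) (by linarith) hK fun y hy => hy.2, fun y => ?_⟩
  have hsquare : -b * (y.1 - n / b) ^ 2 = -b * y.1 ^ 2 + 2 * n * y.1 - n ^ 2 / b := by
    field_simp
    ring
  rw [eval_spherical, hsquare, hyperboloidWeight, lorentzSq, sub_zero, ← hn]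
  linear_combination (‖y.2‖ ^ 2 - y.1 ^ 2) * hb

theorem hyperboloidWeight_pos_of_eval_pos (hε : 0 ≤ ε)
    (hW : ∀ y, W.eval y = hyperboloidWeight R₁ R₂ y - ε * (1 - y.1 ^ 2)) (hy : ‖y.2‖ < y.1)
    (hle : y.1 + ‖y.2‖ ≤ 1) (hpos : 0 < W.eval y) : 0 < hyperboloidWeight R₁ R₂ y := by
  have hx := norm_nonneg y.2
  have ht : 0 ≤ 1 - y.1 ^ 2 := by nlinarith
  have := mul_nonneg hε ht
  linarith [hW y]

theorem isOpen_causalDiamond : IsOpen causalDiamond :=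
  (isOpen_lt continuous_snd.norm continuous_fst).inter
    (isOpen_lt (continuous_fst.add continuous_snd.norm) continuous_const)

theorem isBounded_causalDiamond : Bornology.IsBounded causalDiamond := by
  refine ((Metric.isBounded_Icc 0 1).prod (Metric.isBounded_closedBall (x := 0) (r := 1))).subset
    fun y hy => ?_
  have hx := norm_nonneg y.2
  obtain ⟨h₁, h₂⟩ := hy
  exact ⟨⟨by linarith, by linarith⟩, mem_closedBall_zero_iff.2 (by linarith)⟩

theorem closure_causalDiamond_subset :
    closure causalDiamond ⊆ {y | ‖y.2‖ ≤ y.1 ∧ y.1 + ‖y.2‖ ≤ 1} :=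
  closure_minimal (fun _ hy => ⟨hy.1.le, hy.2.le⟩)
    ((isClosed_le continuous_snd.norm continuous_fst).inter
      (isClosed_le (continuous_fst.add continuous_snd.norm) continuous_const))

theorem kelvinSub_eq_zero_of_add_eq_one (hQ : ContDiff ℝ 1 Q) (hu : IsSmoothSolution Q u)
    (hv : IsSmoothSolution Q v)
    (hdata : ∀ x : EuclideanSpace ℝ (Fin 3), R₁ ≤ ‖x‖ → ∀ I,
      u I (0, x) = v I (0, x) ∧ dt (u I) (0, x) = dt (v I) (0, x))
    (hR₂ : |R₂| < R₁) (hy : ‖y.2‖ < y.1) (hone : y.1 + ‖y.2‖ = 1)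
    (hpos : 0 < hyperboloidWeight R₁ R₂ y) (I : Fin N) :
    kelvinSub R₁ u v I y = 0 ∧ ∀ α, pd α (kelvinSub R₁ u v I) y = 0 := by
  have hD := lorentzSq_pos hy
  have hr := add_mul_physicalPoint (m := R₁ + 1) hD
  rw [hone, one_mul, rr] at hr
  obtain ⟨hw₀, hw₁⟩ := hu.sub_eq_zero_of_le hQ hv hdata (physicalPoint_pos hR₂ hy hone.le hpos).1
    (by linarith) I
  set h := timeShift (R₁ + 1) ((u - v) I) with hdef
  have hh : DifferentiableAt ℝ h (inversion y) :=
    ((contDiff_timeShift (contDiff_infty.1 ((hu.1 I).sub (hv.1 I)) 1)).differentiable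
      one_ne_zero _)
  have h₀ : h (inversion y) = 0 := hw₀
  have h₁ (α : Fin 4) : pd α h (inversion y) = 0 := by
    rw [hdef, pd_timeShift]
    exact hw₁ α
  have hone : oneAddEuler h (inversion y) = 0 := by simp [oneAddEuler, euler, h₀, h₁]
  refine ⟨mul_eq_zero_of_right _ h₀, fun α => ?_⟩
  rw [kelvinSub, ← hdef, (hasPdAt_kelvin α hD.ne' hh).pd_eq, h₁, hone, mul_zero, add_zero,
    mul_zero]

variable {A : Fin N → Fin N → Fin N → Fin 4 → Fin 4 → ℝ} (hQ : HasNullForm Q A)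
  (hu : IsSmoothSolution Q u) (hv : IsSmoothSolution Q v)
  (hF : IsRadiationField u F) (hF' : IsRadiationField v F') (hR₂ : |R₂| < R₁)
  (hdata : ∀ x : EuclideanSpace ℝ (Fin 3), R₁ ≤ ‖x‖ → ∀ I,
    u I (0, x) = v I (0, x) ∧ dt (u I) (0, x) = dt (v I) (0, x))
  (hrad : ∀ (q : ℝ) (ω : EuclideanSpace ℝ (Fin 3)), ‖ω‖ = 1 → R₂ < q → F q ω = F' q ω)

include hQ hu hv hF hF' hR₂ hdata hrad

theorem exists_isContinuationDomain_kelvinSub {θ e₀ e₁ : ℝ} (hε : 0 ≤ ε)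
    (hW : ∀ y, W.eval y = hyperboloidWeight R₁ R₂ y - ε * (1 - y.1 ^ 2))
    (hconv : W.IsPseudoconvexOn θ e₀ e₁ (causalDiamond ∩ {y | 0 < W.eval y})) :
    ∃ C, W.IsContinuationDomain θ e₀ e₁ C lorentzSq (causalDiamond ∩ {y | 0 < W.eval y})
      {y | ‖y.2‖ < y.1 ∧ 0 < W.eval y} (kelvinSub R₁ u v) := by
  set V := causalDiamond ∩ {y | 0 < W.eval y}
  obtain ⟨C, hC, hbox⟩ := hQ.exists_box_kelvinSub_sq_le hu hv hF hF' hR₂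
  have hVG : V ⊆ conformalRegion R₁ R₂ := fun y hy =>
    ⟨hy.1, hyperboloidWeight_pos_of_eval_pos hε hW hy.1.1 hy.1.2.le hy.2⟩
  have hV : IsOpen V := isOpen_causalDiamond.inter
    (isOpen_lt continuous_const (W.contDiff_eval (n := 0)).continuous)
  have hclosure : closure V ⊆ {y | ‖y.2‖ ≤ y.1 ∧ y.1 + ‖y.2‖ ≤ 1} :=
    (closure_mono inter_subset_left).trans closure_causalDiamond_subset
  have hw (I : Fin N) : ContDiff ℝ 2 (timeShift (R₁ + 1) ((u - v) I)) :=
    contDiff_timeShift (contDiff_infty.1 ((hu.1 I).sub (hv.1 I)) 2)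
  have hw₁ (I : Fin N) := (hw I).differentiable two_ne_zero
  have hu₁ (I : Fin N) : ContDiff ℝ 1 (u I) := contDiff_infty.1 (hu.1 I) 1
  have hv₁ (I : Fin N) : ContDiff ℝ 1 (v I) := contDiff_infty.1 (hv.1 I) 1
  have hle : 𝓟 V ≤ 𝓟 (conformalRegion R₁ R₂) := principal_mono.2 hVG
  have hsub : V ⊆ causalDiamond := inter_subset_left
  have h₀ (I : Fin N) := (hF.isBigO_sub_inversion hF' hR₂ hrad (hu₁ I) (hv₁ I)).mono hle
  have h₁ (I : Fin N) (L) (hL : L ∈ ZList) :=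
    (hF.isBigO_sub_inversion_of_mem_ZList hF' hR₂ hrad (hu₁ I) (hv₁ I) L hL).mono hle
  refine ⟨C, hconv, hC, hV, isBounded_causalDiamond.subset inter_subset_left,
    fun y hy => ⟨hy.1.1, hy.2⟩, fun y hy hWy hD => ⟨(hclosure hy).1.lt_of_ne fun heq => ?_, hWy⟩,
    contDiff_lorentzSq, fun I y hy => contDiffAt_kelvin (lorentzSq_pos hy.1).ne' (hw I), ?_,
    fun y hy => lorentzSq_pos hy.1.1, fun y hy => hy.2, fun y hy => hbox y (hVG hy),
    fun I => isBigO_kelvin hsub (h₀ I),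
    fun I => isBigO_pd_kelvin hsub (hw₁ I) (h₀ I) (h₁ I),
    fun I => isBigO_minkowski_grad_lorentzSq_kelvin hsub (hw₁ I) (h₀ I) (h₁ I),
    fun I => isBigO_minkowski_grad_kelvin hsub (hw₁ I) (h₀ I) (h₁ I)⟩
  · rw [lorentzSq, heq, sub_self] at hD
    exact hD.false
  · rintro y ⟨hyO, hyV⟩ I
    rw [hV.frontier_eq] at hyV
    have hle := (hclosure hyV.1).2
    exact kelvinSub_eq_zero_of_add_eq_one (contDiff_infty.1 hQ.1 1) hu hv hdata hR₂ hyO.1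
      (hle.antisymm (not_lt.1 fun hlt => hyV.2 ⟨⟨hyO.1, hlt⟩, hyO.2⟩))
      (hyperboloidWeight_pos_of_eval_pos hε hW hyO.1 hle hyO.2) I

theorem kelvinSub_eq_zero (hy : y ∈ conformalRegion R₁ R₂) (I : Fin N) :
    kelvinSub R₁ u v I y = 0 := by
  obtain ⟨hyD, hpos⟩ := hy
  have hcc : 0 < R₁ ^ 2 - R₂ ^ 2 := sub_pos.2 (sq_lt_sq' (abs_lt.1 hR₂).1 (abs_lt.1 hR₂).2)
  obtain ⟨ε, hε, hεmin⟩ := exists_between (lt_min hcc hpos)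
  obtain ⟨W, θ, e₀, e₁, hconv, hW⟩ := exists_isPseudoconvexOn_eval_eq hR₂ hε
    (hεmin.le.trans (min_le_left _ _)) causalDiamond
  obtain ⟨C, hC⟩ := exists_isContinuationDomain_kelvinSub hQ hu hv hF hF' hR₂ hdata hrad
    hε.le hW hconv
  refine hC.eq_zero_of_mem ⟨hyD, ?_⟩ I
  have hεy := hεmin.trans_le (min_le_right _ _)
  change 0 < W.eval y
  rw [hW]
  nlinarith [mul_nonneg hε.le (sq_nonneg y.1)]

theorem eq_of_lt_hyperboloid {p : Spc} (hp : 0 < p.1)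
    (hext : R₁ ^ 2 - R₂ ^ 2 < rr p ^ 2 - (p.1 + R₂) ^ 2) (I : Fin N) : u I p = v I p := by
  rw [← sub_eq_zero]
  rcases le_or_gt (R₁ + p.1) ‖p.2‖ with hle | hlt
  · exact (hu.sub_eq_zero_of_le (contDiff_infty.1 hQ.1 1) hv hdata hp hle I).1
  · obtain ⟨y, hy, rfl⟩ := exists_physicalPoint_eq hlt hext
    exact (mul_eq_zero.1 (kelvinSub_eq_zero hQ hu hv hF hF' hR₂ hdata hrad hy I)).resolve_left
      (inv_pos.2 (lorentzSq_pos hy.1.1)).ne'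

end Continuation

theorem stmt0_general {N : ℕ} {Q : ((Fin N → ℝ) × (Fin N → Fin 4 → ℝ)) → Fin N → ℝ}
    {A : Fin N → Fin N → Fin N → Fin 4 → Fin 4 → ℝ} (hQ : HasNullForm Q A)
    {u v : Fin N → Spc → ℝ} (hu : IsSmoothSolution Q u) (hv : IsSmoothSolution Q v)
    {F F' : ℝ → EuclideanSpace ℝ (Fin 3) → Fin N → ℝ}
    (hF : IsRadiationField u F) (hF' : IsRadiationField v F') {R₁ R₂ : ℝ} (hR₂ : |R₂| < R₁)
    (hdata : ∀ x : EuclideanSpace ℝ (Fin 3), R₁ ≤ ‖x‖ → ∀ I,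
      u I (0, x) = v I (0, x) ∧ dt (u I) (0, x) = dt (v I) (0, x))
    (hrad : ∀ (q : ℝ) (ω : EuclideanSpace ℝ (Fin 3)), ‖ω‖ = 1 → R₂ < q → F q ω = F' q ω)
    {p : Spc} (hp : 0 < p.1) (hext : R₁ ^ 2 - R₂ ^ 2 ≤ rr p ^ 2 - (p.1 + R₂) ^ 2) (I : Fin N) :
    u I p = v I p := by
  have hr : 0 < ‖p.2‖ := (norm_nonneg _).lt_of_ne fun h0 => by
    have hcc := sq_lt_sq' (abs_lt.1 hR₂).1 (abs_lt.1 hR₂).2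
    rw [rr, ← h0] at hext
    nlinarith [sq_nonneg (p.1 + R₂)]
  have hcont : Continuous fun s : ℝ => (u - v) I (p.1, (1 + s) • p.2) :=
    ((hu.1 I).sub (hv.1 I)).continuous.comp (by fun_prop)
  have hlim : Tendsto (fun s : ℝ => (u - v) I (p.1, (1 + s) • p.2)) (𝓝[>] 0)
      (𝓝 ((u - v) I p)) := by
    have := hcont.tendsto 0
    rw [add_zero, one_smul] at this
    exact this.mono_left nhdsWithin_le_nhds
  have hzero : ∀ᶠ s in 𝓝[>] (0 : ℝ), (u - v) I (p.1, (1 + s) • p.2) = 0 := by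
    filter_upwards [self_mem_nhdsWithin] with s hs
    refine sub_eq_zero.2 (eq_of_lt_hyperboloid hQ hu hv hF hF' hR₂ hdata hrad
      (p := (p.1, (1 + s) • p.2)) hp (hext.trans_lt ?_) I)
    have hlt : ‖p.2‖ < (1 + s) * ‖p.2‖ := lt_mul_of_one_lt_left hr (by linarith [mem_Ioi.1 hs])
    rw [rr, rr, norm_smul, Real.norm_of_nonneg (by linarith [mem_Ioi.1 hs])]
    gcongr
  exact sub_eq_zero.1 (tendsto_nhds_unique (hlim.congr' hzero) tendsto_const_nhds)

/-- Theorem 1.1 (i) of the paper: if two global solutions of a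
semilinear system satisfying the null condition have equal data outside the ball
`{|x| ≤ R₁}` and equal radiation fields for `q > R₂` with `|R₂| < R₁`, then they agree
outside the hyperboloid `|x|² - (t+R₂)² = R₁² - R₂²`. -/
theorem stmt0 {N : ℕ}
    (Q : ((Fin N → ℝ) × (Fin N → Fin 4 → ℝ)) → Fin N → ℝ)
    (A : Fin N → Fin N → Fin N → Fin 4 → Fin 4 → ℝ)
    (hQ : HasNullForm Q A)
    (u v : Fin N → Spc → ℝ)
    (hu : IsGlobalSolution Q u) (hv : IsGlobalSolution Q v)
    (F F' : ℝ → EuclideanSpace ℝ (Fin 3) → Fin N → ℝ)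
    (hF : IsRadiationField u F) (hF' : IsRadiationField v F')
    (R₁ R₂ : ℝ) (hR₁ : 0 < R₁) (hR₂ : |R₂| < R₁)
    (hdata : ∀ x : EuclideanSpace ℝ (Fin 3), R₁ ≤ ‖x‖ → ∀ I,
      u I (0, x) = v I (0, x) ∧ dt (u I) (0, x) = dt (v I) (0, x))
    (hrad : ∀ (q : ℝ) (ω : EuclideanSpace ℝ (Fin 3)), ‖ω‖ = 1 → R₂ < q →
      F q ω = F' q ω) :
    ∀ p : Spc, 0 < p.1 → R₁ ^ 2 - R₂ ^ 2 ≤ rr p ^ 2 - (p.1 + R₂) ^ 2 →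
      ∀ I, u I p = v I p := fun _ hp hext I =>
  stmt0_general hQ hu.isSmoothSolution hv.isSmoothSolution hF hF' hR₂ hdata hrad hp hext I

end UCP
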